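/- (Kraus: existence of maximal Blaschke products) Let g be a nonconstant holomorphic function from the open unit disk 𝔻 into the closed unit disk. Then there exists a Blaschke product B such that B' has in 𝔻 exactly the same zeros as g', with the same multiplicities, and such that for every f ∈ 𝓑 with C_f ⊇ C_B one has |f'(z)| (1 − |B(z)|²) ≤ |B'(z)| (1 − |f(z)|²) for all z ∈ 𝔻. -/

import Mathlib

open Metric Filter

/-- The order of vanishing of `f` at `z`. -/
noncomputable def vOrder (f : ℂ → ℂ) (z : ℂ) : ℕ∞ :=
  sInf ((fun n : ℕ => (n : ℕ∞)) '' {n : ℕ | iteratedDeriv n f z ≠ 0})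

/-- A (finite or infinite) Blaschke product: a holomorphic function on the open unit
disk of the form `B(z) = η z^m ∏_j (|z_j|/z_j)(z_j − z)/(1 − conj z_j · z)`, where
`|η| = 1`, `m ≥ 0`, the points `z_j ∈ 𝔻 \ {0}` satisfy the Blaschke condition
`Σ_j (1 − |z_j|) < ∞`, and the (possibly infinite) product converges. -/
def IsBlaschkeProduct (B : ℂ → ℂ) : Prop :=
  (∀ z ∈ Metric.ball (0 : ℂ) 1, DifferentiableAt ℂ B z) ∧
  ∃ (η : ℂ) (m : ℕ) (ι : Type) (a : ι → ℂ),
    ‖η‖ = 1 ∧ (∀ j, a j ≠ 0 ∧ ‖a j‖ < 1) ∧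
    Summable (fun j => 1 - ‖a j‖) ∧
    ∀ z ∈ Metric.ball (0 : ℂ) 1,
      B z = η * z ^ m *
        ∏' j, (((‖a j‖ : ℝ) : ℂ) / a j) * ((a j - z) / (1 - (starRingEnd ℂ) (a j) * z))

/-- A Blaschke product `B` is *maximal* if for every nonconstant holomorphic map `f`
of the open unit disk into the closed unit disk whose critical set contains that of
`B` (with multiplicities), one has
`|f'(z)| (1 − |B(z)|²) ≤ |B'(z)| (1 − |f(z)|²)` on the disk. -/
def IsMaximalBlaschke (B : ℂ → ℂ) : Prop :=
  IsBlaschkeProduct B ∧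
  ∀ f : ℂ → ℂ,
    (∀ z ∈ Metric.ball (0 : ℂ) 1, DifferentiableAt ℂ f z) →
    (∀ z ∈ Metric.ball (0 : ℂ) 1, ‖f z‖ ≤ 1) →
    (∃ z ∈ Metric.ball (0 : ℂ) 1, ∃ w ∈ Metric.ball (0 : ℂ) 1, f z ≠ f w) →
    (∀ z ∈ Metric.ball (0 : ℂ) 1, vOrder (deriv B) z ≤ vOrder (deriv f) z) →
    ∀ z ∈ Metric.ball (0 : ℂ) 1,
      ‖deriv f z‖ * (1 - ‖B z‖ ^ 2) ≤ ‖deriv B z‖ * (1 - ‖f z‖ ^ 2)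

open scoped Topology ComplexConjugate

/-!
A holomorphic map `f` of the disk into itself has the pullback metric `‖f'‖ / (1 - ‖f‖²)` of
curvature `-4`, which vanishes exactly at the critical points of `f`, so the theorem asks for a `B`
whose pullback metric is the largest one vanishing on the zeros of `p = g'`. On the disk of radius
`r < 1` this is achieved by `B_r(z) = F(z / r)`, where `F` is a finite Blaschke product of degree
one more than its number of critical points: the density of its metric blows up at the boundary,
hence dominates all competitors by Ahlfors' lemma. Heins' theorem provides `F` with prescribed
critical points; it is proved by contracting them to the origin, where `F` is a power of `z`. The
set of parameters for which `F` exists is closed by compactness and open by the inverse function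
theorem, because the linearized equation has no nonzero solution by a maximum principle.

As `r → 1` the maps `B_r` accumulate at a map `B` which inherits the domination. Comparison with the
pullback metric of `g` shows that `B'` has no zeros beyond those of `g'`. Let `B = b h` be the Riesz
factorization, with `b` a Blaschke product and `h` free of zeros. The punctured-disk metric pulled
back by `B` and multiplied by `‖b‖` is `‖B'‖ / (2 ‖h‖ (-log ‖B‖))`; comparing it with `B` gives
`1 - ‖B‖² ≤ 2 ‖h‖ (-log ‖B‖)`, and this is only possible if `‖h‖ = 1`.
-/

/-! ### Maximum principle for quotients of pullback metrics -/

lemma tendsto_div_zero_of_analyticOrderAt_lt {R b : ℂ → ℂ} {z₀ : ℂ} (hR : AnalyticAt ℂ R z₀)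
    (hb : AnalyticAt ℂ b z₀) (h : analyticOrderAt b z₀ < analyticOrderAt R z₀) :
    Tendsto (fun z ↦ R z / b z) (𝓝[≠] z₀) (𝓝 0) := by
  obtain ⟨k, hk⟩ := ENat.ne_top_iff_exists.1 h.ne_top
  obtain ⟨u, hu, hu0, hbu⟩ := hb.analyticOrderAt_eq_natCast.1 hk.symm
  have hkR : ((k + 1 : ℕ) : ℕ∞) ≤ analyticOrderAt R z₀ := by
    rw [← hk] at h
    exact_mod_cast Order.add_one_le_of_lt h
  obtain ⟨r, hr, hRr⟩ := (natCast_le_analyticOrderAt hR).1 hkR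
  have hlim : Tendsto (fun z ↦ (z - z₀) * (r z / u z)) (𝓝[≠] z₀) (𝓝 0) := by
    have hc : ContinuousAt (fun z ↦ (z - z₀) * (r z / u z)) z₀ :=
      (continuousAt_id.sub continuousAt_const).mul (hr.continuousAt.div hu.continuousAt hu0)
    simpa using hc.tendsto.mono_left nhdsWithin_le_nhds
  refine hlim.congr' ?_
  filter_upwards [hbu.filter_mono nhdsWithin_le_nhds, hRr.filter_mono nhdsWithin_le_nhds,
    self_mem_nhdsWithin] with z hbz hRz hz
  have hz' : (z - z₀) ^ k ≠ 0 := pow_ne_zero k (sub_ne_zero.2 hz)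
  rw [hbz, hRz, smul_eq_mul, smul_eq_mul, pow_succ, mul_assoc, mul_div_mul_left _ _ hz',
    mul_div_assoc]

lemma analyticOrderAt_eq_of_deriv_eq_mul {A b H : ℂ → ℂ} {z₀ : ℂ} (hA : AnalyticAt ℂ A z₀)
    (hb : AnalyticAt ℂ b z₀) (hH : AnalyticAt ℂ H z₀) (hA0 : A z₀ = 0)
    (hder : ∀ᶠ z in 𝓝 z₀, deriv A z = H z * deriv b z) :
    analyticOrderAt A z₀ = analyticOrderAt H z₀ + analyticOrderAt (deriv b) z₀ + 1 := by
  have hder' : deriv A =ᶠ[𝓝 z₀] H * deriv b := hder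
  have hord := hA.analyticOrderAt_deriv_add_one
  simp only [hA0, sub_zero] at hord
  rw [← analyticOrderAt_mul hH hb.deriv, ← analyticOrderAt_congr hder', hord]

lemma tendsto_div_of_deriv_eq_mul {A b H : ℂ → ℂ} {z₀ : ℂ} (hA : AnalyticAt ℂ A z₀)
    (hb : AnalyticAt ℂ b z₀) (hH : AnalyticAt ℂ H z₀) (hA0 : A z₀ = 0) (hb0 : b z₀ = 0)
    (hb_ne : ¬ ∀ᶠ z in 𝓝 z₀, b z = 0) (hder : ∀ᶠ z in 𝓝 z₀, deriv A z = H z * deriv b z) :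
    Tendsto (fun z ↦ A z / b z) (𝓝[≠] z₀) (𝓝 (H z₀)) := by
  set R : ℂ → ℂ := fun z ↦ A z - H z₀ * b z with hR
  have hR_an : AnalyticAt ℂ R z₀ := hA.sub (analyticAt_const.mul hb)
  have hR_deriv : ∀ᶠ z in 𝓝 z₀, deriv R z = (H z - H z₀) * deriv b z := by
    filter_upwards [hder, hA.eventually_analyticAt, hb.eventually_analyticAt] with z hd hAz hbz
    have : HasDerivAt R (deriv A z - H z₀ * deriv b z) z :=
      hAz.differentiableAt.hasDerivAt.sub (hbz.differentiableAt.hasDerivAt.const_mul (H z₀))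
    rw [this.deriv, hd]
    ring
  have hord : analyticOrderAt b z₀ < analyticOrderAt R z₀ := by
    have hH_sub : AnalyticAt ℂ (fun z ↦ H z - H z₀) z₀ := hH.sub analyticAt_const
    have hH1 : 1 ≤ analyticOrderAt (fun z ↦ H z - H z₀) z₀ :=
      Order.one_le_iff_pos.2 (pos_iff_ne_zero.2 (hH_sub.analyticOrderAt_ne_zero.2 (sub_self _)))
    have hb_ord := hb.analyticOrderAt_deriv_add_one
    simp only [hb0, sub_zero] at hb_ord
    calc analyticOrderAt b z₀ < analyticOrderAt b z₀ + 1 :=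
          (ENat.lt_add_one_iff (mt analyticOrderAt_eq_top.1 hb_ne)).2 le_rfl
      _ = 1 + analyticOrderAt (deriv b) z₀ + 1 := by rw [← hb_ord, add_comm 1]
      _ ≤ analyticOrderAt (fun z ↦ H z - H z₀) z₀ + analyticOrderAt (deriv b) z₀ + 1 := by gcongr
      _ = analyticOrderAt R z₀ := (analyticOrderAt_eq_of_deriv_eq_mul hR_an hb hH_sub
          (by simp [hR, hA0, hb0]) hR_deriv).symm
  have hb_ne' : ∀ᶠ z in 𝓝[≠] z₀, b z ≠ 0 :=
    hb.eventually_eq_zero_or_eventually_ne_zero.resolve_left hb_ne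
  have hlim := (tendsto_div_zero_of_analyticOrderAt_lt hR_an hb hord).add_const (H z₀)
  rw [zero_add] at hlim
  refine hlim.congr' ?_
  filter_upwards [hb_ne'] with z hz
  simp only [hR]
  field_simp
  ring

lemma frequently_norm_le_norm {φ : ℂ → ℂ} {z₀ : ℂ} (hφ : AnalyticAt ℂ φ z₀) :
    ∃ᶠ z in 𝓝[≠] z₀, ‖φ z₀‖ ≤ ‖φ z‖ := by
  intro hlt
  simp only [not_le] at hlt
  have hmax : IsLocalMax (norm ∘ φ) z₀ := by
    filter_upwards [eventually_nhdsWithin_iff.1 hlt] with z hz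
    rcases eq_or_ne z z₀ with rfl | h
    · exact le_rfl
    · exact (hz h).le
  have hconst := Complex.eventually_eq_of_isLocalMax_norm
    (hφ.eventually_analyticAt.mono fun z hz ↦ hz.differentiableAt) hmax
  obtain ⟨z, hz_eq, hz_lt⟩ := ((hconst.filter_mono nhdsWithin_le_nhds).and hlt).exists
  exact hz_lt.ne (by rw [hz_eq])

lemma frequently_re_le_re {φ : ℂ → ℂ} {z₀ : ℂ} (hφ : AnalyticAt ℂ φ z₀) :
    ∃ᶠ z in 𝓝[≠] z₀, (φ z₀).re ≤ (φ z).re := by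
  simpa [Complex.norm_exp] using frequently_norm_le_norm hφ.cexp

/-- The disk automorphism `w ↦ (w - a) / (1 - ā w)`, which sends `a` to `0`. -/
noncomputable def diskMobius (a w : ℂ) : ℂ := (w - a) / (1 - conj a * w)

@[simp]
lemma diskMobius_self (a : ℂ) : diskMobius a a = 0 := by simp [diskMobius]

lemma one_sub_norm_sq_pos {w : ℂ} (hw : ‖w‖ < 1) : 0 < 1 - ‖w‖ ^ 2 := by
  nlinarith [norm_nonneg w]

lemma ofReal_norm_sq (a : ℂ) : ((‖a‖ ^ 2 : ℝ) : ℂ) = conj a * a := by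
  rw [mul_comm, Complex.mul_conj, Complex.normSq_eq_norm_sq]

lemma one_sub_conj_mul_ne_zero {a w : ℂ} (ha : ‖a‖ < 1) (hw : ‖w‖ ≤ 1) :
    1 - conj a * w ≠ 0 := by
  intro h
  have h1 : ‖a‖ * ‖w‖ = 1 := by
    simpa using congrArg norm (sub_eq_zero.1 h).symm
  nlinarith [norm_nonneg a, norm_nonneg w]

lemma diskMobius_eq_zero_iff {a w : ℂ} (ha : ‖a‖ < 1) (hw : ‖w‖ ≤ 1) :
    diskMobius a w = 0 ↔ w = a := by
  rw [diskMobius, div_eq_zero_iff, or_iff_left (one_sub_conj_mul_ne_zero ha hw), sub_eq_zero]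

lemma one_sub_norm_diskMobius_sq {a w : ℂ} (ha : ‖a‖ < 1) (hw : ‖w‖ ≤ 1) :
    1 - ‖diskMobius a w‖ ^ 2 = (1 - ‖a‖ ^ 2) * (1 - ‖w‖ ^ 2) / ‖1 - conj a * w‖ ^ 2 := by
  have h : ‖1 - conj a * w‖ ^ 2 ≠ 0 := by simpa using one_sub_conj_mul_ne_zero ha hw
  rw [diskMobius, norm_div, div_pow, eq_div_iff h, sub_mul, div_mul_cancel₀ _ h, one_mul]
  simp only [← Complex.normSq_eq_norm_sq, Complex.normSq_apply]
  simp
  ring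

lemma norm_diskMobius_le_one {a w : ℂ} (ha : ‖a‖ < 1) (hw : ‖w‖ ≤ 1) : ‖diskMobius a w‖ ≤ 1 := by
  refine (sq_le_one_iff₀ (norm_nonneg _)).1 (sub_nonneg.1 ?_)
  rw [one_sub_norm_diskMobius_sq ha hw]
  exact div_nonneg (mul_nonneg (one_sub_norm_sq_pos ha).le
    (sub_nonneg.2 (pow_le_one₀ (norm_nonneg _) hw))) (sq_nonneg _)

lemma hasDerivAt_diskMobius {a w : ℂ} (ha : ‖a‖ < 1) (hw : ‖w‖ ≤ 1) :
    HasDerivAt (diskMobius a) (((1 - ‖a‖ ^ 2 : ℝ) : ℂ) / (1 - conj a * w) ^ 2) w := by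
  have hne := one_sub_conj_mul_ne_zero ha hw
  refine (((hasDerivAt_id w).sub_const a).div
    (((hasDerivAt_id w).const_mul (conj a)).const_sub 1) hne).congr_deriv ?_
  rw [Complex.ofReal_sub, ofReal_norm_sq, Complex.ofReal_one]
  simp only [id_eq]
  ring

lemma analyticAt_diskMobius {a w : ℂ} (ha : ‖a‖ < 1) (hw : ‖w‖ ≤ 1) :
    AnalyticAt ℂ (diskMobius a) w :=
  (analyticAt_id.sub analyticAt_const).div
    (analyticAt_const.sub (analyticAt_const.mul analyticAt_id)) (one_sub_conj_mul_ne_zero ha hw)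

lemma deriv_diskMobius_ne_zero {a w : ℂ} (ha : ‖a‖ < 1) (hw : ‖w‖ ≤ 1) :
    deriv (diskMobius a) w ≠ 0 := by
  rw [(hasDerivAt_diskMobius ha hw).deriv]
  exact div_ne_zero (Complex.ofReal_ne_zero.2 (one_sub_norm_sq_pos ha).ne')
    (pow_ne_zero 2 (one_sub_conj_mul_ne_zero ha hw))

lemma hasDerivAt_deriv_diskMobius {a w : ℂ} (ha : ‖a‖ < 1) (hw : ‖w‖ < 1) :
    HasDerivAt (deriv (diskMobius a))
      (2 * conj a / (1 - conj a * w) * deriv (diskMobius a) w) w := by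
  have hne := one_sub_conj_mul_ne_zero ha hw.le
  have hformula : deriv (diskMobius a) =ᶠ[𝓝 w]
      fun x ↦ ((1 - ‖a‖ ^ 2 : ℝ) : ℂ) / (1 - conj a * x) ^ 2 := by
    filter_upwards [continuous_norm.continuousAt.eventually_lt_const hw] with x hx
    exact (hasDerivAt_diskMobius ha hx.le).deriv
  refine (((hasDerivAt_const w _).div ((((hasDerivAt_id w).const_mul (conj a)).const_sub 1).pow 2)
    (pow_ne_zero 2 hne)).congr_of_eventuallyEq hformula).congr_deriv ?_
  rw [hformula.eq_of_nhds]
  simp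
  field_simp

lemma norm_deriv_diskMobius_mul {a w : ℂ} (ha : ‖a‖ < 1) (hw : ‖w‖ ≤ 1) :
    ‖deriv (diskMobius a) w‖ * (1 - ‖w‖ ^ 2) = 1 - ‖diskMobius a w‖ ^ 2 := by
  rw [(hasDerivAt_diskMobius ha hw).deriv, one_sub_norm_diskMobius_sq ha hw, norm_div, norm_pow,
    Complex.norm_real, Real.norm_of_nonneg (one_sub_norm_sq_pos ha).le]
  ring

lemma eventually_deriv_diskMobius_comp {a z₀ : ℂ} {f : ℂ → ℂ} (ha : ‖a‖ < 1)
    (hf : AnalyticAt ℂ f z₀) (hf1 : ‖f z₀‖ < 1) :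
    ∀ᶠ z in 𝓝 z₀, deriv (diskMobius a ∘ f) z = deriv (diskMobius a) (f z) * deriv f z := by
  filter_upwards [hf.continuousAt.norm.eventually_lt_const hf1, hf.eventually_analyticAt]
    with z hz hfz
  exact deriv_comp z (analyticAt_diskMobius ha hz.le).differentiableAt hfz.differentiableAt

lemma not_isLocalMax_norm_mul_div_of_eq_zero {b f H β : ℂ → ℂ} {z₀ : ℂ} (hb : AnalyticAt ℂ b z₀)
    (hf : AnalyticAt ℂ f z₀) (hH : AnalyticAt ℂ H z₀) (hβ : AnalyticAt ℂ β z₀)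
    (hder : ∀ᶠ z in 𝓝 z₀, deriv f z = H z * deriv b z) (hb0 : b z₀ = 0) (hf0 : f z₀ = 0)
    (hb_ne : ¬ ∀ᶠ z in 𝓝 z₀, b z = 0) (hβ1 : ‖β z₀‖ ≤ 1) (hgt : 1 < ‖β z₀ * H z₀‖) :
    ¬ IsLocalMax (fun z ↦ ‖β z * H z‖ * (1 - ‖b z‖ ^ 2) / (1 - ‖f z‖ ^ 2)) z₀ := by
  intro hmax
  have hH1 : 1 < ‖H z₀‖ := by
    rw [norm_mul] at hgt
    nlinarith [norm_nonneg (H z₀)]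
  have hbf : ∀ᶠ z in 𝓝[≠] z₀, ‖b z‖ < ‖f z‖ := by
    filter_upwards [(tendsto_div_of_deriv_eq_mul hf hb hH hf0 hb0 hb_ne
      hder).norm.eventually_const_lt hH1,
      hb.eventually_eq_zero_or_eventually_ne_zero.resolve_left hb_ne] with z hz hbz
    rwa [norm_div, lt_div_iff₀ (norm_pos_iff.2 hbz), one_mul] at hz
  have hf1 : ∀ᶠ z in 𝓝[≠] z₀, ‖f z‖ < 1 :=
    (hf.continuousAt.norm.eventually_lt_const (by simp [hf0])).filter_mono nhdsWithin_le_nhds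
  obtain ⟨z, hge, hlt, hfz, hle⟩ := ((frequently_norm_le_norm (hβ.mul hH)).and_eventually
    (hbf.and (hf1.and (hmax.filter_mono nhdsWithin_le_nhds)))).exists
  simp only [hb0, hf0, norm_zero, ne_eq, OfNat.ofNat_ne_zero, not_false_eq_true, zero_pow,
    sub_zero, div_one, mul_one] at hle
  have hratio : 1 < (1 - ‖b z‖ ^ 2) / (1 - ‖f z‖ ^ 2) := by
    rw [lt_div_iff₀ (one_sub_norm_sq_pos hfz)]
    nlinarith [norm_nonneg (b z)]
  rw [mul_div_assoc] at hle
  simp only [Pi.mul_apply] at hge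
  nlinarith

-- Both densities `|b'| / (1 - |b|²)` and `|f'| / (1 - |f|²)` are invariant under disk
-- automorphisms, so one may assume `b z₀ = f z₀ = 0`.
lemma not_isLocalMax_norm_mul_div {b f H β : ℂ → ℂ} {z₀ : ℂ} (hb : AnalyticAt ℂ b z₀)
    (hf : AnalyticAt ℂ f z₀) (hH : AnalyticAt ℂ H z₀) (hβ : AnalyticAt ℂ β z₀)
    (hder : ∀ᶠ z in 𝓝 z₀, deriv f z = H z * deriv b z) (hb1 : ‖b z₀‖ < 1) (hf1 : ‖f z₀‖ < 1)
    (hb_ne : ¬ ∀ᶠ z in 𝓝 z₀, b z = b z₀) (hβ1 : ‖β z₀‖ ≤ 1)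
    (hgt : 1 < ‖β z₀ * H z₀‖ * (1 - ‖b z₀‖ ^ 2) / (1 - ‖f z₀‖ ^ 2)) :
    ¬ IsLocalMax (fun z ↦ ‖β z * H z‖ * (1 - ‖b z‖ ^ 2) / (1 - ‖f z‖ ^ 2)) z₀ := by
  set B : ℂ → ℂ := diskMobius (b z₀) ∘ b with hB
  set F : ℂ → ℂ := diskMobius (f z₀) ∘ f with hF
  set K : ℂ → ℂ := fun z ↦
    deriv (diskMobius (f z₀)) (f z) * H z / deriv (diskMobius (b z₀)) (b z) with hK
  have hmb := analyticAt_diskMobius hb1 hb1.le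
  have hmf := analyticAt_diskMobius hf1 hf1.le
  have hb_lt := hb.continuousAt.norm.eventually_lt_const hb1
  have hf_lt := hf.continuousAt.norm.eventually_lt_const hf1
  have hK_an : AnalyticAt ℂ K z₀ := ((hmf.deriv.fun_comp hf).mul hH).div (hmb.deriv.fun_comp hb)
    (deriv_diskMobius_ne_zero hb1 hb1.le)
  have hder' : ∀ᶠ z in 𝓝 z₀, deriv F z = K z * deriv B z := by
    filter_upwards [hder, hb_lt, eventually_deriv_diskMobius_comp hb1 hb hb1,
      eventually_deriv_diskMobius_comp hf1 hf hf1] with z hz hbz hBz hFz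
    have := deriv_diskMobius_ne_zero hb1 hbz.le
    rw [hFz, hBz, hz]
    simp only [hK]
    field_simp
  have hB_ne : ¬ ∀ᶠ z in 𝓝 z₀, B z = 0 := fun h ↦ hb_ne <| by
    filter_upwards [h, hb_lt] with z hz hbz
    exact (diskMobius_eq_zero_iff hb1 hbz.le).1 hz
  have hinv : (fun z ↦ ‖β z * H z‖ * (1 - ‖b z‖ ^ 2) / (1 - ‖f z‖ ^ 2)) =ᶠ[𝓝 z₀]
      fun z ↦ ‖β z * K z‖ * (1 - ‖B z‖ ^ 2) / (1 - ‖F z‖ ^ 2) := by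
    filter_upwards [hb_lt, hf_lt] with z hbz hfz
    have h1 := norm_ne_zero_iff.2 (deriv_diskMobius_ne_zero hb1 hbz.le)
    have h2 := norm_ne_zero_iff.2 (deriv_diskMobius_ne_zero hf1 hfz.le)
    simp only [hB, hF, hK, Function.comp_apply, norm_mul, norm_div,
      ← norm_deriv_diskMobius_mul hb1 hbz.le, ← norm_deriv_diskMobius_mul hf1 hfz.le]
    field_simp
  have hB0 : B z₀ = 0 := diskMobius_self _
  have hF0 : F z₀ = 0 := diskMobius_self _
  have hgt' : 1 < ‖β z₀ * K z₀‖ := by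
    have h := hinv.eq_of_nhds
    simp only [hB0, hF0] at h
    rw [h] at hgt
    simpa using hgt
  exact fun hmax ↦ not_isLocalMax_norm_mul_div_of_eq_zero (hmb.comp hb) (hmf.comp hf) hK_an hβ
    hder' hB0 hF0 hB_ne hβ1 hgt' (hmax.congr hinv)

/-! ### Variations of pullback metrics -/

/-- The derivative at `ε = 0` of `log (|b_ε'| / (1 - |b_ε|²))` along a family
`b_ε = b + ε v + o(ε)` of holomorphic functions, where `h` is the function with `v' = h b'`. -/
noncomputable def linearizedDensity (b v h : ℂ → ℂ) (z : ℂ) : ℝ :=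
  (h z).re + 2 * (v z * conj (b z)).re / (1 - ‖b z‖ ^ 2)

section LinearizedDensity

variable {b v h : ℂ → ℂ} {z₀ : ℂ}

lemma linearizedDensity_add_rotation (v h : ℂ → ℂ) (α : ℂ) {z : ℂ} (hb : ‖b z‖ < 1) :
    linearizedDensity b (fun z ↦ v z + (-α + conj α * b z ^ 2))
      (fun z ↦ h z + 2 * conj α * b z) z = linearizedDensity b v h z := by
  have hpos := (one_sub_norm_sq_pos hb).ne'
  have hrot : (2 * conj α * b z).re + 2 * ((-α + conj α * b z ^ 2) * conj (b z)).re /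
      (1 - ‖b z‖ ^ 2) = 0 := by
    rw [add_div' _ _ _ hpos, div_eq_zero_iff, ← Complex.normSq_eq_norm_sq, Complex.normSq_apply]
    left
    simp [pow_two]
    ring
  simp only [linearizedDensity, add_mul (v z), Complex.add_re (h z), Complex.add_re (v z * _),
    mul_add (2 : ℝ), add_div (2 * (v z * _).re)]
  linarith

lemma conj_div_add_conj_diskMobius {a w : ℂ} (ha : ‖a‖ < 1) (hw : ‖w‖ < 1) :
    conj a / (1 - conj a * w) + deriv (diskMobius a) w *
      conj (diskMobius a w) / ((1 - ‖diskMobius a w‖ ^ 2 : ℝ) : ℂ) =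
    conj w / ((1 - ‖w‖ ^ 2 : ℝ) : ℂ) := by
  have h1 := one_sub_conj_mul_ne_zero ha hw.le
  have h2 := one_sub_conj_mul_ne_zero hw ha.le
  have h3 := one_sub_conj_mul_ne_zero hw hw.le
  have h4 := one_sub_conj_mul_ne_zero ha ha.le
  rw [one_sub_norm_diskMobius_sq ha hw.le, (hasDerivAt_diskMobius ha hw.le).deriv, diskMobius]
  simp only [Complex.ofReal_div, Complex.ofReal_mul, Complex.ofReal_sub, Complex.ofReal_one,
    ofReal_norm_sq, map_div₀, map_sub, map_mul, map_one, Complex.conj_conj]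
  rw [mul_comm (conj w)] at h2 h3 ⊢
  field_simp
  ring

lemma linearizedDensity_diskMobius_comp (v h : ℂ → ℂ) {a z : ℂ} (ha : ‖a‖ < 1) (hb : ‖b z‖ < 1) :
    linearizedDensity (diskMobius a ∘ b) (fun z ↦ deriv (diskMobius a) (b z) * v z)
      (fun z ↦ h z + 2 * conj a * v z / (1 - conj a * b z)) z = linearizedDensity b v h z := by
  have hid := congrArg (fun x ↦ (2 * v z * x).re) (conj_div_add_conj_diskMobius ha hb)
  have hre (x : ℂ) (r : ℝ) : (2 * v z * (x / (r : ℂ))).re = 2 * (v z * x).re / r := by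
    rw [← mul_div_assoc, Complex.div_ofReal_re, mul_assoc, ← Complex.ofReal_ofNat,
      Complex.re_ofReal_mul]
  simp only [mul_add, Complex.add_re, hre] at hid
  simp only [linearizedDensity, ← hid, Function.comp_apply, Complex.add_re]
  ring_nf

lemma not_isLocalMax_linearizedDensity_of_eq_zero_of_eq_zero (hb : AnalyticAt ℂ b z₀)
    (hv : AnalyticAt ℂ v z₀) (hh : AnalyticAt ℂ h z₀)
    (hder : ∀ᶠ z in 𝓝 z₀, deriv v z = h z * deriv b z) (hb_ne : ¬ ∀ᶠ z in 𝓝 z₀, b z = 0)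
    (hb0 : b z₀ = 0) (hv0 : v z₀ = 0) (hpos : 0 < linearizedDensity b v h z₀) :
    ¬ IsLocalMax (linearizedDensity b v h) z₀ := by
  intro hmax
  have hval : linearizedDensity b v h z₀ = (h z₀).re := by simp [linearizedDensity, hv0]
  rw [hval] at hpos
  have hb1 : ∀ᶠ z in 𝓝[≠] z₀, ‖b z‖ < 1 :=
    (hb.continuousAt.norm.eventually_lt_const (by simp [hb0])).filter_mono nhdsWithin_le_nhds
  have hvb : ∀ᶠ z in 𝓝[≠] z₀, 0 < (v z / b z).re :=
    ((Complex.continuous_re.tendsto _).comp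
      (tendsto_div_of_deriv_eq_mul hv hb hh hv0 hb0 hb_ne hder)).eventually_const_lt hpos
  obtain ⟨z, hhz, hb1z, hvbz, hbz, hle⟩ := ((frequently_re_le_re hh).and_eventually
    (hb1.and (hvb.and ((hb.eventually_eq_zero_or_eventually_ne_zero.resolve_left hb_ne).and
      (hmax.filter_mono nhdsWithin_le_nhds))))).exists
  have hvb_pos : 0 < (v z * conj (b z)).re := by
    have : v z * conj (b z) = v z / b z * ((‖b z‖ ^ 2 : ℝ) : ℂ) := by
      rw [ofReal_norm_sq]
      field_simp
    rw [this, Complex.re_mul_ofReal]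
    have := norm_pos_iff.2 hbz
    positivity
  have hlt : (h z).re < linearizedDensity b v h z := by
    have := one_sub_norm_sq_pos hb1z
    rw [linearizedDensity]
    exact lt_add_of_pos_right _ (by positivity)
  rw [hval] at hle
  exact (hhz.trans_lt hlt).not_ge hle

lemma not_isLocalMax_linearizedDensity_of_eq_zero (hb : AnalyticAt ℂ b z₀)
    (hv : AnalyticAt ℂ v z₀) (hh : AnalyticAt ℂ h z₀)
    (hder : ∀ᶠ z in 𝓝 z₀, deriv v z = h z * deriv b z) (hb_ne : ¬ ∀ᶠ z in 𝓝 z₀, b z = 0)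
    (hb0 : b z₀ = 0) (hpos : 0 < linearizedDensity b v h z₀) :
    ¬ IsLocalMax (linearizedDensity b v h) z₀ := by
  have hb1 : ∀ᶠ z in 𝓝 z₀, ‖b z‖ < 1 := hb.continuousAt.norm.eventually_lt_const (by simp [hb0])
  have hrot : linearizedDensity b (fun z ↦ v z + (-v z₀ + conj (v z₀) * b z ^ 2))
      (fun z ↦ h z + 2 * conj (v z₀) * b z) =ᶠ[𝓝 z₀] linearizedDensity b v h :=
    hb1.mono fun z hz ↦ linearizedDensity_add_rotation v h (v z₀) hz
  have hder_rot : ∀ᶠ z in 𝓝 z₀, deriv (fun z ↦ v z + (-v z₀ + conj (v z₀) * b z ^ 2)) z =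
      (h z + 2 * conj (v z₀) * b z) * deriv b z := by
    filter_upwards [hder, hb.eventually_analyticAt, hv.eventually_analyticAt] with z hz hbz hvz
    have hd := hvz.differentiableAt.hasDerivAt.fun_add
      (((hbz.differentiableAt.hasDerivAt.fun_pow 2).const_mul (conj (v z₀))).const_add (-v z₀))
    rw [hd.deriv, hz]
    push_cast
    ring
  exact fun hmax ↦ not_isLocalMax_linearizedDensity_of_eq_zero_of_eq_zero hb
    (hv.fun_add (analyticAt_const.fun_add (analyticAt_const.fun_mul (hb.fun_pow 2))))
    (hh.fun_add (analyticAt_const.fun_mul hb)) hder_rot hb_ne hb0 (by simp [hb0])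
    (hrot.eq_of_nhds.symm ▸ hpos) (hmax.congr hrot.symm)

lemma not_isLocalMax_linearizedDensity (hb : AnalyticAt ℂ b z₀) (hv : AnalyticAt ℂ v z₀)
    (hh : AnalyticAt ℂ h z₀) (hder : ∀ᶠ z in 𝓝 z₀, deriv v z = h z * deriv b z)
    (hb1 : ‖b z₀‖ < 1) (hb_ne : ¬ ∀ᶠ z in 𝓝 z₀, b z = b z₀)
    (hpos : 0 < linearizedDensity b v h z₀) :
    ¬ IsLocalMax (linearizedDensity b v h) z₀ := by
  set a := b z₀
  have hb_lt := hb.continuousAt.norm.eventually_lt_const hb1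
  have hden : AnalyticAt ℂ (fun z ↦ 1 - conj a * b z) z₀ :=
    analyticAt_const.sub (analyticAt_const.mul hb)
  have hmob_an := analyticAt_diskMobius hb1 hb1.le
  have hmob : linearizedDensity (diskMobius a ∘ b) (fun z ↦ deriv (diskMobius a) (b z) * v z)
      (fun z ↦ h z + 2 * conj a * v z / (1 - conj a * b z)) =ᶠ[𝓝 z₀] linearizedDensity b v h :=
    hb_lt.mono fun z hz ↦ linearizedDensity_diskMobius_comp v h hb1 hz
  have hder_mob : ∀ᶠ z in 𝓝 z₀, deriv (fun z ↦ deriv (diskMobius a) (b z) * v z) z =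
      (h z + 2 * conj a * v z / (1 - conj a * b z)) * deriv (diskMobius a ∘ b) z := by
    filter_upwards [hder, hb_lt, eventually_deriv_diskMobius_comp hb1 hb hb1,
      hb.eventually_analyticAt, hv.eventually_analyticAt] with z hz hbz hmz hb_an hv_an
    have hd := ((hasDerivAt_deriv_diskMobius hb1 hbz).comp z
      hb_an.differentiableAt.hasDerivAt).fun_mul hv_an.differentiableAt.hasDerivAt
    have hd' : deriv (fun z ↦ deriv (diskMobius a) (b z) * v z) z = _ := hd.deriv
    rw [hd', hmz, hz]
    simp only [Function.comp_apply]
    ring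
  have hmob_ne : ¬ ∀ᶠ z in 𝓝 z₀, (diskMobius a ∘ b) z = 0 := fun hzero ↦ hb_ne <| by
    filter_upwards [hzero, hb_lt] with z hz hbz
    exact (diskMobius_eq_zero_iff hb1 hbz.le).1 hz
  exact fun hmax ↦ not_isLocalMax_linearizedDensity_of_eq_zero (hmob_an.comp hb)
    ((hmob_an.deriv.fun_comp hb).fun_mul hv)
    (hh.fun_add ((analyticAt_const.fun_mul hv).fun_div hden
      (one_sub_conj_mul_ne_zero hb1 hb1.le)))
    hder_mob hmob_ne (diskMobius_self a) (hmob.eq_of_nhds.symm ▸ hpos)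
    (hmax.congr hmob.symm)

lemma not_eventually_eq_of_norm_eq_one_on_sphere (hb : DiffContOnCl ℂ b (ball 0 1))
    (hb1 : ∀ z ∈ ball (0 : ℂ) 1, ‖b z‖ < 1) (hbs : ∀ z ∈ sphere (0 : ℂ) 1, ‖b z‖ = 1)
    (hz₀ : z₀ ∈ ball (0 : ℂ) 1) : ¬ ∀ᶠ z in 𝓝 z₀, b z = b z₀ := by
  intro hconst
  have hball : Set.EqOn b (fun _ ↦ b z₀) (ball 0 1) :=
    (hb.differentiableOn.analyticOnNhd isOpen_ball).eqOn_of_preconnected_of_eventuallyEq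
      analyticOnNhd_const (convex_ball 0 1).isPreconnected hz₀ hconst
  have hclosed : Set.EqOn b (fun _ ↦ b z₀) (closedBall 0 1) :=
    hball.of_subset_closure hb.continuousOn_ball continuousOn_const ball_subset_closedBall
      (closure_ball (0 : ℂ) one_ne_zero).ge
  have h1 : ‖b 1‖ = ‖b z₀‖ := by rw [hclosed (by simp)]
  rw [hbs 1 (by simp)] at h1
  exact (hb1 z₀ hz₀).ne h1.symm

lemma nonpos_of_forall_pos_not_isLocalMax {X : Type*} [PseudoMetricSpace X] [ProperSpace X] {c : X}
    {r : ℝ} {u ρ Ψ : X → ℝ} (hu : ContinuousOn u (ball c r)) (hΨ : ContinuousOn Ψ (closedBall c r))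
    (hρ : ∀ x ∈ ball c r, 0 < ρ x) (hΨu : ∀ x ∈ ball c r, Ψ x = ρ x * u x)
    (hneg : ∀ x ∈ sphere c r, Ψ x < 0) (hmax : ∀ x ∈ ball c r, 0 < u x → ¬ IsLocalMax u x) {x : X}
    (hx : x ∈ ball c r) : u x ≤ 0 := by
  by_contra! hpos
  set K := closedBall c r ∩ Ψ ⁻¹' Set.Ici 0
  have hK_compact : IsCompact K := (isCompact_closedBall c r).of_isClosed_subset
    (hΨ.preimage_isClosed_of_isClosed isClosed_closedBall isClosed_Ici) Set.inter_subset_left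
  have hK_ball : K ⊆ ball c r := by
    rintro y ⟨hy, hΨy : 0 ≤ Ψ y⟩
    rw [← ball_union_sphere] at hy
    exact hy.resolve_right fun hys ↦ (hneg y hys).not_ge hΨy
  have hxK : x ∈ K :=
    ⟨ball_subset_closedBall hx, (mul_pos (hρ x hx) hpos).le.trans_eq (hΨu x hx).symm⟩
  obtain ⟨y, hyK, hy⟩ := hK_compact.exists_isMaxOn ⟨x, hxK⟩ (hu.mono hK_ball)
  have hy_pos : 0 < u y := hpos.trans_le (hy hxK)
  refine hmax y (hK_ball hyK) hy_pos ?_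
  filter_upwards [isOpen_ball.mem_nhds (hK_ball hyK)] with w hw
  by_cases hwK : w ∈ K
  · exact hy hwK
  · have hΨw : Ψ w < 0 := not_le.1 fun h0 ↦ hwK ⟨ball_subset_closedBall hw, h0⟩
    rw [hΨu w hw] at hΨw
    exact ((neg_of_mul_neg_right hΨw (hρ w hw).le).trans hy_pos).le

lemma linearizedDensity_nonpos_of_neg_on_sphere (hb : DiffContOnCl ℂ b (ball 0 1))
    (hv : DiffContOnCl ℂ v (ball 0 1)) (hh : DiffContOnCl ℂ h (ball 0 1))
    (hder : ∀ z ∈ ball (0 : ℂ) 1, deriv v z = h z * deriv b z)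
    (hb1 : ∀ z ∈ ball (0 : ℂ) 1, ‖b z‖ < 1) (hbs : ∀ z ∈ sphere (0 : ℂ) 1, ‖b z‖ = 1)
    (hvs : ∀ z ∈ sphere (0 : ℂ) 1, (v z * conj (b z)).re < 0) {z : ℂ} (hz : z ∈ ball (0 : ℂ) 1) :
    linearizedDensity b v h z ≤ 0 := by
  have hb_pos (w : ℂ) (hw : w ∈ ball (0 : ℂ) 1) := one_sub_norm_sq_pos (hb1 w hw)
  have hvb_cont : ContinuousOn (fun w ↦ 2 * (v w * conj (b w)).re) (closedBall 0 1) :=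
    continuousOn_const.mul (Complex.continuous_re.comp_continuousOn
      (hv.continuousOn_ball.mul (Complex.continuous_conj.comp_continuousOn hb.continuousOn_ball)))
  have hh_cont := Complex.continuous_re.comp_continuousOn hh.continuousOn_ball
  have hb_cont := continuousOn_const (c := (1 : ℝ)) |>.sub (hb.continuousOn_ball.norm.pow 2)
  have hsub : ball (0 : ℂ) 1 ⊆ closedBall 0 1 := ball_subset_closedBall
  -- Unlike the density, its product with `1 - |b|²` extends continuously to the closed disk.
  refine nonpos_of_forall_pos_not_isLocalMax (u := linearizedDensity b v h)
    (ρ := fun w ↦ 1 - ‖b w‖ ^ 2)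
    (Ψ := fun w ↦ (1 - ‖b w‖ ^ 2) * (h w).re + 2 * (v w * conj (b w)).re)
    ((hh_cont.mono hsub).add
      ((hvb_cont.mono hsub).div (hb_cont.mono hsub) fun w hw ↦ (hb_pos w hw).ne'))
    ((hb_cont.mul hh_cont).add hvb_cont) hb_pos (fun w hw ↦ ?_) (fun w hw ↦ ?_)
    (fun w hw hpos ↦ ?_) hz
  · have := (hb_pos w hw).ne'
    simp only [linearizedDensity]
    field_simp
  · simp only [hbs w hw]
    linarith [hvs w hw]
  · have hnhds : ball (0 : ℂ) 1 ∈ 𝓝 w := isOpen_ball.mem_nhds hw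
    exact not_isLocalMax_linearizedDensity (hb.differentiableOn.analyticAt hnhds)
      (hv.differentiableOn.analyticAt hnhds) (hh.differentiableOn.analyticAt hnhds)
      (mem_of_superset hnhds hder) (hb1 w hw)
      (not_eventually_eq_of_norm_eq_one_on_sphere hb hb1 hbs hw) hpos

lemma linearizedDensity_nonpos (hb : DiffContOnCl ℂ b (ball 0 1))
    (hv : DiffContOnCl ℂ v (ball 0 1)) (hh : DiffContOnCl ℂ h (ball 0 1))
    (hder : ∀ z ∈ ball (0 : ℂ) 1, deriv v z = h z * deriv b z)
    (hb1 : ∀ z ∈ ball (0 : ℂ) 1, ‖b z‖ < 1) (hbs : ∀ z ∈ sphere (0 : ℂ) 1, ‖b z‖ = 1)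
    (hvs : ∀ z ∈ sphere (0 : ℂ) 1, (v z * conj (b z)).re ≤ 0) {z : ℂ} (hz : z ∈ ball (0 : ℂ) 1) :
    linearizedDensity b v h z ≤ 0 := by
  have hre (ε : ℝ) (w : ℂ) :
      ((v w - ε * b w) * conj (b w)).re = (v w * conj (b w)).re - ε * ‖b w‖ ^ 2 := by
    rw [sub_mul, mul_assoc, mul_comm (b w), ← ofReal_norm_sq, Complex.sub_re,
      ← Complex.ofReal_mul, Complex.ofReal_re]
  have hpos := one_sub_norm_sq_pos (hb1 z hz)
  set c : ℝ := (1 + ‖b z‖ ^ 2) / (1 - ‖b z‖ ^ 2) with hc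
  have hc_pos : 0 < c := by positivity
  have hpert (ε : ℝ) (hε : 0 < ε) : linearizedDensity b v h z ≤ ε * c := by
    have hle := linearizedDensity_nonpos_of_neg_on_sphere (v := fun w ↦ v w - ε * b w)
      (h := fun w ↦ h w - ε) hb (hv.sub (hb.const_smul (ε : ℂ))) (hh.sub diffContOnCl_const)
      (fun w hw ↦ ?_) hb1 hbs (fun w hw ↦ ?_) hz
    · rw [linearizedDensity, hre, Complex.sub_re, Complex.ofReal_re] at hle
      have : ε * c = ε + 2 * (ε * ‖b z‖ ^ 2) / (1 - ‖b z‖ ^ 2) := by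
        rw [hc]
        field_simp
        ring
      rw [mul_sub, sub_div] at hle
      rw [linearizedDensity]
      linarith
    · rw [((hv.differentiableAt isOpen_ball hw).hasDerivAt.fun_sub
        ((hb.differentiableAt isOpen_ball hw).hasDerivAt.const_mul (ε : ℂ))).deriv, hder w hw]
      ring
    · rw [hre, hbs w hw]
      linarith [hvs w hw]
  refine le_of_forall_pos_le_add fun δ hδ ↦ ?_
  simpa [hc_pos.ne'] using hpert (δ / c) (by positivity)

lemma linearizedDensity_eq_zero (hb : DiffContOnCl ℂ b (ball 0 1))
    (hv : DiffContOnCl ℂ v (ball 0 1)) (hh : DiffContOnCl ℂ h (ball 0 1))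
    (hder : ∀ z ∈ ball (0 : ℂ) 1, deriv v z = h z * deriv b z)
    (hb1 : ∀ z ∈ ball (0 : ℂ) 1, ‖b z‖ < 1) (hbs : ∀ z ∈ sphere (0 : ℂ) 1, ‖b z‖ = 1)
    (hvs : ∀ z ∈ sphere (0 : ℂ) 1, (v z * conj (b z)).re = 0) {z : ℂ} (hz : z ∈ ball (0 : ℂ) 1) :
    linearizedDensity b v h z = 0 := by
  refine le_antisymm (linearizedDensity_nonpos hb hv hh hder hb1 hbs (fun w hw ↦ (hvs w hw).le) hz)
    ?_
  have hneg := linearizedDensity_nonpos hb hv.neg hh.neg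
    (fun w hw ↦ by rw [deriv.neg, hder w hw, Pi.neg_apply, neg_mul]) hb1 hbs
    (fun w hw ↦ by simp [hvs w hw]) hz
  simp only [linearizedDensity, Pi.neg_apply, neg_mul, Complex.neg_re, mul_neg, neg_div] at hneg ⊢
  linarith

lemma isBigO_of_analyticOrderAt_le (hv : AnalyticAt ℂ v z₀) (hh : AnalyticAt ℂ h z₀)
    (hle : analyticOrderAt h z₀ ≤ analyticOrderAt v z₀) : v =O[𝓝 z₀] h := by
  by_cases htop : analyticOrderAt h z₀ = ⊤
  · have hv0 : v =ᶠ[𝓝 z₀] 0 := analyticOrderAt_eq_top.1 (top_le_iff.1 (htop ▸ hle))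
    exact hv0.trans_isBigO (Asymptotics.isBigO_zero _ _)
  obtain ⟨k, hk⟩ := ENat.ne_top_iff_exists.1 htop
  obtain ⟨u, hu, hu0, hhu⟩ := hh.analyticOrderAt_eq_natCast.1 hk.symm
  obtain ⟨r, hr, hvr⟩ := (natCast_le_analyticOrderAt hv).1 (hk ▸ hle)
  have hru : r =O[𝓝 z₀] u := by
    refine (hr.continuousAt.isBigO_one ℂ).trans ?_
    exact (Asymptotics.isBigO_const_left_iff_pos_le_norm one_ne_zero).2
      ⟨‖u z₀‖ / 2, half_pos (norm_pos_iff.2 hu0), (hu.continuousAt.norm.eventually_const_lt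
        (half_lt_self (norm_pos_iff.2 hu0))).mono fun z hz ↦ hz.le⟩
  exact ((Asymptotics.isBigO_refl (fun z ↦ (z - z₀) ^ k) _).smul hru).congr'
    (hvr.mono fun _ hz ↦ hz.symm) (hhu.mono fun _ hz ↦ hz.symm)

lemma eventually_eq_zero_of_abs_re_lt_norm {φ : ℂ → ℂ} (hφ : AnalyticAt ℂ φ z₀) (hφ0 : φ z₀ = 0)
    (hre : ∀ᶠ z in 𝓝 z₀, φ z ≠ 0 → |(φ z).re| < ‖φ z‖) : ∀ᶠ z in 𝓝 z₀, φ z = 0 := by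
  rcases hφ.eventually_constant_or_nhds_le_map_nhds with hconst | hopen
  · simpa only [hφ0] using hconst
  have hre' : ∀ᶠ y in 𝓝 (φ z₀), y ≠ 0 → |y.re| < ‖y‖ := hopen hre
  rw [hφ0] at hre'
  obtain ⟨δ, hδ, hball⟩ := Metric.eventually_nhds_iff.1 hre'
  have hhalf : ‖((δ / 2 : ℝ) : ℂ)‖ = δ / 2 := by
    rw [Complex.norm_real, Real.norm_of_nonneg (by positivity)]
  have := hball (y := ((δ / 2 : ℝ) : ℂ)) (by rw [dist_zero_right, hhalf]; linarith)
    (norm_pos_iff.1 (by rw [hhalf]; positivity))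
  rw [hhalf, Complex.ofReal_re, abs_of_pos (by positivity)] at this
  exact absurd this (lt_irrefl _)

lemma abs_re_sub_le_of_linearizedDensity_eq_zero {z c : ℂ} (hc : c.re = 0) (hb1 : ‖b z‖ < 1)
    (hzero : linearizedDensity b v h z = 0) :
    |(h z - c).re| ≤ 2 * (‖v z - c * b z‖ * ‖b z‖) / (1 - ‖b z‖ ^ 2) := by
  have hpos := one_sub_norm_sq_pos hb1
  have hre : ((v z - c * b z) * conj (b z)).re = (v z * conj (b z)).re := by
    rw [sub_mul, mul_assoc, mul_comm (b z), ← ofReal_norm_sq, Complex.sub_re,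
      Complex.re_mul_ofReal, hc, zero_mul, sub_zero]
  have heq : (h z - c).re = -(2 * ((v z - c * b z) * conj (b z)).re / (1 - ‖b z‖ ^ 2)) := by
    rw [linearizedDensity] at hzero
    rw [hre, Complex.sub_re, hc]
    linarith
  rw [heq, abs_neg, abs_div, abs_mul, abs_two, abs_of_pos hpos]
  gcongr
  exact (Complex.abs_re_le_norm _).trans_eq (by rw [norm_mul, RCLike.norm_conj])

lemma eventually_eq_of_linearizedDensity_eq_zero (hb : AnalyticAt ℂ b z₀)
    (hv : AnalyticAt ℂ v z₀) (hh : AnalyticAt ℂ h z₀)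
    (hder : ∀ᶠ z in 𝓝 z₀, deriv v z = h z * deriv b z) (hb0 : b z₀ = 0) (hv0 : v z₀ = 0)
    (hzero : ∀ᶠ z in 𝓝 z₀, linearizedDensity b v h z = 0) :
    ∀ᶠ z in 𝓝 z₀, h z = h z₀ := by
  have hre : (h z₀).re = 0 := by simpa [linearizedDensity, hv0] using hzero.self_of_nhds
  set φ : ℂ → ℂ := fun z ↦ h z - h z₀
  set w : ℂ → ℂ := fun z ↦ v z - h z₀ * b z with hw
  have hφ : AnalyticAt ℂ φ z₀ := hh.sub analyticAt_const
  have hw_an : AnalyticAt ℂ w z₀ := hv.sub (analyticAt_const.mul hb)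
  have hw_der : ∀ᶠ z in 𝓝 z₀, deriv w z = φ z * deriv b z := by
    filter_upwards [hder, hv.eventually_analyticAt, hb.eventually_analyticAt] with z hz hvz hbz
    rw [(hvz.differentiableAt.hasDerivAt.fun_sub
      (hbz.differentiableAt.hasDerivAt.const_mul (h z₀))).deriv, hz]
    ring
  have hw_bigO : w =O[𝓝 z₀] φ := by
    refine isBigO_of_analyticOrderAt_le hw_an hφ ?_
    rw [analyticOrderAt_eq_of_deriv_eq_mul hw_an hb hφ (by simp [hw, hv0, hb0]) hw_der, add_assoc]
    exact le_self_add
  obtain ⟨C, -, hC⟩ := hw_bigO.exists_pos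
  have hsmall : ∀ᶠ z in 𝓝 z₀, 2 * C * ‖b z‖ / (1 - ‖b z‖ ^ 2) < 1 := by
    have hcont : ContinuousAt (fun z ↦ 2 * C * ‖b z‖ / (1 - ‖b z‖ ^ 2)) z₀ :=
      (continuousAt_const.mul hb.continuousAt.norm).div
        (continuousAt_const.sub (hb.continuousAt.norm.pow 2)) (by simp [hb0])
    exact hcont.eventually_lt_const (by simp [hb0])
  have hb1 := hb.continuousAt.norm.eventually_lt_const (by simp [hb0] : ‖b z₀‖ < 1)
  have hφ_zero : ∀ᶠ z in 𝓝 z₀, φ z = 0 := by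
    refine eventually_eq_zero_of_abs_re_lt_norm hφ (sub_self _) ?_
    filter_upwards [hzero, hC.bound, hsmall, hb1] with z hz hCz hsz hbz hne
    have hpos := one_sub_norm_sq_pos hbz
    calc |(φ z).re| ≤ 2 * (‖w z‖ * ‖b z‖) / (1 - ‖b z‖ ^ 2) :=
          abs_re_sub_le_of_linearizedDensity_eq_zero hre hbz hz
      _ ≤ 2 * (C * ‖φ z‖ * ‖b z‖) / (1 - ‖b z‖ ^ 2) := by gcongr
      _ = ‖φ z‖ * (2 * C * ‖b z‖ / (1 - ‖b z‖ ^ 2)) := by ring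
      _ < ‖φ z‖ := mul_lt_of_lt_one_right (norm_pos_iff.2 hne) hsz
  exact hφ_zero.mono fun z hz ↦ sub_eq_zero.1 hz

end LinearizedDensity

/-! ### The finite Blaschke products `z P / P^*` -/

section ConjReflect

open Polynomial

/-- The conjugate-reciprocal polynomial `z ^ n * conj (P (1 / conj z))`, usually written `P^*`;
`n` is a bound for the degree of `P` rather than the degree itself, so that the operation is
additive. -/
noncomputable def conjReflect (n : ℕ) (P : ℂ[X]) : ℂ[X] :=
  (P.map (starRingEnd ℂ)).reflect n

variable {m n : ℕ} {P R : ℂ[X]}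

lemma coeff_conjReflect (n : ℕ) (P : ℂ[X]) (k : ℕ) :
    (conjReflect n P).coeff k = conj (P.coeff (revAt n k)) := by
  rw [conjReflect, coeff_reflect, coeff_map]

lemma conjReflect_add (n : ℕ) (P R : ℂ[X]) :
    conjReflect n (P + R) = conjReflect n P + conjReflect n R := by
  rw [conjReflect, Polynomial.map_add, reflect_add]; rfl

lemma conjReflect_C_mul (n : ℕ) (c : ℂ) (P : ℂ[X]) :
    conjReflect n (C c * P) = C (conj c) * conjReflect n P := by
  rw [conjReflect, Polynomial.map_mul, map_C, reflect_C_mul]; rfl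

lemma conjReflect_conjReflect (n : ℕ) (P : ℂ[X]) : conjReflect n (conjReflect n P) = P := by
  ext k
  rw [coeff_conjReflect, coeff_conjReflect, revAt_invol, Complex.conj_conj]

lemma conjReflect_mul (hP : P.natDegree ≤ m) (hR : R.natDegree ≤ n) :
    conjReflect (m + n) (P * R) = conjReflect m P * conjReflect n R := by
  rw [conjReflect, Polynomial.map_mul]
  exact reflect_mul _ _ (natDegree_map_le.trans hP) (natDegree_map_le.trans hR)

lemma natDegree_conjReflect_le (hP : P.natDegree ≤ n) : (conjReflect n P).natDegree ≤ n :=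
  natDegree_reflect_le.trans (max_le le_rfl (natDegree_map_le.trans hP))

lemma conjReflect_X_mul_derivative (hP : P.natDegree ≤ n) :
    conjReflect n (X * derivative P) =
      (n : ℂ[X]) * conjReflect n P - X * derivative (conjReflect n P) := by
  have coeff_X_mul_derivative (S : ℂ[X]) (k : ℕ) : (X * derivative S).coeff k = k * S.coeff k := by
    cases k with
    | zero => simp
    | succ k => rw [coeff_X_mul, coeff_derivative]; push_cast; ring
  ext k
  rw [coeff_conjReflect, coeff_X_mul_derivative, coeff_sub, coeff_X_mul_derivative,
    coeff_natCast_mul, coeff_conjReflect]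
  rcases le_or_gt k n with hk | hk
  · rw [revAt_le hk]
    simp only [map_mul, map_sub, map_natCast, Nat.cast_sub hk]
    ring
  · rw [revAt_eq_self_of_lt hk, coeff_eq_zero_of_natDegree_lt (hP.trans_lt hk)]
    simp

lemma eval_conjReflect (hP : P.natDegree ≤ n) {z : ℂ} (hz : z ≠ 0) :
    (conjReflect n P).eval z = z ^ n * conj (P.eval (conj z)⁻¹) := by
  let _ : Invertible z⁻¹ := invertibleOfNonzero (inv_ne_zero hz)
  have h := eval₂_reflect_mul_pow (RingHom.id ℂ) z⁻¹ n (P.map (starRingEnd ℂ))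
    (natDegree_map_le.trans hP)
  have heval : (P.map (starRingEnd ℂ)).eval z⁻¹ = conj (P.eval (conj z)⁻¹) := by
    rw [← map_inv₀ (starRingEnd ℂ) z, ← eval_map_apply, Complex.conj_conj]
  rw [invOf_eq_inv, inv_inv] at h
  change (conjReflect n P).eval z * z⁻¹ ^ n = (P.map (starRingEnd ℂ)).eval z⁻¹ at h
  rw [← heval, ← h, mul_left_comm, ← mul_pow, mul_inv_cancel₀ hz, one_pow, mul_one]

lemma inv_conj_of_norm_eq_one {z : ℂ} (hz : ‖z‖ = 1) : (conj z)⁻¹ = z := by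
  rw [← Complex.inv_eq_conj hz, inv_inv]

lemma eval_conjReflect_of_norm_eq_one (hP : P.natDegree ≤ n) {z : ℂ} (hz : ‖z‖ = 1) :
    (conjReflect n P).eval z = z ^ n * conj (P.eval z) := by
  rw [eval_conjReflect hP (norm_ne_zero_iff.1 (hz ▸ one_ne_zero)), inv_conj_of_norm_eq_one hz]

lemma norm_eval_conjReflect_of_norm_eq_one (hP : P.natDegree ≤ n) {z : ℂ} (hz : ‖z‖ = 1) :
    ‖(conjReflect n P).eval z‖ = ‖P.eval z‖ := by
  rw [eval_conjReflect_of_norm_eq_one hP hz, norm_mul, norm_pow, hz, one_pow, one_mul,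
    RCLike.norm_conj]

lemma eval_zero_conjReflect (n : ℕ) (P : ℂ[X]) :
    (conjReflect n P).eval 0 = conj (P.coeff n) := by
  rw [← coeff_zero_eq_eval_zero, coeff_conjReflect, revAt_zero]

lemma eval_conjReflect_ne_zero (hP : P.Monic) {z : ℂ}
    (hroots : ∀ w, ‖z‖ * ‖w‖ = 1 → P.eval w ≠ 0) :
    (conjReflect P.natDegree P).eval z ≠ 0 := by
  rcases eq_or_ne z 0 with rfl | hz
  · rw [eval_zero_conjReflect, hP.coeff_natDegree, map_one]
    exact one_ne_zero
  · rw [eval_conjReflect le_rfl hz]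
    refine mul_ne_zero (pow_ne_zero _ hz) ((_root_.map_ne_zero _).2 (hroots _ ?_))
    rw [norm_inv, RCLike.norm_conj, mul_inv_cancel₀ (norm_ne_zero_iff.2 hz)]

lemma eq_zero_of_conjReflect_eq_self (hdeg : P.natDegree ≤ n + n)
    (hself : conjReflect (n + n) P = P) (hlow : ∀ k < n, P.coeff k = 0)
    (hmid : (P.coeff n).re = 0) : P = 0 := by
  have hsymm (k : ℕ) (hk : k ≤ n + n) : P.coeff k = conj (P.coeff (n + n - k)) := by
    rw [← revAt_le hk, ← coeff_conjReflect, hself]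
  ext k
  rw [coeff_zero]
  rcases lt_trichotomy k n with hk | rfl | hk
  · exact hlow k hk
  · have hreal := hsymm k (by omega)
    rw [Nat.add_sub_cancel] at hreal
    exact Complex.ext hmid (Complex.conj_eq_iff_im.1 hreal.symm)
  · rcases le_or_gt k (n + n) with hk' | hk'
    · rw [hsymm k hk', hlow _ (by omega), map_zero]
    · exact coeff_eq_zero_of_natDegree_lt (hdeg.trans_lt hk')

lemma coeff_mul_conjReflect_self (n : ℕ) (P : ℂ[X]) :
    (P * conjReflect n P).coeff n = ((∑ k ∈ Finset.range (n + 1), ‖P.coeff k‖ ^ 2 : ℝ) : ℂ) := by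
  rw [coeff_mul, Finset.Nat.sum_antidiagonal_eq_sum_range_succ_mk, Complex.ofReal_sum]
  refine Finset.sum_congr rfl fun k hk ↦ ?_
  have hk' : k ≤ n := Nat.lt_succ_iff.1 (Finset.mem_range.1 hk)
  rw [coeff_conjReflect, revAt_le (Nat.sub_le n k), Nat.sub_sub_self hk', ofReal_norm_sq, mul_comm]

/-- The Wronskian of `R^*` and `z P`: for `R = P` it is the numerator of the derivative of
`z P / P^*`, and polarizing it in the two arguments gives the linearization of that numerator. -/
noncomputable def heinsWronskian (n : ℕ) (P R : ℂ[X]) : ℂ[X] :=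
  wronskian (conjReflect n R) (X * P)

lemma heinsWronskian_add (n : ℕ) (P R S T : ℂ[X]) :
    heinsWronskian n (P + R) (S + T) = heinsWronskian n P S + heinsWronskian n P T +
      (heinsWronskian n R S + heinsWronskian n R T) := by
  simp only [heinsWronskian, conjReflect_add, mul_add, wronskian_add_left, wronskian_add_right]

lemma heinsWronskian_C_mul_left (n : ℕ) (c : ℂ) (P R : ℂ[X]) :
    heinsWronskian n (C c * P) R = C c * heinsWronskian n P R := by
  simp only [heinsWronskian, wronskian, derivative_mul, derivative_C]
  ring

lemma heinsWronskian_ofReal_mul_right (n : ℕ) (c : ℝ) (P R : ℂ[X]) :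
    heinsWronskian n P (C (c : ℂ) * R) = C (c : ℂ) * heinsWronskian n P R := by
  simp only [heinsWronskian, wronskian, conjReflect_C_mul, Complex.conj_ofReal, derivative_mul,
    derivative_C]
  ring

lemma natDegree_heinsWronskian_le (hP : P.natDegree ≤ n) (hR : R.natDegree ≤ n) :
    (heinsWronskian n P R).natDegree ≤ n + n := by
  by_cases h : heinsWronskian n P R = 0
  · simp [h]
  · have hlt := natDegree_wronskian_lt_add h
    have hR' := natDegree_conjReflect_le hR
    have hXP := natDegree_mul_le (p := (X : ℂ[X])) (q := P)
    rw [natDegree_X] at hXP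
    rw [heinsWronskian]
    omega

lemma conjReflect_heinsWronskian (hP : P.natDegree ≤ n) (hR : R.natDegree ≤ n) :
    conjReflect (n + n) (heinsWronskian n P R) = heinsWronskian n R P := by
  have natDegree_X_mul_derivative_le {S : ℂ[X]} (hS : S.natDegree ≤ n) :
      (X * derivative S).natDegree ≤ n := by
    refine natDegree_le_iff_coeff_eq_zero.2 fun k hk ↦ ?_
    obtain ⟨k, rfl⟩ := Nat.exists_eq_add_one_of_ne_zero hk.ne_bot
    rw [coeff_X_mul, coeff_derivative, coeff_eq_zero_of_natDegree_lt (hS.trans_lt hk), zero_mul]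
  have hexpand : heinsWronskian n P R = P * conjReflect n R +
      X * derivative P * conjReflect n R + C (-1) * (P * (X * derivative (conjReflect n R))) := by
    rw [heinsWronskian, wronskian, derivative_mul, derivative_X, C_neg, C_1]
    ring
  have hR' := natDegree_conjReflect_le hR
  rw [hexpand, conjReflect_add, conjReflect_add, conjReflect_C_mul, conjReflect_mul hP hR',
    conjReflect_mul (natDegree_X_mul_derivative_le hP) hR',
    conjReflect_mul hP (natDegree_X_mul_derivative_le hR'), conjReflect_X_mul_derivative hP,
    conjReflect_X_mul_derivative hR', conjReflect_conjReflect, heinsWronskian, wronskian,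
    derivative_mul, derivative_X, map_neg, map_one, C_neg, C_1]
  ring

lemma wronskian_ne_zero_of_eval_eq_zero {P R : ℂ[X]} {a : ℂ} (hP : P ≠ 0) (hPa : P.eval a = 0)
    (hRa : R.eval a ≠ 0) : wronskian R P ≠ 0 := by
  obtain ⟨S, hPS, hS⟩ := P.exists_eq_pow_rootMultiplicity_mul_and_not_dvd hP a
  obtain ⟨k, hk⟩ := Nat.exists_eq_add_one_of_ne_zero
    ((rootMultiplicity_pos hP).2 hPa).ne'
  rw [hk] at hPS
  intro hW
  have hfactor : wronskian R P = (X - Polynomial.C a) ^ k * ((k + 1 : ℂ[X]) * (R * S) +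
      (X - Polynomial.C a) * wronskian R S) := by
    simp only [wronskian, hPS, derivative_mul, derivative_X_sub_C_pow]
    simp only [Nat.cast_add, Nat.cast_one, Nat.add_sub_cancel, C_add, C_1, map_natCast]
    ring
  rw [hfactor, mul_eq_zero, or_iff_right (pow_ne_zero _ (X_sub_C_ne_zero a))] at hW
  have heval : S.eval a = 0 := by
    simpa [hRa, Nat.cast_add_one_ne_zero] using congrArg (eval a) hW
  exact hS (dvd_iff_isRoot.2 heval)

end ConjReflect

section BlaschkeQuotient

open Polynomial

/-- The quotient `z P / P^*` for a polynomial `P` of degree `n`: up to a unimodular factor, the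
finite Blaschke product vanishing at `0` and at the roots of `P`. -/
noncomputable def blaschkeQuotient (n : ℕ) (P : ℂ[X]) (z : ℂ) : ℂ :=
  z * P.eval z / (conjReflect n P).eval z

variable {n : ℕ} {P R M : ℂ[X]}

lemma analyticAt_eval (P : ℂ[X]) (z : ℂ) : AnalyticAt ℂ (fun w ↦ P.eval w) z :=
  P.differentiable.analyticAt z

lemma analyticAt_blaschkeQuotient {z : ℂ} (hz : (conjReflect n P).eval z ≠ 0) :
    AnalyticAt ℂ (blaschkeQuotient n P) z :=
  (analyticAt_id.fun_mul (analyticAt_eval P z)).fun_div (analyticAt_eval _ z) hz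

lemma deriv_blaschkeQuotient {z : ℂ} (hz : (conjReflect n P).eval z ≠ 0) :
    deriv (blaschkeQuotient n P) z =
      (heinsWronskian n P P).eval z / (conjReflect n P).eval z ^ 2 := by
  have hder := ((hasDerivAt_id' z).fun_mul (P.hasDerivAt z)).fun_div
    ((conjReflect n P).hasDerivAt z) hz
  refine hder.deriv.trans ?_
  simp only [heinsWronskian, wronskian, derivative_mul, derivative_X, eval_sub, eval_mul, eval_add,
    eval_X, one_mul]
  ring

lemma norm_blaschkeQuotient_of_norm_eq_one (hP : P.natDegree ≤ n) {z : ℂ} (hz : ‖z‖ = 1)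
    (hPz : (conjReflect n P).eval z ≠ 0) : ‖blaschkeQuotient n P z‖ = 1 := by
  rw [blaschkeQuotient, norm_div, norm_mul, hz, one_mul,
    ← norm_eval_conjReflect_of_norm_eq_one hP hz, div_self (norm_ne_zero_iff.2 hPz)]

lemma norm_blaschkeQuotient_le (hP : P.natDegree ≤ n)
    (hne : ∀ z, ‖z‖ ≤ 1 → (conjReflect n P).eval z ≠ 0) {z : ℂ} (hz : ‖z‖ ≤ 1) :
    ‖blaschkeQuotient n P z‖ ≤ ‖z‖ := by
  have hdiff : DiffContOnCl ℂ (fun w ↦ P.eval w / (conjReflect n P).eval w) (ball 0 1) := by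
    refine DifferentiableOn.diffContOnCl fun w hw ↦ ?_
    rw [closure_ball (0 : ℂ) one_ne_zero, mem_closedBall_zero_iff] at hw
    exact ((analyticAt_eval P w).fun_div (analyticAt_eval _ w)
      (hne w hw)).differentiableAt.differentiableWithinAt
  have hquot : ‖P.eval z / (conjReflect n P).eval z‖ ≤ 1 := by
    refine Complex.norm_le_of_forall_mem_frontier_norm_le isBounded_ball hdiff (fun w hw ↦ ?_) ?_
    · rw [frontier_ball (0 : ℂ) one_ne_zero, mem_sphere_zero_iff_norm] at hw
      rw [norm_div, ← norm_eval_conjReflect_of_norm_eq_one hP hw,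
        div_self (norm_ne_zero_iff.2 (hne w hw.le))]
    · rwa [closure_ball (0 : ℂ) one_ne_zero, mem_closedBall_zero_iff]
  rw [blaschkeQuotient, mul_div_assoc, norm_mul]
  exact mul_le_of_le_one_right (norm_nonneg z) hquot

/-- The derivative of `blaschkeQuotient n P` in the direction `R`. -/
noncomputable def blaschkeVariation (n : ℕ) (P R : ℂ[X]) (z : ℂ) : ℂ :=
  (z * R.eval z * (conjReflect n P).eval z - z * P.eval z * (conjReflect n R).eval z) /
    (conjReflect n P).eval z ^ 2

lemma analyticAt_blaschkeVariation {z : ℂ} (hz : (conjReflect n P).eval z ≠ 0) :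
    AnalyticAt ℂ (blaschkeVariation n P R) z :=
  (((analyticAt_id.fun_mul (analyticAt_eval R z)).fun_mul (analyticAt_eval _ z)).fun_sub
    ((analyticAt_id.fun_mul (analyticAt_eval P z)).fun_mul (analyticAt_eval _ z))).fun_div
    ((analyticAt_eval _ z).fun_pow 2) (pow_ne_zero 2 hz)

lemma deriv_blaschkeVariation {z : ℂ} (hz : (conjReflect n P).eval z ≠ 0) :
    deriv (blaschkeVariation n P R) z =
      (heinsWronskian n R P + heinsWronskian n P R).eval z / (conjReflect n P).eval z ^ 2 -
      2 * (conjReflect n R).eval z / (conjReflect n P).eval z *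
        deriv (blaschkeQuotient n P) z := by
  have hder := ((((hasDerivAt_id' z).fun_mul (R.hasDerivAt z)).fun_mul
    ((conjReflect n P).hasDerivAt z)).fun_sub (((hasDerivAt_id' z).fun_mul
    (P.hasDerivAt z)).fun_mul ((conjReflect n R).hasDerivAt z))).fun_div
    (((conjReflect n P).hasDerivAt z).fun_pow 2) (pow_ne_zero 2 hz)
  rw [deriv_blaschkeQuotient hz]
  refine hder.deriv.trans ?_
  simp only [heinsWronskian, wronskian, derivative_mul, derivative_X, eval_sub, eval_mul, eval_add,
    eval_X, one_mul]
  field_simp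
  push_cast
  ring

/-- A variation through functions that are unimodular on the circle is tangential there. -/
lemma re_blaschkeVariation_mul_conj (hP : P.natDegree ≤ n) (hR : R.natDegree ≤ n) {z : ℂ}
    (hz : ‖z‖ = 1) : (blaschkeVariation n P R z * conj (blaschkeQuotient n P z)).re = 0 := by
  have hzz : z * conj z = 1 := by
    rw [Complex.mul_conj, Complex.normSq_eq_norm_sq, hz, one_pow, Complex.ofReal_one]
  have hzn : z ^ n * conj z ^ n = 1 := by rw [← mul_pow, hzz, one_pow]
  rcases eq_or_ne (P.eval z) 0 with hp | hp
  · simp [blaschkeQuotient, hp]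
  set p := P.eval z
  set r := R.eval z
  have hcp : conj p ≠ 0 := by simpa using hp
  have hz0 : z ≠ 0 := left_ne_zero_of_mul_eq_one hzz
  have heq : blaschkeVariation n P R z * conj (blaschkeQuotient n P z) =
      (r * conj p - p * conj r) / (p * conj p) := by
    rw [blaschkeVariation, blaschkeQuotient, eval_conjReflect_of_norm_eq_one hP hz,
      eval_conjReflect_of_norm_eq_one hR hz]
    simp only [map_div₀, map_mul, map_pow, Complex.conj_conj]
    rw [div_mul_div_comm, div_eq_div_iff (mul_ne_zero (by positivity)
      (mul_ne_zero (right_ne_zero_of_mul_eq_one hzn) hp)) (mul_ne_zero hp hcp)]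
    linear_combination (r * conj p - p * conj r) * z ^ n * conj p ^ 2 * p * (hzz - hzn)
  have hanti : conj ((r * conj p - p * conj r) / (p * conj p)) =
      -((r * conj p - p * conj r) / (p * conj p)) := by
    simp only [map_div₀, map_sub, map_mul, Complex.conj_conj]
    ring
  have hre := congrArg Complex.re hanti
  rw [heq]
  rw [Complex.conj_re, Complex.neg_re] at hre
  linarith

end BlaschkeQuotient

/-! ### Heins' theorem -/

section HeinsEquation

open Polynomial

variable {n : ℕ} {P R M : ℂ[X]}

/-- All roots lie in the open unit disk; stated so that the zero polynomial is excluded. -/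
def RootsInUnitDisk (P : ℂ[X]) : Prop :=
  ∀ z, 1 ≤ ‖z‖ → P.eval z ≠ 0

lemma RootsInUnitDisk.eval_conjReflect_ne_zero (hroots : RootsInUnitDisk P) (hP : P.Monic) {z : ℂ}
    (hz : ‖z‖ ≤ 1) : (conjReflect P.natDegree P).eval z ≠ 0 :=
  _root_.eval_conjReflect_ne_zero hP fun w hw ↦ hroots w <| by
    nlinarith [norm_nonneg z, norm_nonneg w]

/-- The quotient of the derivatives of `blaschkeVariation n P R` and `blaschkeQuotient n P` when the
linearization of `heinsWronskian n P P` in the direction `R` is `c` times its value. -/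
noncomputable def variationRatio (n : ℕ) (P R : ℂ[X]) (c : ℝ) (z : ℂ) : ℂ :=
  c - 2 * (conjReflect n R).eval z / (conjReflect n P).eval z

lemma analyticAt_variationRatio {c : ℝ} {z : ℂ} (hz : (conjReflect n P).eval z ≠ 0) :
    AnalyticAt ℂ (variationRatio n P R c) z :=
  analyticAt_const.fun_sub
    ((analyticAt_const.fun_mul (analyticAt_eval _ z)).fun_div (analyticAt_eval _ z) hz)

lemma deriv_blaschkeVariation_eq_mul {c : ℝ} (hvar : heinsWronskian n R P + heinsWronskian n P R =
    C (c : ℂ) * heinsWronskian n P P) {z : ℂ} (hz : (conjReflect n P).eval z ≠ 0) :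
    deriv (blaschkeVariation n P R) z =
      variationRatio n P R c z * deriv (blaschkeQuotient n P) z := by
  rw [deriv_blaschkeVariation hz, hvar, variationRatio, sub_mul, eval_mul, eval_C, mul_div_assoc,
    ← deriv_blaschkeQuotient hz]

lemma linearizedDensity_blaschkeVariation_eq_zero (hP : P.natDegree ≤ n) (hR : R.natDegree ≤ n)
    (hne : ∀ z, ‖z‖ ≤ 1 → (conjReflect n P).eval z ≠ 0) {c : ℝ}
    (hvar : heinsWronskian n R P + heinsWronskian n P R = C (c : ℂ) * heinsWronskian n P P)
    {z : ℂ} (hz : z ∈ ball (0 : ℂ) 1) :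
    linearizedDensity (blaschkeQuotient n P) (blaschkeVariation n P R) (variationRatio n P R c) z =
      0 := by
  have diffContOnCl_of_analyticAt {f : ℂ → ℂ} (hf : ∀ z, ‖z‖ ≤ 1 → AnalyticAt ℂ f z) :
      DiffContOnCl ℂ f (ball 0 1) := by
    refine DifferentiableOn.diffContOnCl fun z hz ↦ ?_
    rw [closure_ball (0 : ℂ) one_ne_zero, mem_closedBall_zero_iff] at hz
    exact (hf z hz).differentiableAt.differentiableWithinAt
  refine linearizedDensity_eq_zero
    (diffContOnCl_of_analyticAt fun w hw ↦ analyticAt_blaschkeQuotient (hne w hw))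
    (diffContOnCl_of_analyticAt fun w hw ↦ analyticAt_blaschkeVariation (hne w hw))
    (diffContOnCl_of_analyticAt fun w hw ↦ analyticAt_variationRatio (hne w hw))
    (fun w hw ↦ deriv_blaschkeVariation_eq_mul hvar (hne w (mem_ball_zero_iff.1 hw).le))
    (fun w hw ↦ ?_) (fun w hw ↦ ?_) (fun w hw ↦ ?_) hz
  · rw [mem_ball_zero_iff] at hw
    exact (norm_blaschkeQuotient_le hP hne hw.le).trans_lt hw
  · rw [mem_sphere_zero_iff_norm] at hw
    exact norm_blaschkeQuotient_of_norm_eq_one hP hw (hne w hw.le)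
  · exact re_blaschkeVariation_mul_conj hP hR (mem_sphere_zero_iff_norm.1 hw)

lemma eq_zero_of_variation_eq_mul (hP : P.Monic) (hroots : RootsInUnitDisk P)
    (hR : R.degree < P.natDegree) {c : ℝ}
    (hvar : heinsWronskian P.natDegree R P + heinsWronskian P.natDegree P R =
      C (c : ℂ) * heinsWronskian P.natDegree P P) : R = 0 ∧ c = 0 := by
  set n := P.natDegree
  have hne (z : ℂ) (hz : ‖z‖ ≤ 1) : (conjReflect n P).eval z ≠ 0 :=
    hroots.eval_conjReflect_ne_zero hP hz
  have hne_ball (z : ℂ) (hz : z ∈ ball (0 : ℂ) 1) : (conjReflect n P).eval z ≠ 0 :=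
    hne z (mem_ball_zero_iff.1 hz).le
  have h0 : (conjReflect n P).eval 0 ≠ 0 := hne 0 (by simp)
  have hball : ball (0 : ℂ) 1 ∈ 𝓝 0 := ball_mem_nhds 0 one_pos
  have hzero (z : ℂ) (hz : z ∈ ball (0 : ℂ) 1) := linearizedDensity_blaschkeVariation_eq_zero
    le_rfl (natDegree_le_of_degree_le hR.le) hne hvar hz
  have hconst := eventually_eq_of_linearizedDensity_eq_zero (analyticAt_blaschkeQuotient h0)
    (analyticAt_blaschkeVariation h0) (analyticAt_variationRatio h0)
    (by filter_upwards [hball] with z hz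
        exact deriv_blaschkeVariation_eq_mul hvar (hne_ball z hz))
    (by simp [blaschkeQuotient]) (by simp [blaschkeVariation])
    (by filter_upwards [hball] using hzero)
  have hratio : variationRatio n P R c 0 = c := by
    simp [variationRatio, eval_zero_conjReflect, coeff_eq_zero_of_degree_lt hR]
  constructor
  · have hstar : conjReflect n R = 0 := by
      refine eq_zero_of_infinite_isRoot _ (infinite_of_mem_nhds 0 ?_)
      filter_upwards [hconst, hball] with z hz hz1
      rw [hratio] at hz
      simpa [variationRatio, hne_ball z hz1] using hz
    rw [← conjReflect_conjReflect n R, hstar, conjReflect, Polynomial.map_zero, reflect_zero]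
  · have hre := hzero 0 (by simp)
    rw [linearizedDensity, hratio] at hre
    simpa [blaschkeVariation] using hre

lemma norm_coeff_le_choose (hP : P.Monic) (hroots : RootsInUnitDisk P) (k : ℕ) :
    ‖P.coeff k‖ ≤ P.natDegree.choose (P.natDegree / 2) := by
  have h := coeff_bdd_of_roots_le (f := RingHom.id ℂ) (B := 1) hP (IsAlgClosed.splits _) le_rfl
    (fun z hz ↦ ?_) k
  · simpa using h
  · by_contra! hlt
    exact hroots z hlt.le (by simpa using isRoot_of_mem_roots hz)

lemma pow_natDegree_le_norm_eval (hP : P.Monic) (hroots : RootsInUnitDisk P) {z : ℂ}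
    (hz : 1 ≤ ‖z‖) : (‖z‖ - 1) ^ P.natDegree ≤ ‖P.eval z‖ := by
  have hsplit := IsAlgClosed.splits P
  rw [hsplit.eval_eq_prod_roots_of_monic hP, ← hsplit.natDegree_eq_card_roots.symm,
    ← Multiset.prod_replicate, ← Multiset.map_const',
    ← normHom_apply (Multiset.prod _), map_multiset_prod, Multiset.map_map]
  refine Multiset.prod_map_le_prod_map₀ _ _ (fun _ _ ↦ sub_nonneg.2 hz) fun r hr ↦ ?_
  have hr1 : ‖r‖ < 1 := by
    by_contra! hlt
    exact hroots r hlt (isRoot_of_mem_roots hr)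
  exact (sub_le_sub_left hr1.le _).trans (norm_sub_norm_le z r)

lemma RootsInUnitDisk.scaleRoots (hM : M.Monic) (hroots : RootsInUnitDisk M) {t : ℝ}
    (ht : t ∈ Set.Icc (0 : ℝ) 1) : RootsInUnitDisk (M.scaleRoots (t : ℂ)) := by
  intro z hz
  rcases ht.1.eq_or_lt with rfl | ht0
  · have hz0 : z ≠ 0 := norm_pos_iff.1 (one_pos.trans_le hz)
    rw [Complex.ofReal_zero, scaleRoots_zero, hM.leadingCoeff, one_smul, eval_pow, eval_X]
    exact pow_ne_zero _ hz0
  · have htC : (t : ℂ) ≠ 0 := Complex.ofReal_ne_zero.2 ht0.ne'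
    have heval := scaleRoots_eval_mul M (z / t) (t : ℂ)
    rw [mul_div_cancel₀ _ htC] at heval
    rw [heval]
    refine mul_ne_zero (pow_ne_zero _ htC) (hroots _ ?_)
    rw [norm_div, Complex.norm_real, Real.norm_of_nonneg ht0.le, le_div_iff₀ ht0, one_mul]
    exact ht.2.trans hz

/-- `P` is the monic polynomial for which the finite Blaschke product `z P / P^*` has derivative
`s M M^* / (P^*) ^ 2`, that is, has the roots of `M` as its critical points in the disk. -/
structure IsHeinsSolution (M P : ℂ[X]) (s : ℝ) : Prop where
  monic : P.Monic
  natDegree_eq : P.natDegree = M.natDegree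
  rootsInUnitDisk : RootsInUnitDisk P
  eq : heinsWronskian M.natDegree P P = C (s : ℂ) * (M * conjReflect M.natDegree M)

lemma heinsWronskian_self_ne_zero (hP : P.Monic) : heinsWronskian P.natDegree P P ≠ 0 := by
  refine wronskian_ne_zero_of_eval_eq_zero (mul_ne_zero X_ne_zero hP.ne_zero) (a := 0) (by simp) ?_
  rw [eval_zero_conjReflect, hP.coeff_natDegree, map_one]
  exact one_ne_zero

lemma IsHeinsSolution.ne_zero {s : ℝ} (h : IsHeinsSolution M P s) : s ≠ 0 := by
  rintro rfl
  refine heinsWronskian_self_ne_zero h.monic ?_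
  rw [h.natDegree_eq, h.eq, Complex.ofReal_zero, C_0, zero_mul]

lemma isHeinsSolution_X_pow (n : ℕ) : IsHeinsSolution (X ^ n) (X ^ n) (n + 1) where
  monic := monic_X_pow n
  natDegree_eq := rfl
  rootsInUnitDisk z hz := by
    rw [eval_pow, eval_X]
    exact pow_ne_zero _ (norm_pos_iff.1 (one_pos.trans_le hz))
  eq := by
    have hstar : conjReflect n (X ^ n) = 1 := by
      rw [conjReflect, Polynomial.map_pow, map_X, reflect_monomial, revAt_le le_rfl, Nat.sub_self,
        pow_zero]
    rw [natDegree_X_pow, heinsWronskian, hstar, wronskian, derivative_one, ← pow_succ',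
      derivative_X_pow]
    simp

/-- A limit of solutions has its roots in the closed disk, by the lower bound
`pow_natDegree_le_norm_eval`; the equation itself keeps them off the circle. -/
lemma isHeinsSolution_of_pow_le_norm_eval (hM : RootsInUnitDisk M) (hP : P.Monic)
    (hdeg : P.natDegree = M.natDegree)
    (hlower : ∀ z, 1 < ‖z‖ → (‖z‖ - 1) ^ M.natDegree ≤ ‖P.eval z‖) {s : ℝ}
    (heq : heinsWronskian M.natDegree P P = C (s : ℂ) * (M * conjReflect M.natDegree M)) :
    IsHeinsSolution M P s := by
  refine ⟨hP, hdeg, fun z hz hPz ↦ ?_, heq⟩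
  rcases hz.lt_or_eq with hz | hz
  · have := (pow_pos (sub_pos.2 hz) _).trans_le (hlower z hz)
    rw [hPz, norm_zero] at this
    exact this.false
  · have hs : (s : ℂ) ≠ 0 := by
      rintro hs
      refine heinsWronskian_self_ne_zero hP ?_
      rw [hdeg, heq, hs, C_0, zero_mul]
    have hstar : (conjReflect M.natDegree P).eval z = 0 := by
      rw [eval_conjReflect_of_norm_eq_one hdeg.le hz.symm, hPz, map_zero, mul_zero]
    have hMstar : (conjReflect M.natDegree M).eval z ≠ 0 := by
      rw [← norm_ne_zero_iff, norm_eval_conjReflect_of_norm_eq_one le_rfl hz.symm]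
      exact norm_ne_zero_iff.2 (hM z hz.le)
    have heval := congrArg (eval z) heq
    simp only [heinsWronskian, wronskian, eval_sub, eval_mul, eval_C, hstar, hPz, zero_mul,
      mul_zero, sub_zero] at heval
    exact mul_ne_zero hs (mul_ne_zero (hM z hz.le) hMstar) heval.symm

end HeinsEquation

section ContDiffCoeff

open Polynomial

variable {E : Type*} [NormedAddCommGroup E] [NormedSpace ℝ E] {F G : E → ℂ[X]}

lemma contDiff_coeff_mul (hF : ∀ k, ContDiff ℝ 1 fun x ↦ (F x).coeff k)
    (hG : ∀ k, ContDiff ℝ 1 fun x ↦ (G x).coeff k) (k : ℕ) :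
    ContDiff ℝ 1 fun x ↦ (F x * G x).coeff k := by
  simp only [coeff_mul]
  exact ContDiff.sum fun ij _ ↦ (hF ij.1).mul (hG ij.2)

lemma contDiff_coeff_derivative (hF : ∀ k, ContDiff ℝ 1 fun x ↦ (F x).coeff k) (k : ℕ) :
    ContDiff ℝ 1 fun x ↦ (derivative (F x)).coeff k := by
  simp only [coeff_derivative]
  exact (hF (k + 1)).mul contDiff_const

lemma contDiff_coeff_conjReflect (hF : ∀ k, ContDiff ℝ 1 fun x ↦ (F x).coeff k) (n k : ℕ) :
    ContDiff ℝ 1 fun x ↦ (conjReflect n (F x)).coeff k := by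
  simp only [coeff_conjReflect]
  exact Complex.conjCLE.contDiff.comp (hF (revAt n k))

lemma contDiff_coeff_heinsWronskian_self (hF : ∀ k, ContDiff ℝ 1 fun x ↦ (F x).coeff k)
    (n k : ℕ) : ContDiff ℝ 1 fun x ↦ (heinsWronskian n (F x) (F x)).coeff k := by
  have hX := contDiff_coeff_mul (F := fun _ : E ↦ X) (fun _ ↦ contDiff_const) hF
  have hstar := contDiff_coeff_conjReflect hF n
  simp only [heinsWronskian, wronskian, coeff_sub]
  exact (contDiff_coeff_mul hstar (contDiff_coeff_derivative hX) k).sub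
    (contDiff_coeff_mul (contDiff_coeff_derivative hstar) hX k)

end ContDiffCoeff

section Continuation

open Polynomial

variable {n : ℕ} {P M : ℂ[X]}

/-- The monic polynomial of degree `n` with lower coefficients `a`. -/
noncomputable def monicOfFn (n : ℕ) (a : Fin n → ℂ) : ℂ[X] :=
  X ^ n + ofFn n a

lemma monic_monicOfFn (a : Fin n → ℂ) : (monicOfFn n a).Monic :=
  monic_X_pow_add (ofFn_degree_lt a)

lemma natDegree_monicOfFn (a : Fin n → ℂ) : (monicOfFn n a).natDegree = n := by
  rw [monicOfFn, natDegree_add_eq_left_of_degree_lt, natDegree_X_pow]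
  rw [degree_X_pow]
  exact ofFn_degree_lt a

lemma coeff_monicOfFn (a : Fin n → ℂ) (k : Fin n) : (monicOfFn n a).coeff k = a k := by
  rw [monicOfFn, coeff_add, coeff_X_pow, if_neg k.2.ne, ofFn_coeff_eq_val_of_lt _ k.2, zero_add]

lemma monicOfFn_coeff (hP : P.Monic) (hdeg : P.natDegree = n) :
    monicOfFn n (fun k ↦ P.coeff k) = P := by
  ext k
  rw [monicOfFn, coeff_add, coeff_X_pow]
  rcases lt_trichotomy k n with hk | rfl | hk
  · rw [if_neg hk.ne, ofFn_coeff_eq_val_of_lt _ hk, zero_add]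
  · rw [if_pos rfl, ofFn_coeff_eq_zero_of_ge _ le_rfl, add_zero, ← hdeg, hP.coeff_natDegree]
  · rw [if_neg hk.ne', ofFn_coeff_eq_zero_of_ge _ hk.le, add_zero,
      coeff_eq_zero_of_natDegree_lt (hdeg.trans_lt hk)]

lemma monicOfFn_add_smul (a b : Fin n → ℂ) (ε : ℝ) :
    monicOfFn n (a + ε • b) = monicOfFn n a + C (ε : ℂ) * ofFn n b := by
  rw [monicOfFn, map_add, ← add_assoc, ← smul_eq_C_mul, ← map_smul]
  rfl

lemma contDiff_coeff_monicOfFn (k : ℕ) : ContDiff ℝ 1 fun a ↦ (monicOfFn n a).coeff k := by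
  simp only [monicOfFn, coeff_add]
  refine contDiff_const.add ?_
  rcases lt_or_ge k n with hk | hk
  · simp only [ofFn_coeff_eq_val_of_lt _ hk]
    exact contDiff_apply ℝ ℂ _
  · simp only [ofFn_coeff_eq_zero_of_ge _ hk]
    exact contDiff_const

lemma continuous_eval_monicOfFn :
    Continuous fun q : (Fin n → ℂ) × ℂ ↦ (monicOfFn n q.1).eval q.2 := by
  simp only [eval_eq_sum_range' (Nat.lt_succ_of_le (natDegree_monicOfFn _).le)]
  exact continuous_finsetSum _ fun k _ ↦
    ((contDiff_coeff_monicOfFn k).continuous.comp continuous_fst).mul (continuous_snd.pow k)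

lemma continuous_eval_conjReflect_monicOfFn :
    Continuous fun q : (Fin n → ℂ) × ℂ ↦ (conjReflect n (monicOfFn n q.1)).eval q.2 := by
  simp only [eval_eq_sum_range'
    (Nat.lt_succ_of_le (natDegree_conjReflect_le (natDegree_monicOfFn _).le))]
  exact continuous_finsetSum _ fun k _ ↦ ((contDiff_coeff_conjReflect
    contDiff_coeff_monicOfFn n k).continuous.comp continuous_fst).mul (continuous_snd.pow k)

lemma rootsInUnitDisk_of_eval_conjReflect_ne_zero (hP : P.natDegree ≤ n)
    (hstar : ∀ z, ‖z‖ ≤ 1 → (conjReflect n P).eval z ≠ 0) : RootsInUnitDisk P := by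
  intro z hz hPz
  have hz0 : z ≠ 0 := norm_pos_iff.1 (one_pos.trans_le hz)
  have hw0 : (conj z)⁻¹ ≠ 0 := inv_ne_zero ((_root_.map_ne_zero _).2 hz0)
  refine hstar (conj z)⁻¹ ?_ ?_
  · rw [norm_inv, RCLike.norm_conj]
    exact inv_le_one_of_one_le₀ hz
  · rw [eval_conjReflect hP hw0, map_inv₀, Complex.conj_conj, inv_inv, hPz, map_zero, mul_zero]

lemma eventually_rootsInUnitDisk {a : Fin n → ℂ} (ha : RootsInUnitDisk (monicOfFn n a)) :
    ∀ᶠ b in 𝓝 a, RootsInUnitDisk (monicOfFn n b) := by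
  have hcompact := isCompact_closedBall (0 : ℂ) 1
  have hne : ∀ᶠ b in 𝓝 a, ∀ z ∈ closedBall (0 : ℂ) 1,
      (conjReflect n (monicOfFn n b)).eval z ≠ 0 := by
    refine hcompact.eventually_forall_of_forall_eventually fun z hz ↦
      continuous_eval_conjReflect_monicOfFn.continuousAt.eventually_ne ?_
    have hstar := ha.eval_conjReflect_ne_zero (monic_monicOfFn a) (mem_closedBall_zero_iff.1 hz)
    rwa [natDegree_monicOfFn] at hstar
  filter_upwards [hne] with b hb
  exact rootsInUnitDisk_of_eval_conjReflect_ne_zero (natDegree_monicOfFn b).le fun z hz ↦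
    hb z (mem_closedBall_zero_iff.2 hz)

/-- The failure of the equation of `IsHeinsSolution` for `M.scaleRoots t`, as a function of the
lower coefficients of the monic unknown, of the scalar `s` and of `t`. -/
noncomputable def heinsDefect (M : ℂ[X]) (p : ((Fin M.natDegree → ℂ) × ℝ) × ℝ) : ℂ[X] :=
  heinsWronskian M.natDegree (monicOfFn _ p.1.1) (monicOfFn _ p.1.1) -
    C (p.1.2 : ℂ) * (M.scaleRoots (p.2 : ℂ) * conjReflect M.natDegree (M.scaleRoots (p.2 : ℂ)))

/-- The real coordinates of `heinsDefect`, which is invariant under `conjReflect`, together with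
the deformation parameter. -/
noncomputable def heinsMap (M : ℂ[X]) (p : ((Fin M.natDegree → ℂ) × ℝ) × ℝ) :
    ((Fin M.natDegree → ℂ) × ℝ) × ℝ :=
  ((fun k ↦ (heinsDefect M p).coeff k, ((heinsDefect M p).coeff M.natDegree).re), p.2)

lemma contDiff_coeff_scaleRoots (M : ℂ[X]) (k : ℕ) :
    ContDiff ℝ 1 fun t : ℝ ↦ (M.scaleRoots (t : ℂ)).coeff k := by
  simp only [coeff_scaleRoots]
  exact contDiff_const.mul (Complex.ofRealCLM.contDiff.pow _)

lemma contDiff_coeff_heinsDefect (M : ℂ[X]) (k : ℕ) :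
    ContDiff ℝ 1 fun p ↦ (heinsDefect M p).coeff k := by
  simp only [heinsDefect, coeff_sub, coeff_C_mul]
  have hP (k : ℕ) : ContDiff ℝ 1 fun p : ((Fin M.natDegree → ℂ) × ℝ) × ℝ ↦
      (monicOfFn _ p.1.1).coeff k := (contDiff_coeff_monicOfFn k).comp (by fun_prop)
  have hM (k : ℕ) : ContDiff ℝ 1 fun p : ((Fin M.natDegree → ℂ) × ℝ) × ℝ ↦
      (M.scaleRoots (p.2 : ℂ)).coeff k := (contDiff_coeff_scaleRoots M k).comp contDiff_snd
  exact (contDiff_coeff_heinsWronskian_self hP _ k).sub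
    ((Complex.ofRealCLM.contDiff.comp (by fun_prop)).mul
      (contDiff_coeff_mul hM (contDiff_coeff_conjReflect hM _) k))

lemma contDiff_heinsMap (M : ℂ[X]) : ContDiff ℝ 1 (heinsMap M) :=
  ((contDiff_pi.2 fun _ ↦ contDiff_coeff_heinsDefect M _).prodMk
    (Complex.reCLM.contDiff.comp (contDiff_coeff_heinsDefect M _))).prodMk contDiff_snd

lemma conjReflect_mul_conjReflect_self (hM : M.natDegree ≤ n) :
    conjReflect (n + n) (M * conjReflect n M) = M * conjReflect n M := by
  rw [conjReflect_mul hM (natDegree_conjReflect_le hM), conjReflect_conjReflect, mul_comm]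

lemma natDegree_mul_conjReflect_self_le (hM : M.natDegree ≤ n) :
    (M * conjReflect n M).natDegree ≤ n + n :=
  natDegree_mul_le_of_le hM (natDegree_conjReflect_le hM)

lemma eq_C_mul_of_coeff_sub_eq_zero {A : ℂ[X]} (hM : M.natDegree ≤ n) (hA : A.natDegree ≤ n + n)
    (hself : conjReflect (n + n) A = A) {s : ℝ}
    (hlow : ∀ k < n, (A - C (s : ℂ) * (M * conjReflect n M)).coeff k = 0)
    (hmid : ((A - C (s : ℂ) * (M * conjReflect n M)).coeff n).re = 0) :
    A = C (s : ℂ) * (M * conjReflect n M) := by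
  refine sub_eq_zero.1 (eq_zero_of_conjReflect_eq_self ?_ ?_ hlow hmid)
  · exact (natDegree_sub_le _ _).trans
      (max_le hA ((natDegree_C_mul_le _ _).trans (natDegree_mul_conjReflect_self_le hM)))
  · rw [sub_eq_add_neg, ← neg_mul, ← C_neg, conjReflect_add, conjReflect_C_mul, hself,
      conjReflect_mul_conjReflect_self hM, map_neg, Complex.conj_ofReal]

lemma heinsDefect_eq_zero {p : ((Fin M.natDegree → ℂ) × ℝ) × ℝ}
    (hlow : ∀ k < M.natDegree, (heinsDefect M p).coeff k = 0)
    (hmid : ((heinsDefect M p).coeff M.natDegree).re = 0) : heinsDefect M p = 0 :=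
  have hdeg := (natDegree_monicOfFn p.1.1).le
  sub_eq_zero.2 <| eq_C_mul_of_coeff_sub_eq_zero (natDegree_scaleRoots M _).le
    (natDegree_heinsWronskian_le hdeg hdeg) (conjReflect_heinsWronskian hdeg hdeg) hlow hmid

lemma heinsDefect_eq_zero_of_heinsMap_eq {p : ((Fin M.natDegree → ℂ) × ℝ) × ℝ} {t : ℝ}
    (hp : heinsMap M p = (0, t)) : heinsDefect M p = 0 := by
  have hfst : (heinsMap M p).1 = 0 := congrArg Prod.fst hp
  obtain ⟨hlow, hmid⟩ := Prod.ext_iff.1 hfst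
  exact heinsDefect_eq_zero (fun k hk ↦ congrFun hlow ⟨k, hk⟩) hmid

/-- The linearization of `heinsDefect` in the first two variables. -/
noncomputable def heinsVariation (M : ℂ[X]) (p : ((Fin M.natDegree → ℂ) × ℝ) × ℝ)
    (v : (Fin M.natDegree → ℂ) × ℝ) : ℂ[X] :=
  heinsWronskian M.natDegree (ofFn _ v.1) (monicOfFn _ p.1.1) +
    heinsWronskian M.natDegree (monicOfFn _ p.1.1) (ofFn _ v.1) -
    C (v.2 : ℂ) * (M.scaleRoots (p.2 : ℂ) * conjReflect M.natDegree (M.scaleRoots (p.2 : ℂ)))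

lemma heinsDefect_add_smul (p : ((Fin M.natDegree → ℂ) × ℝ) × ℝ)
    (v : (Fin M.natDegree → ℂ) × ℝ) (ε : ℝ) :
    heinsDefect M (p + ε • (v, 0)) = heinsDefect M p + C (ε : ℂ) * heinsVariation M p v +
      C (ε : ℂ) ^ 2 * heinsWronskian M.natDegree (ofFn _ v.1) (ofFn _ v.1) := by
  simp only [heinsDefect, heinsVariation, Prod.fst_add, Prod.snd_add, Prod.smul_fst,
    Prod.smul_snd, smul_eq_mul, mul_zero, add_zero, monicOfFn_add_smul, heinsWronskian_add,
    heinsWronskian_C_mul_left, heinsWronskian_ofReal_mul_right, Complex.ofReal_add,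
    Complex.ofReal_mul, C_add, C_mul]
  ring

lemma hasDerivAt_coeff_heinsDefect (p : ((Fin M.natDegree → ℂ) × ℝ) × ℝ)
    (v : (Fin M.natDegree → ℂ) × ℝ) (k : ℕ) :
    HasDerivAt (fun ε : ℝ ↦ (heinsDefect M (p + ε • (v, 0))).coeff k)
      ((heinsVariation M p v).coeff k) 0 := by
  simp only [heinsDefect_add_smul, coeff_add, ← C_pow, coeff_C_mul]
  have hε : HasDerivAt (fun ε : ℝ ↦ (ε : ℂ)) 1 0 := Complex.ofRealCLM.hasDerivAt
  simpa using ((hasDerivAt_const _ _).fun_add (hε.mul_const _)).fun_add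
    ((hε.fun_pow 2).mul_const _)

lemma heinsVariation_coeff_eq_zero_of_fderiv_heinsMap_eq_zero
    {p : ((Fin M.natDegree → ℂ) × ℝ) × ℝ} {v : (Fin M.natDegree → ℂ) × ℝ}
    (hv : fderiv ℝ (heinsMap M) p (v, 0) = 0) :
    (∀ k < M.natDegree, (heinsVariation M p v).coeff k = 0) ∧
      ((heinsVariation M p v).coeff M.natDegree).re = 0 := by
  have hdiff := ((contDiff_heinsMap M).differentiable one_ne_zero p).hasFDerivAt
  have hline := hdiff.hasLineDerivAt (v, 0)
  rw [hv, HasLineDerivAt] at hline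
  constructor
  · intro k hk
    exact (hasDerivAt_coeff_heinsDefect p v k).unique
      (hasDerivAt_pi.1 hline.fst.fst ⟨k, hk⟩)
  · exact (Complex.reCLM.hasFDerivAt.comp_hasDerivAt 0
      (hasDerivAt_coeff_heinsDefect p v M.natDegree)).unique hline.fst.snd

lemma fderiv_heinsMap_snd (p v : ((Fin M.natDegree → ℂ) × ℝ) × ℝ) :
    (fderiv ℝ (heinsMap M) p v).2 = v.2 := by
  have hdiff := ((contDiff_heinsMap M).differentiable one_ne_zero p).hasFDerivAt
  exact DFunLike.congr_fun (hdiff.snd.unique hasFDerivAt_snd) v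

lemma eq_zero_of_heinsVariation_eq_zero {p : ((Fin M.natDegree → ℂ) × ℝ) × ℝ}
    (hroots : RootsInUnitDisk (monicOfFn _ p.1.1)) (hp : heinsDefect M p = 0)
    {v : (Fin M.natDegree → ℂ) × ℝ} (hv : heinsVariation M p v = 0) : v = 0 := by
  have hmonic := monic_monicOfFn p.1.1
  have hdeg := natDegree_monicOfFn p.1.1
  have hs : p.1.2 ≠ 0 := by
    intro hs
    refine heinsWronskian_self_ne_zero hmonic ?_
    rw [hdeg, sub_eq_zero.1 hp, hs, Complex.ofReal_zero, C_0, zero_mul]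
  have hvar := eq_zero_of_variation_eq_mul hmonic hroots (R := ofFn _ v.1)
    (hdeg.symm ▸ ofFn_degree_lt v.1) (c := v.2 / p.1.2) <| by
      rw [hdeg, sub_eq_zero.1 hv, sub_eq_zero.1 hp, ← mul_assoc (C _) (C _), ← C_mul,
        ← Complex.ofReal_mul, div_mul_cancel₀ _ hs]
  refine Prod.ext (injective_ofFn _ (hvar.1.trans (map_zero _).symm)) ?_
  exact (div_eq_zero_iff.1 hvar.2).resolve_right hs

lemma range_fderiv_heinsMap_eq_top {p : ((Fin M.natDegree → ℂ) × ℝ) × ℝ}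
    (hroots : RootsInUnitDisk (monicOfFn _ p.1.1)) (hp : heinsDefect M p = 0) :
    (fderiv ℝ (heinsMap M) p).range = ⊤ := by
  rw [LinearMap.range_eq_top, ← LinearMap.injective_iff_surjective, injective_iff_map_eq_zero]
  rintro ⟨v, r⟩ hv
  obtain rfl : r = 0 := (fderiv_heinsMap_snd p (v, r)).symm.trans (congrArg Prod.snd hv)
  obtain ⟨hlow, hmid⟩ := heinsVariation_coeff_eq_zero_of_fderiv_heinsMap_eq_zero hv
  have hP := (natDegree_monicOfFn p.1.1).le
  have hR : (ofFn _ v.1).natDegree ≤ M.natDegree :=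
    natDegree_le_of_degree_le (ofFn_degree_lt v.1).le
  have hvar : heinsVariation M p v = 0 := sub_eq_zero.2 <|
    eq_C_mul_of_coeff_sub_eq_zero (natDegree_scaleRoots M _).le
      ((natDegree_add_le _ _).trans (max_le (natDegree_heinsWronskian_le hR hP)
        (natDegree_heinsWronskian_le hP hR)))
      (by rw [conjReflect_add, conjReflect_heinsWronskian hR hP, conjReflect_heinsWronskian hP hR,
        add_comm]) hlow hmid
  rw [eq_zero_of_heinsVariation_eq_zero hroots hp hvar]
  rfl

lemma map_nhds_heinsMap {p : ((Fin M.natDegree → ℂ) × ℝ) × ℝ}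
    (hroots : RootsInUnitDisk (monicOfFn _ p.1.1)) (hp : heinsDefect M p = 0) :
    map (heinsMap M) (𝓝 p) = 𝓝 (0, p.2) := by
  have hstrict := (contDiff_heinsMap M).contDiffAt.hasStrictFDerivAt (x := p) one_ne_zero
  rw [hstrict.map_nhds_eq_of_surj (range_fderiv_heinsMap_eq_top hroots hp), heinsMap, hp]
  rfl

lemma eventually_exists_heinsMap_eq {p : ((Fin M.natDegree → ℂ) × ℝ) × ℝ}
    (hroots : RootsInUnitDisk (monicOfFn _ p.1.1)) (hp : heinsDefect M p = 0) :
    ∀ᶠ t in 𝓝 p.2, ∃ q : ((Fin M.natDegree → ℂ) × ℝ) × ℝ,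
      RootsInUnitDisk (monicOfFn _ q.1.1) ∧ heinsMap M q = (0, t) := by
  have hgood := ((continuous_fst.comp continuous_fst).tendsto p).eventually
    (eventually_rootsInUnitDisk hroots)
  have himage := image_mem_map (m := heinsMap M) hgood
  rw [map_nhds_heinsMap hroots hp] at himage
  exact (Continuous.prodMk_right 0).tendsto p.2 himage

lemma isHeinsSolution_monicOfFn {p : ((Fin M.natDegree → ℂ) × ℝ) × ℝ}
    (hroots : RootsInUnitDisk (monicOfFn _ p.1.1)) (hp : heinsDefect M p = 0) :
    IsHeinsSolution (M.scaleRoots (p.2 : ℂ)) (monicOfFn _ p.1.1) p.1.2 where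
  monic := monic_monicOfFn _
  natDegree_eq := by rw [natDegree_monicOfFn, natDegree_scaleRoots]
  rootsInUnitDisk := hroots
  eq := by
    rw [natDegree_scaleRoots]
    exact sub_eq_zero.1 hp

lemma IsHeinsSolution.exists_heinsDefect_eq_zero {s t : ℝ}
    (h : IsHeinsSolution (M.scaleRoots (t : ℂ)) P s) :
    ∃ a, monicOfFn M.natDegree a = P ∧ heinsDefect M ((a, s), t) = 0 := by
  have hdeg := h.natDegree_eq.trans (natDegree_scaleRoots M _)
  have hP := monicOfFn_coeff h.monic hdeg
  have heq := h.eq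
  rw [natDegree_scaleRoots] at heq
  exact ⟨_, hP, by rw [heinsDefect, hP, heq, sub_self]⟩

/-- The parameters `t` for which the critical points of `M.scaleRoots t` can be prescribed. -/
def solvableScales (M : ℂ[X]) : Set ℝ :=
  {t | ∃ P s, IsHeinsSolution (M.scaleRoots (t : ℂ)) P s}

lemma solvableScales_mem_nhds {t : ℝ} (ht : t ∈ solvableScales M) : solvableScales M ∈ 𝓝 t := by
  obtain ⟨P, s, h⟩ := ht
  obtain ⟨a, rfl, ha⟩ := h.exists_heinsDefect_eq_zero
  filter_upwards [eventually_exists_heinsMap_eq (p := ((a, s), t)) h.rootsInUnitDisk ha] with t'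
    ⟨q, hq, hqt⟩
  have hsnd : q.2 = t' := congrArg Prod.snd hqt
  rw [← hsnd]
  exact ⟨_, _, isHeinsSolution_monicOfFn hq (heinsDefect_eq_zero_of_heinsMap_eq hqt)⟩

end Continuation

section HeinsExistence

open Polynomial

variable {P M : ℂ[X]}

/-- The scalar `s` forced on a solution `(monicOfFn _ q.1, s)` of the equation for
`M.scaleRoots q.2` by the middle coefficient of that equation. -/
noncomputable def heinsScalar (M : ℂ[X]) (q : (Fin M.natDegree → ℂ) × ℝ) : ℝ :=
  ((heinsWronskian M.natDegree (monicOfFn _ q.1) (monicOfFn _ q.1)).coeff M.natDegree).re /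
    ((M.scaleRoots (q.2 : ℂ) * conjReflect M.natDegree (M.scaleRoots (q.2 : ℂ))).coeff
      M.natDegree).re

lemma re_coeff_mul_conjReflect_self_pos (hM : M.Monic) :
    0 < ((M * conjReflect M.natDegree M).coeff M.natDegree).re := by
  rw [coeff_mul_conjReflect_self, Complex.ofReal_re]
  refine Finset.sum_pos' (fun _ _ ↦ by positivity)
    ⟨M.natDegree, Finset.self_mem_range_succ _, ?_⟩
  rw [hM.coeff_natDegree]
  norm_num

lemma re_coeff_scaleRoots_pos (hM : M.Monic) (t : ℝ) :
    0 < ((M.scaleRoots (t : ℂ) * conjReflect M.natDegree (M.scaleRoots (t : ℂ))).coeff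
      M.natDegree).re := by
  have hpos := re_coeff_mul_conjReflect_self_pos ((monic_scaleRoots_iff (t : ℂ)).2 hM)
  rwa [natDegree_scaleRoots] at hpos

lemma continuous_heinsScalar (hM : M.Monic) : Continuous (heinsScalar M) := by
  refine Continuous.div ?_ ?_ fun q ↦ (re_coeff_scaleRoots_pos hM q.2).ne'
  · exact Complex.continuous_re.comp
      ((contDiff_coeff_heinsWronskian_self contDiff_coeff_monicOfFn _ _).continuous.comp
        continuous_fst)
  · exact Complex.continuous_re.comp
      ((contDiff_coeff_mul (contDiff_coeff_scaleRoots M)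
        (contDiff_coeff_conjReflect (contDiff_coeff_scaleRoots M) _) _).continuous.comp
        continuous_snd)

lemma eq_heinsScalar (hM : M.Monic) {q : (Fin M.natDegree → ℂ) × ℝ} {s : ℝ}
    (hq : heinsDefect M ((q.1, s), q.2) = 0) : s = heinsScalar M q := by
  rw [heinsScalar, eq_div_iff (re_coeff_scaleRoots_pos hM q.2).ne', sub_eq_zero.1 hq, coeff_C_mul,
    Complex.re_ofReal_mul]

/-- A compact set of parameters that contains all solutions and consists of solutions. -/
def heinsParameters (M : ℂ[X]) : Set ((Fin M.natDegree → ℂ) × ℝ) :=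
  closedBall 0 (M.natDegree.choose (M.natDegree / 2)) ×ˢ Set.Icc 0 1 ∩
    ({q | ∀ k, (heinsDefect M ((q.1, heinsScalar M q), q.2)).coeff k = 0} ∩
      {q | ∀ z : ℂ, 1 < ‖z‖ → (‖z‖ - 1) ^ M.natDegree ≤ ‖(monicOfFn _ q.1).eval z‖})

lemma isCompact_heinsParameters (hM : M.Monic) : IsCompact (heinsParameters M) := by
  refine IsCompact.inter_right ((isCompact_closedBall _ _).prod isCompact_Icc) ?_
  have hcoeff (k : ℕ) : Continuous fun q : (Fin M.natDegree → ℂ) × ℝ ↦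
      (heinsDefect M ((q.1, heinsScalar M q), q.2)).coeff k :=
    (contDiff_coeff_heinsDefect M k).continuous.comp
      ((continuous_fst.prodMk (continuous_heinsScalar hM)).prodMk continuous_snd)
  have heval (z : ℂ) : Continuous fun q : (Fin M.natDegree → ℂ) × ℝ ↦
      ‖(monicOfFn M.natDegree q.1).eval z‖ :=
    (continuous_eval_monicOfFn.comp (continuous_fst.prodMk continuous_const)).norm
  refine IsClosed.inter ?_ ?_
  · simp only [Set.ofPred_forall]
    exact isClosed_iInter fun k ↦ isClosed_eq (hcoeff k) continuous_const
  · simp only [Set.ofPred_forall]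
    exact isClosed_iInter fun z ↦ isClosed_iInter fun _ ↦ isClosed_le continuous_const (heval z)

lemma snd_image_heinsParameters (hM : M.Monic) (hroots : RootsInUnitDisk M) :
    Prod.snd '' heinsParameters M = solvableScales M ∩ Set.Icc 0 1 := by
  ext t
  constructor
  · rintro ⟨q, ⟨⟨-, ht⟩, hdefect, hlower⟩, rfl⟩
    refine ⟨⟨_, heinsScalar M q, isHeinsSolution_of_pow_le_norm_eval (hroots.scaleRoots hM ht)
      (monic_monicOfFn q.1) ?_ ?_ ?_⟩, ht⟩
    · rw [natDegree_monicOfFn, natDegree_scaleRoots]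
    · rwa [natDegree_scaleRoots]
    · rw [natDegree_scaleRoots]
      exact sub_eq_zero.1 (Polynomial.ext hdefect)
  · rintro ⟨⟨P, s, h⟩, ht⟩
    obtain ⟨a, rfl, ha⟩ := h.exists_heinsDefect_eq_zero
    have hdeg := natDegree_monicOfFn a
    refine ⟨(a, t), ⟨⟨?_, ht⟩, fun k ↦ ?_, fun z hz ↦ ?_⟩, rfl⟩
    · rw [mem_closedBall_zero_iff, pi_norm_le_iff_of_nonneg (Nat.cast_nonneg _)]
      intro k
      have hbound := norm_coeff_le_choose h.monic h.rootsInUnitDisk k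
      rwa [hdeg, coeff_monicOfFn] at hbound
    · rw [← eq_heinsScalar hM (q := (a, t)) ha, ha, coeff_zero]
    · have := pow_natDegree_le_norm_eval h.monic h.rootsInUnitDisk hz.le
      rwa [hdeg] at this

theorem exists_isHeinsSolution (hM : M.Monic) (hroots : RootsInUnitDisk M) :
    ∃ P s, IsHeinsSolution M P s := by
  have hclosed : IsClosed (solvableScales M ∩ Set.Icc 0 1) := by
    rw [← snd_image_heinsParameters hM hroots]
    exact ((isCompact_heinsParameters hM).image continuous_snd).isClosed
  have hzero : 0 ∈ solvableScales M := by
    refine ⟨X ^ M.natDegree, M.natDegree + 1, ?_⟩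
    rw [Complex.ofReal_zero, scaleRoots_zero, hM.leadingCoeff, one_smul]
    exact_mod_cast isHeinsSolution_X_pow M.natDegree
  have hone := hclosed.Icc_subset_of_forall_mem_nhdsWithin hzero
    (fun t ht ↦ mem_nhdsWithin_of_mem_nhds (solvableScales_mem_nhds ht.1))
    (Set.right_mem_Icc.2 zero_le_one)
  simpa [solvableScales, scaleRoots_one] using hone

/-- Heins' theorem. -/
theorem exists_finiteBlaschke_deriv_eq_mul_eval (hM : M.Monic) (hroots : RootsInUnitDisk M) :
    ∃ B ψ : ℂ → ℂ, ∀ z, ‖z‖ ≤ 1 → AnalyticAt ℂ B z ∧ AnalyticAt ℂ ψ z ∧ ψ z ≠ 0 ∧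
      deriv B z = ψ z * M.eval z ∧ ‖B z‖ ≤ ‖z‖ ∧ (‖z‖ = 1 → ‖B z‖ = 1) := by
  obtain ⟨P, s, h⟩ := exists_isHeinsSolution hM hroots
  set n := M.natDegree with hn
  have hP (z : ℂ) (hz : ‖z‖ ≤ 1) : (conjReflect n P).eval z ≠ 0 :=
    hn ▸ h.natDegree_eq ▸ h.rootsInUnitDisk.eval_conjReflect_ne_zero h.monic hz
  have hs : (s : ℂ) ≠ 0 := Complex.ofReal_ne_zero.2 h.ne_zero
  refine ⟨blaschkeQuotient n P,
    fun z ↦ s * (conjReflect n M).eval z / (conjReflect n P).eval z ^ 2, fun z hz ↦ ?_⟩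
  refine ⟨?_, ?_, ?_, ?_, ?_, ?_⟩
  · exact analyticAt_blaschkeQuotient (hP z hz)
  · exact (analyticAt_const.fun_mul (analyticAt_eval _ z)).fun_div
      ((analyticAt_eval _ z).fun_pow 2) (pow_ne_zero 2 (hP z hz))
  · exact div_ne_zero (mul_ne_zero hs (hroots.eval_conjReflect_ne_zero hM hz))
      (pow_ne_zero 2 (hP z hz))
  · rw [deriv_blaschkeQuotient (hP z hz), h.eq]
    simp only [eval_mul, eval_C]
    ring
  · exact norm_blaschkeQuotient_le h.natDegree_eq.le hP hz
  · exact fun hz1 ↦ norm_blaschkeQuotient_of_norm_eq_one h.natDegree_eq.le hz1 (hP z hz)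

end HeinsExistence

/-! ### Heins maps and Ahlfors' lemma -/

lemma exists_analyticOnNhd_mul_eventuallyEq {U : Set ℂ} {P S : ℂ → ℂ}
    (hP : AnalyticOnNhd ℂ P U) (hS : AnalyticOnNhd ℂ S U)
    (hS_ne_top : ∀ z ∈ U, analyticOrderAt S z ≠ ⊤)
    (hle : ∀ z ∈ U, analyticOrderAt S z ≤ analyticOrderAt P z) :
    ∃ θ : ℂ → ℂ, AnalyticOnNhd ℂ θ U ∧ ∀ z ∈ U, P =ᶠ[𝓝 z] θ * S := by
  have hmero : MeromorphicOn (P / S) U := fun z hz ↦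
    (hP z hz).meromorphicAt.div (hS z hz).meromorphicAt
  have hθ : AnalyticOnNhd ℂ (toMeromorphicNFOn (P / S) U) U := fun z hz ↦ by
    rw [← (meromorphicNFOn_toMeromorphicNFOn _ _ hz).meromorphicOrderAt_nonneg_iff_analyticAt,
      meromorphicOrderAt_toMeromorphicNFOn hmero hz,
      meromorphicOrderAt_div (hP z hz).meromorphicAt (hS z hz).meromorphicAt,
      (hP z hz).meromorphicOrderAt_eq, (hS z hz).meromorphicOrderAt_eq]
    obtain ⟨k, hk⟩ := ENat.ne_top_iff_exists.1 (hS_ne_top z hz)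
    have hle_z := hle z hz
    rw [← hk] at hle_z ⊢
    cases hm : analyticOrderAt P z with
    | top => simp
    | coe m =>
      rw [hm, Nat.cast_le] at hle_z
      simp only [ENat.map_natCast]
      norm_cast
      omega
  refine ⟨_, hθ, fun z hz ↦ ?_⟩
  have hS_ne : ∀ᶠ w in 𝓝[≠] z, S w ≠ 0 :=
    (hS z hz).eventually_eq_zero_or_eventually_ne_zero.resolve_left
      (analyticOrderAt_eq_top.not.1 (hS_ne_top z hz))
  rw [← (hP z hz).continuousAt.eventuallyEq_nhds_iff_eventuallyEq_nhdsNE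
    ((hθ z hz).mul (hS z hz)).continuousAt]
  filter_upwards [hS_ne, hmero.toMeromorphicNFOn_eq_self_on_nhdsNE hz] with w hSw hθw
  rw [Pi.mul_apply, hθw, Pi.div_apply, div_mul_cancel₀ _ hSw]

lemma finite_setOf_eq_zero {K : Set ℂ} (hK : IsCompact K) {f : ℂ → ℂ}
    (hf : AnalyticOnNhd ℂ f K) (hf_ne_top : ∀ z ∈ K, analyticOrderAt f z ≠ ⊤) :
    {z ∈ K | f z = 0}.Finite := by
  refine Set.not_infinite.1 fun hinf ↦ ?_
  obtain ⟨x, hx, hacc⟩ := hinf.exists_accPt_of_subset_isCompact hK fun z hz ↦ hz.1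
  have hne := (hf x hx).eventually_eq_zero_or_eventually_ne_zero.resolve_left
    (analyticOrderAt_eq_top.not.1 (hf_ne_top x hx))
  obtain ⟨y, hy, hy_ne⟩ := ((accPt_iff_frequently_nhdsNE.1 hacc).and_eventually hne).exists
  exact hy_ne hy.2

lemma analyticOrderAt_eval {M : Polynomial ℂ} (hM : M ≠ 0) (z : ℂ) :
    analyticOrderAt (fun w ↦ M.eval w) z = M.rootMultiplicity z := by
  obtain ⟨q, hq, hdvd⟩ := M.exists_eq_pow_rootMultiplicity_mul_and_not_dvd hM z
  refine (analyticAt_eval M z).analyticOrderAt_eq_natCast.2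
    ⟨fun w ↦ q.eval w, analyticAt_eval q z, fun h ↦ hdvd (Polynomial.dvd_iff_isRoot.2 h), ?_⟩
  refine .of_forall fun w ↦ ?_
  conv_lhs => rw [hq]
  simp

lemma exists_monic_mul_eq {K : Set ℂ} (hK : IsCompact K) {p : ℂ → ℂ}
    (hp : AnalyticOnNhd ℂ p K) (hp_ne_top : ∀ z ∈ K, analyticOrderAt p z ≠ ⊤) :
    ∃ (M : Polynomial ℂ) (u : ℂ → ℂ), M.Monic ∧ (∀ a, M.IsRoot a → a ∈ K) ∧
      AnalyticOnNhd ℂ u K ∧ ∀ z ∈ K, u z ≠ 0 ∧ p z = u z * M.eval z := by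
  classical
  set Z := (finite_setOf_eq_zero hK hp hp_ne_top).toFinset
  have mem_Z (z : ℂ) : z ∈ Z ↔ z ∈ K ∧ p z = 0 := by simp [Z]
  set zeros : Multiset ℂ := ∑ a ∈ Z, analyticOrderNatAt p a • {a}
  set M : Polynomial ℂ := (zeros.map fun a ↦ Polynomial.X - Polynomial.C a).prod
  have hM : M.Monic := Polynomial.monic_multisetProd_X_sub_C zeros
  have hM_roots : M.roots = zeros := Polynomial.roots_multiset_prod_X_sub_C zeros
  have order_M : ∀ z ∈ K, analyticOrderAt (fun w ↦ M.eval w) z = analyticOrderAt p z := by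
    intro z hz
    rw [analyticOrderAt_eval hM.ne_zero, ← Polynomial.count_roots, hM_roots,
      ← Nat.cast_analyticOrderNatAt (hp_ne_top z hz)]
    have : z ∉ Z → analyticOrderNatAt p z = 0 := fun h ↦ by
      rw [analyticOrderNatAt, (hp z hz).analyticOrderAt_eq_zero.2 fun h0 ↦ h ((mem_Z z).2 ⟨hz, h0⟩)]
      rfl
    simpa [zeros, Multiset.count_sum', Multiset.count_singleton, eq_comm] using this
  obtain ⟨u, hu, hpu⟩ := exists_analyticOnNhd_mul_eventuallyEq hp
    (fun z _ ↦ analyticAt_eval M z) (fun z hz ↦ order_M z hz ▸ hp_ne_top z hz)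
    fun z hz ↦ (order_M z hz).le
  refine ⟨M, u, hM, fun a ha ↦ ?_, hu, fun z hz ↦ ⟨?_, (hpu z hz).eq_of_nhds⟩⟩
  · have ha : a ∈ zeros := hM_roots ▸ (Polynomial.mem_roots hM.ne_zero).2 ha
    obtain ⟨b, hb, hab⟩ := Multiset.mem_sum.1 ha
    rw [Multiset.mem_singleton.1 (Multiset.mem_of_mem_nsmul hab)]
    exact ((mem_Z b).1 hb).1
  · rw [← (hu z hz).analyticOrderAt_eq_zero]
    have h := analyticOrderAt_congr (hpu z hz)
    rw [analyticOrderAt_mul (hu z hz) (analyticAt_eval M z), order_M z hz] at h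
    exact ENat.add_left_injective_of_ne_top (hp_ne_top z hz) (by simp only [zero_add, ← h])

lemma rootsInUnitDisk_scaleRoots_inv {M : Polynomial ℂ} {r : ℝ} (hr : 0 < r)
    (hM : ∀ z, M.IsRoot z → ‖z‖ < r) : RootsInUnitDisk (M.scaleRoots (r : ℂ)⁻¹) := by
  have hrC : (r : ℂ)⁻¹ ≠ 0 := inv_ne_zero (by exact_mod_cast hr.ne')
  intro w hw hw0
  rw [← mul_inv_cancel_left₀ hrC w, inv_inv, Polynomial.scaleRoots_eval_mul] at hw0
  have hlt := hM _ ((mul_eq_zero.1 hw0).resolve_left (pow_ne_zero _ hrC))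
  rw [norm_mul, Complex.norm_of_nonneg hr.le] at hlt
  exact hlt.not_ge (le_mul_of_one_le_right hr.le hw)

/-- A map of the closed disk of radius `r` into the closed unit disk, sending boundary to boundary
and `0` to `0`, whose critical points are the zeros of `p`: the zero-free function `ψ` is the
quotient of `deriv F` by `p`. -/
structure IsHeinsMap (r : ℝ) (p F ψ : ℂ → ℂ) : Prop where
  analyticOnNhd : AnalyticOnNhd ℂ F (closedBall 0 r)
  analyticOnNhd_quotient : AnalyticOnNhd ℂ ψ (closedBall 0 r)
  quotient_ne_zero : ∀ z, ‖z‖ ≤ r → ψ z ≠ 0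
  deriv_eq : ∀ z, ‖z‖ ≤ r → deriv F z = ψ z * p z
  norm_le : ∀ z, ‖z‖ ≤ r → ‖F z‖ ≤ ‖z‖ / r
  norm_eq_one : ∀ z, ‖z‖ = r → ‖F z‖ = 1

lemma exists_isHeinsMap {r : ℝ} (hr : 0 < r) {p : ℂ → ℂ}
    (hp : AnalyticOnNhd ℂ p (closedBall 0 r))
    (hp_ne_top : ∀ z ∈ closedBall (0 : ℂ) r, analyticOrderAt p z ≠ ⊤)
    (hp_sphere : ∀ z, ‖z‖ = r → p z ≠ 0) :
    ∃ F ψ : ℂ → ℂ, IsHeinsMap r p F ψ := by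
  obtain ⟨M, u, hM, hM_roots, hu, hpu⟩ :=
    exists_monic_mul_eq (isCompact_closedBall (0 : ℂ) r) hp hp_ne_top
  simp only [mem_closedBall_zero_iff] at hM_roots hpu
  have hrC : (r : ℂ) ≠ 0 := by exact_mod_cast hr.ne'
  have hr_norm (z : ℂ) : ‖(r : ℂ)⁻¹ * z‖ = ‖z‖ / r := by
    rw [norm_mul, norm_inv, Complex.norm_of_nonneg hr.le, inv_mul_eq_div]
  have hN := rootsInUnitDisk_scaleRoots_inv hr fun z hz ↦
    (hM_roots z hz).lt_of_ne fun h ↦ hp_sphere z h (by rw [(hpu z (hM_roots z hz)).2, hz, mul_zero])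
  obtain ⟨B, ψ, hBψ⟩ := exists_finiteBlaschke_deriv_eq_mul_eval
    ((Polynomial.monic_scaleRoots_iff _).2 hM) hN
  have hBψ (z : ℂ) (hz : ‖z‖ ≤ r) := hBψ ((r : ℂ)⁻¹ * z) (by rwa [hr_norm, div_le_one hr])
  have hscale (z : ℂ) : AnalyticAt ℂ (fun w : ℂ ↦ (r : ℂ)⁻¹ * w) z := by fun_prop
  refine ⟨fun z ↦ B ((r : ℂ)⁻¹ * z),
    fun z ↦ (r : ℂ)⁻¹ ^ (M.natDegree + 1) * ψ ((r : ℂ)⁻¹ * z) / u z, ?_, ?_, ?_, ?_, ?_, ?_⟩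
  · exact fun z hz ↦ (hBψ z (mem_closedBall_zero_iff.1 hz)).1.fun_comp (hscale z)
  · intro z hz
    have hz_le := mem_closedBall_zero_iff.1 hz
    exact (analyticAt_const.fun_mul ((hBψ z hz_le).2.1.fun_comp (hscale z))).fun_div
      (hu z hz) (hpu z hz_le).1
  · exact fun z hz ↦ div_ne_zero
      (mul_ne_zero (pow_ne_zero _ (inv_ne_zero hrC)) (hBψ z hz).2.2.1) (hpu z hz).1
  · intro z hz
    rw [deriv_comp_mul_left, smul_eq_mul, (hBψ z hz).2.2.2.1, Polynomial.scaleRoots_eval_mul,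
      (hpu z hz).2, ← mul_assoc (_ / _), div_mul_cancel₀ _ (hpu z hz).1]
    ring
  · exact fun z hz ↦ hr_norm z ▸ (hBψ z hz).2.2.2.2.1
  · exact fun z hz ↦ (hBψ z hz.le).2.2.2.2.2 (by rw [hr_norm, hz, div_self hr.ne'])

/-- The density `κ * ‖p‖` is a continuous conformal pseudometric of curvature at most `-4` which
vanishes wherever `p` does: near every point where `κ ≠ 0` it is the pullback
`‖deriv f‖ / (1 - ‖f‖ ^ 2)` of the hyperbolic metric times the modulus of a holomorphic function
`β` that is bounded by one at that point. The function `θ` is the quotient of `deriv f` by `p`. -/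
def IsSubsolutionDensity (p : ℂ → ℂ) (κ : ℂ → ℝ) : Prop :=
  ContinuousOn κ (ball 0 1) ∧ ∀ z₀ ∈ ball (0 : ℂ) 1, κ z₀ ≠ 0 →
    ∃ β θ f : ℂ → ℂ, AnalyticAt ℂ β z₀ ∧ AnalyticAt ℂ θ z₀ ∧ AnalyticAt ℂ f z₀ ∧
      (∀ᶠ z in 𝓝 z₀, deriv f z = θ z * p z) ∧ ‖f z₀‖ < 1 ∧ ‖β z₀‖ ≤ 1 ∧
      ∀ᶠ z in 𝓝 z₀, κ z = ‖β z * θ z‖ / (1 - ‖f z‖ ^ 2)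

lemma IsHeinsMap.not_isLocalMax {r : ℝ} (hr0 : 0 < r) (hr1 : r < 1) {p F ψ : ℂ → ℂ} {κ : ℂ → ℝ}
    (hF : IsHeinsMap r p F ψ) (hκ : IsSubsolutionDensity p κ) {z₀ : ℂ} (hz₀ : ‖z₀‖ < r)
    (hp_ne_top : analyticOrderAt p z₀ ≠ ⊤) (hgt : 1 < κ z₀ * (1 - ‖F z₀‖ ^ 2) / ‖ψ z₀‖) :
    ¬ IsLocalMax (fun z ↦ κ z * (1 - ‖F z‖ ^ 2) / ‖ψ z‖) z₀ := by
  have hz₀_mem : z₀ ∈ closedBall (0 : ℂ) r := mem_closedBall_zero_iff.2 hz₀.le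
  have hκ_ne : κ z₀ ≠ 0 := fun h ↦ by
    rw [h, zero_mul, zero_div] at hgt
    exact hgt.not_gt one_pos
  obtain ⟨β, θ, f, hβ, hθ, hf, hder, hf1, hβ1, hκ_eq⟩ :=
    hκ.2 z₀ (mem_ball_zero_iff.2 (hz₀.trans hr1)) hκ_ne
  have hF_an := hF.analyticOnNhd z₀ hz₀_mem
  have hψ_an := hF.analyticOnNhd_quotient z₀ hz₀_mem
  have hball : ∀ᶠ z in 𝓝 z₀, ‖z‖ < r := continuous_norm.continuousAt.eventually_lt_const hz₀
  have hF_ne : ¬ ∀ᶠ z in 𝓝 z₀, F z = F z₀ := by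
    intro hconst
    refine hp_ne_top (analyticOrderAt_eq_top.2 ?_)
    filter_upwards [hconst.eventually_nhds, hball] with z hz hzr
    have hderiv := hF.deriv_eq z hzr.le
    rw [EventuallyEq.deriv_eq (f := fun _ ↦ F z₀) hz, deriv_const] at hderiv
    exact (mul_eq_zero.1 hderiv.symm).resolve_left (hF.quotient_ne_zero z hzr.le)
  have hH := hθ.fun_div hψ_an (hF.quotient_ne_zero z₀ hz₀.le)
  have hF1 : ‖F z₀‖ < 1 := (hF.norm_le z₀ hz₀.le).trans_lt ((div_lt_one hr0).2 hz₀)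
  have hder_H : ∀ᶠ z in 𝓝 z₀, deriv f z = θ z / ψ z * deriv F z := by
    filter_upwards [hder, hball] with z hz hzr
    rw [hz, hF.deriv_eq z hzr.le, ← mul_assoc, div_mul_cancel₀ _ (hF.quotient_ne_zero z hzr.le)]
  have heq : (fun z ↦ κ z * (1 - ‖F z‖ ^ 2) / ‖ψ z‖) =ᶠ[𝓝 z₀]
      fun z ↦ ‖β z * (θ z / ψ z)‖ * (1 - ‖F z‖ ^ 2) / (1 - ‖f z‖ ^ 2) := by
    filter_upwards [hκ_eq] with z hz
    rw [hz, mul_div_assoc', norm_div]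
    ring
  rw [heq.isLocalMax_iff]
  exact not_isLocalMax_norm_mul_div hF_an hf hH hβ hder_H hF1 hf1 hF_ne hβ1 (heq.eq_of_nhds ▸ hgt)

/-- Ahlfors' lemma for a Heins map: the quotient of the two densities vanishes on the boundary and
has no interior maximum exceeding one. -/
lemma IsHeinsMap.mul_one_sub_norm_sq_le {r : ℝ} (hr0 : 0 < r) (hr1 : r < 1) {p F ψ : ℂ → ℂ}
    {κ : ℂ → ℝ} (hF : IsHeinsMap r p F ψ) (hκ : IsSubsolutionDensity p κ)
    (hp_ne_top : ∀ z ∈ ball (0 : ℂ) 1, analyticOrderAt p z ≠ ⊤) {z : ℂ} (hz : ‖z‖ ≤ r) :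
    κ z * (1 - ‖F z‖ ^ 2) ≤ ‖ψ z‖ := by
  set V : ℂ → ℝ := fun z ↦ κ z * (1 - ‖F z‖ ^ 2) / ‖ψ z‖ with hV
  have hcont : ContinuousOn V (closedBall 0 r) :=
    ((hκ.1.mono (closedBall_subset_ball hr1)).mul
      (continuousOn_const.sub (hF.analyticOnNhd.continuousOn.norm.pow 2))).div
      hF.analyticOnNhd_quotient.continuousOn.norm
      fun z hz ↦ norm_ne_zero_iff.2 (hF.quotient_ne_zero z (mem_closedBall_zero_iff.1 hz))
  obtain ⟨z₀, hz₀, hmax⟩ := (isCompact_closedBall (0 : ℂ) r).exists_isMaxOn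
    (nonempty_closedBall.2 hr0.le) hcont
  have hz₀_le := mem_closedBall_zero_iff.1 hz₀
  have hV_le : V z₀ ≤ 1 := by
    by_contra! hgt
    have hlt : ‖z₀‖ < r := hz₀_le.lt_of_ne fun h ↦ by
      simp only [hV, hF.norm_eq_one z₀ h] at hgt
      norm_num at hgt
    refine hF.not_isLocalMax hr0 hr1 hκ hlt
      (hp_ne_top z₀ (mem_ball_zero_iff.2 (hlt.trans hr1))) hgt (hmax.isLocalMax ?_)
    exact mem_of_superset (isOpen_ball.mem_nhds (mem_ball_zero_iff.2 hlt)) ball_subset_closedBall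
  exact (div_le_one (norm_pos_iff.2 (hF.quotient_ne_zero z hz))).1
    ((hmax (mem_closedBall_zero_iff.2 hz)).trans hV_le)

lemma exists_radius_forall_ne_zero {p : ℂ → ℂ} (hp : AnalyticOnNhd ℂ p (ball 0 1))
    (hp_ne_top : ∀ z ∈ ball (0 : ℂ) 1, analyticOrderAt p z ≠ ⊤) {ρ : ℝ} (hρ : ρ < 1) :
    ∃ r ∈ Set.Ioo ρ 1, ∀ z, ‖z‖ = r → p z ≠ 0 := by
  obtain ⟨R, hρR, hR1⟩ := exists_between hρ
  have hsub : closedBall (0 : ℂ) R ⊆ ball 0 1 := closedBall_subset_ball hR1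
  have hfin := (finite_setOf_eq_zero (isCompact_closedBall 0 R) (hp.mono hsub)
    fun z hz ↦ hp_ne_top z (hsub hz)).image norm
  obtain ⟨r, hr, hr_notMem⟩ := (Set.Ioo_infinite hρR).exists_notMem_finite hfin
  exact ⟨r, ⟨hr.1, hr.2.trans hR1⟩, fun z hz h ↦
    hr_notMem ⟨z, ⟨mem_closedBall_zero_iff.2 (hz.trans_le hr.2.le), h⟩, hz⟩⟩

lemma dist_le_mul_dist_of_norm_le {f : ℂ → ℂ} {x y : ℂ} {R C : ℝ}
    (hf : DifferentiableOn ℂ f (ball x R)) (hC : ∀ z ∈ ball x R, ‖f z‖ ≤ C) (hy : y ∈ ball x R) :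
    dist (f y) (f x) ≤ 2 * C / R * dist y x := by
  have hR : 0 < R := nonempty_ball.1 ⟨y, hy⟩
  refine Complex.dist_le_div_mul_dist_of_mapsTo_ball hf (fun z hz ↦ ?_) hy
  rw [mem_closedBall, dist_eq_norm]
  linarith [norm_sub_le (f z) (f x), hC z hz, hC x (mem_ball_self hR)]

lemma exists_tendsto_of_eventually_norm_le {ι : Type*} {u : Ultrafilter ι} {a : ι → ℂ} {C : ℝ}
    (ha : ∀ᶠ i in (u : Filter ι), ‖a i‖ ≤ C) : ∃ b, Tendsto a u (𝓝 b) := by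
  obtain ⟨b, -, hb⟩ := (isCompact_closedBall (0 : ℂ) C).ultrafilter_le_nhds' (u.map a)
    (ha.mono fun i hi ↦ mem_closedBall_zero_iff.2 hi)
  exact ⟨b, hb⟩

/-- Montel's theorem along an ultrafilter, where no subsequence has to be extracted. -/
lemma exists_tendstoLocallyUniformlyOn {ι : Type*} {u : Ultrafilter ι} {F : ι → ℂ → ℂ} {U : Set ℂ}
    (hF : ∀ x ∈ U, ∃ R > 0, ∃ C, ∀ᶠ i in (u : Filter ι),
      DifferentiableOn ℂ (F i) (ball x R) ∧ ∀ z ∈ ball x R, ‖F i z‖ ≤ C) :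
    ∃ f, TendstoLocallyUniformlyOn F f u U := by
  have hpt (z : ℂ) : ∃ b, (∃ C, ∀ᶠ i in (u : Filter ι), ‖F i z‖ ≤ C) →
      Tendsto (fun i ↦ F i z) u (𝓝 b) := by
    by_cases h : ∃ C, ∀ᶠ i in (u : Filter ι), ‖F i z‖ ≤ C
    · exact (exists_tendsto_of_eventually_norm_le h.choose_spec).imp fun b hb _ ↦ hb
    · exact ⟨0, fun h' ↦ absurd h' h⟩
  choose f hf using hpt
  refine ⟨f, Metric.tendstoLocallyUniformlyOn_iff.2 fun ε hε x hx ↦ ?_⟩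
  obtain ⟨R, hR, C, hRC⟩ := hF x hx
  have hlim {y : ℂ} (hy : y ∈ ball x R) : Tendsto (fun i ↦ F i y) u (𝓝 (f y)) :=
    hf y ⟨C, hRC.mono fun i hi ↦ hi.2 y hy⟩
  have hlip : ∀ᶠ i in (u : Filter ι), ∀ y ∈ ball x R,
      dist (F i y) (F i x) ≤ 2 * C / R * dist y x :=
    hRC.mono fun i hi y hy ↦ dist_le_mul_dist_of_norm_le hi.1 hi.2 hy
  have hx_mem := mem_ball_self (x := x) hR
  have hsmall : ∀ᶠ y in 𝓝 x, 2 * C / R * dist y x < ε / 3 := by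
    have hcont : Continuous fun y ↦ 2 * C / R * dist y x := by fun_prop
    exact hcont.continuousAt.eventually_lt_const (by simpa using hε)
  refine ⟨_, mem_nhdsWithin_of_mem_nhds (inter_mem (ball_mem_nhds x hR) hsmall), ?_⟩
  filter_upwards [hlip, Metric.tendsto_nhds.1 (hlim hx_mem) (ε / 3) (by positivity)]
    with i hi hix y ⟨hy, hyε⟩
  have hfy : dist (f y) (f x) ≤ 2 * C / R * dist y x :=
    le_of_tendsto ((hlim hy).dist (hlim hx_mem)) (hlip.mono fun i hi ↦ hi y hy)
  rw [Set.mem_ofPred_eq] at hyε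
  calc dist (f y) (F i y) ≤ dist (f y) (f x) + dist (f x) (F i x) + dist (F i x) (F i y) :=
        dist_triangle4 _ _ _ _
    _ < ε := by
        rw [dist_comm (f x), dist_comm (F i x) (F i y)]
        linarith [hi y hy]

lemma tendstoLocallyUniformlyOn_iteratedDeriv {ι : Type*} {l : Filter ι} {F : ι → ℂ → ℂ}
    {f : ℂ → ℂ} {U : Set ℂ} (hU : IsOpen U) (hF : TendstoLocallyUniformlyOn F f l U)
    (hd : ∀ᶠ i in l, DifferentiableOn ℂ (F i) U) (n : ℕ) :
    TendstoLocallyUniformlyOn (fun i ↦ iteratedDeriv n (F i)) (iteratedDeriv n f) l U := by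
  induction n generalizing F f with
  | zero => simpa using hF
  | succ n ih =>
    simp only [iteratedDeriv_succ']
    exact ih (hF.deriv hd hU) (hd.mono fun i hi ↦ hi.deriv hU)

lemma natCast_le_analyticOrderAt_of_tendstoLocallyUniformlyOn {ι : Type*} {l : Filter ι} [l.NeBot]
    {F : ι → ℂ → ℂ} {f : ℂ → ℂ} {U : Set ℂ} (hU : IsOpen U)
    (hF : TendstoLocallyUniformlyOn F f l U) (hd : ∀ᶠ i in l, DifferentiableOn ℂ (F i) U) {z : ℂ}
    (hz : z ∈ U) {k : ℕ} (hk : ∀ᶠ i in l, k ≤ analyticOrderAt (F i) z) :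
    k ≤ analyticOrderAt f z := by
  have hf := (hF.differentiableOn hd hU).analyticAt (hU.mem_nhds hz)
  refine (natCast_le_analyticOrderAt_iff_iteratedDeriv_eq_zero hf).2 fun n hn ↦ ?_
  refine tendsto_nhds_unique
    ((tendstoLocallyUniformlyOn_iteratedDeriv hU hF hd n).tendsto_at hz)
    (tendsto_const_nhds.congr' ?_)
  filter_upwards [hk, hd] with i hi hdi
  exact ((natCast_le_analyticOrderAt_iff_iteratedDeriv_eq_zero
    (hdi.analyticAt (hU.mem_nhds hz))).1 hi n hn).symm

/-- A self-map of the unit disk fixing `0` whose critical set contains the zeros of `p` and whose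
pullback of the hyperbolic metric dominates every subsolution density relative to `p`. -/
structure IsDominant (p B : ℂ → ℂ) : Prop where
  analyticOnNhd : AnalyticOnNhd ℂ B (ball 0 1)
  norm_le : ∀ z ∈ ball (0 : ℂ) 1, ‖B z‖ ≤ ‖z‖
  order_le : ∀ z ∈ ball (0 : ℂ) 1, analyticOrderAt p z ≤ analyticOrderAt (deriv B) z
  density_le : ∀ κ, IsSubsolutionDensity p κ →
    ∀ z ∈ ball (0 : ℂ) 1, κ z * ‖p z‖ * (1 - ‖B z‖ ^ 2) ≤ ‖deriv B z‖

lemma IsHeinsMap.order_le {r : ℝ} {p F ψ : ℂ → ℂ} (hF : IsHeinsMap r p F ψ) {z : ℂ}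
    (hz : ‖z‖ < r) (hp : AnalyticAt ℂ p z) :
    analyticOrderAt p z ≤ analyticOrderAt (deriv F) z := by
  have hder : deriv F =ᶠ[𝓝 z] ψ * p := by
    filter_upwards [continuous_norm.continuousAt.eventually_lt_const hz] with w hw
    exact hF.deriv_eq w hw.le
  rw [analyticOrderAt_congr hder, analyticOrderAt_mul
    (hF.analyticOnNhd_quotient z (mem_closedBall_zero_iff.2 hz.le)) hp]
  exact le_add_self

lemma exists_seq_isHeinsMap {p : ℂ → ℂ} (hp : AnalyticOnNhd ℂ p (ball 0 1))
    (hp_ne_top : ∀ z ∈ ball (0 : ℂ) 1, analyticOrderAt p z ≠ ⊤) :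
    ∃ (r : ℕ → ℝ) (F ψ : ℕ → ℂ → ℂ), (∀ n, r n ∈ Set.Ioo 0 1) ∧ Tendsto r atTop (𝓝 1) ∧
      ∀ n, IsHeinsMap (r n) p (F n) (ψ n) := by
  obtain ⟨ρ, -, hρ, hρ_lim⟩ := exists_seq_strictMono_tendsto' (zero_lt_one' ℝ)
  choose r hr hr_ne using fun n ↦ exists_radius_forall_ne_zero hp hp_ne_top (hρ n).2
  have hr0 (n : ℕ) : 0 < r n := (hρ n).1.trans (hr n).1
  have hsub (n : ℕ) : closedBall (0 : ℂ) (r n) ⊆ ball 0 1 := closedBall_subset_ball (hr n).2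
  choose F ψ hF using fun n ↦ exists_isHeinsMap (hr0 n) (hp.mono (hsub n))
    (fun z hz ↦ hp_ne_top z (hsub n hz)) (hr_ne n)
  exact ⟨r, F, ψ, fun n ↦ ⟨hr0 n, (hr n).2⟩, tendsto_of_tendsto_of_tendsto_of_le_of_le hρ_lim
    tendsto_const_nhds (fun n ↦ (hr n).1.le) fun n ↦ (hr n).2.le, hF⟩

lemma IsHeinsMap.differentiableOn_ball {r : ℝ} {p F ψ : ℂ → ℂ} (hF : IsHeinsMap r p F ψ) {ρ : ℝ}
    (hρ : ρ ≤ r) : DifferentiableOn ℂ F (ball 0 ρ) :=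
  hF.analyticOnNhd.differentiableOn.mono (ball_subset_closedBall.trans
    (closedBall_subset_closedBall hρ))

lemma exists_tendstoLocallyUniformlyOn_of_isHeinsMap {ι : Type*} {u : Ultrafilter ι} {p : ℂ → ℂ}
    {r : ι → ℝ} {F ψ : ι → ℂ → ℂ} (hr0 : ∀ i, 0 < r i) (hr_lim : Tendsto r u (𝓝 1))
    (hF : ∀ i, IsHeinsMap (r i) p (F i) (ψ i)) :
    ∃ B, TendstoLocallyUniformlyOn F B u (ball 0 1) := by
  refine exists_tendstoLocallyUniformlyOn fun x hx ↦ ?_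
  obtain ⟨ρ, hxρ, hρ⟩ := exists_between (mem_ball_zero_iff.1 hx)
  have hsub : ball x (ρ - ‖x‖) ⊆ ball 0 ρ := ball_subset_ball' (by simp)
  refine ⟨ρ - ‖x‖, sub_pos.2 hxρ, 1, ?_⟩
  filter_upwards [hr_lim.eventually_const_lt hρ] with i hi
  refine ⟨((hF i).differentiableOn_ball hi.le).mono hsub, fun z hz ↦ ?_⟩
  have hz_le : ‖z‖ ≤ r i := ((mem_ball_zero_iff.1 (hsub hz)).trans hi).le
  exact ((hF i).norm_le z hz_le).trans (div_le_one_of_le₀ hz_le (hr0 i).le)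

theorem exists_isDominant {p : ℂ → ℂ} (hp : AnalyticOnNhd ℂ p (ball 0 1))
    (hp_ne_top : ∀ z ∈ ball (0 : ℂ) 1, analyticOrderAt p z ≠ ⊤) : ∃ B, IsDominant p B := by
  obtain ⟨r, F, ψ, hr, hr_lim, hF⟩ := exists_seq_isHeinsMap hp hp_ne_top
  replace hr_lim : Tendsto r (hyperfilter ℕ : Filter ℕ) (𝓝 1) :=
    hr_lim.mono_left Nat.hyperfilter_le_atTop
  obtain ⟨B, hB⟩ :=
    exists_tendstoLocallyUniformlyOn_of_isHeinsMap (fun n ↦ (hr n).1) hr_lim hF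
  have hlt {ρ : ℝ} (hρ : ρ < 1) : ∀ᶠ n in (hyperfilter ℕ : Filter ℕ), ρ < r n :=
    hr_lim.eventually_const_lt hρ
  have hdiff {ρ : ℝ} (hρ : ρ < 1) : ∀ᶠ n in (hyperfilter ℕ : Filter ℕ),
      DifferentiableOn ℂ (F n) (ball 0 ρ) :=
    (hlt hρ).mono fun n hn ↦ (hF n).differentiableOn_ball hn.le
  have hlocal (z : ℂ) (hz : z ∈ ball (0 : ℂ) 1) : ∃ ρ < 1, z ∈ ball (0 : ℂ) ρ ∧
      TendstoLocallyUniformlyOn F B (hyperfilter ℕ : Filter ℕ) (ball 0 ρ) := by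
    obtain ⟨ρ, hzρ, hρ⟩ := exists_between (mem_ball_zero_iff.1 hz)
    exact ⟨ρ, hρ, mem_ball_zero_iff.2 hzρ, hB.mono (ball_subset_ball hρ.le)⟩
  refine ⟨B, fun z hz ↦ ?_, fun z hz ↦ ?_, fun z hz ↦ ?_, fun κ hκ z hz ↦ ?_⟩
  all_goals obtain ⟨ρ, hρ, hzρ, hBρ⟩ := hlocal z hz
  · exact (hBρ.differentiableOn (hdiff hρ) isOpen_ball).analyticAt (isOpen_ball.mem_nhds hzρ)
  · have hlim : Tendsto (fun n ↦ ‖z‖ / r n) (hyperfilter ℕ : Filter ℕ) (𝓝 (‖z‖ / 1)) :=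
      tendsto_const_nhds.div hr_lim one_ne_zero
    rw [div_one] at hlim
    refine le_of_tendsto_of_tendsto (hBρ.tendsto_at hzρ).norm hlim ?_
    filter_upwards [hlt (mem_ball_zero_iff.1 hz)] with n hn using (hF n).norm_le z hn.le
  · rw [← Nat.cast_analyticOrderNatAt (hp_ne_top z hz)]
    refine natCast_le_analyticOrderAt_of_tendstoLocallyUniformlyOn isOpen_ball
      (hBρ.deriv (hdiff hρ) isOpen_ball) ((hdiff hρ).mono fun n hn ↦ hn.deriv isOpen_ball) hzρ ?_
    filter_upwards [hlt (mem_ball_zero_iff.1 hz)] with n hn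
    rw [Nat.cast_analyticOrderNatAt (hp_ne_top z hz)]
    exact (hF n).order_le hn (hp z hz)
  · refine le_of_tendsto_of_tendsto
      (tendsto_const_nhds.mul (tendsto_const_nhds.sub ((hBρ.tendsto_at hzρ).norm.pow 2)))
      ((hBρ.deriv (hdiff hρ) isOpen_ball).tendsto_at hzρ).norm ?_
    filter_upwards [hlt (mem_ball_zero_iff.1 hz)] with n hn
    rw [Function.comp_apply, (hF n).deriv_eq z hn.le, norm_mul, mul_right_comm]
    gcongr
    exact (hF n).mul_one_sub_norm_sq_le (hr n).1 (hr n).2 hκ hp_ne_top hn.le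

/-! ### Blaschke products and the Riesz factorization -/

lemma le_of_eventually_ne_zero_imp_le {d : ℂ → ℂ} {u v : ℂ → ℝ} {z : ℂ} (hd : AnalyticAt ℂ d z)
    (hd_ne_top : analyticOrderAt d z ≠ ⊤) (hu : ContinuousAt u z) (hv : ContinuousAt v z)
    (hle : ∀ᶠ w in 𝓝 z, d w ≠ 0 → u w ≤ v w) : u z ≤ v z := by
  have hne : ∀ᶠ w in 𝓝[≠] z, d w ≠ 0 :=
    hd.eventually_eq_zero_or_eventually_ne_zero.resolve_left
      (mt analyticOrderAt_eq_top.2 hd_ne_top)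
  refine le_of_tendsto_of_tendsto (b := 𝓝[≠] z) (hu.mono_left nhdsWithin_le_nhds)
    (hv.mono_left nhdsWithin_le_nhds) ?_
  filter_upwards [hne, hle.filter_mono nhdsWithin_le_nhds] with w hw h using h hw

lemma exists_forall_lt_norm_of_norm_eq_one {P : ℂ → ℂ} (hP : ContinuousOn P (closedBall 0 1))
    (hP1 : ∀ z, ‖z‖ = 1 → ‖P z‖ = 1) {δ : ℝ} (hδ : δ < 1) :
    ∃ ρ < 1, ∀ w, ρ ≤ ‖w‖ → ‖w‖ ≤ 1 → δ < ‖P w‖ := by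
  have hclosed : IsClosed (closedBall 0 1 ∩ (fun w ↦ ‖P w‖) ⁻¹' Set.Iic δ) :=
    hP.norm.preimage_isClosed_of_isClosed isClosed_closedBall isClosed_Iic
  obtain ⟨ρ, hρ, hsub⟩ := exists_lt_subset_ball hclosed fun w hw ↦
    mem_ball_zero_iff.2 ((mem_closedBall_zero_iff.1 hw.1).lt_of_ne fun h ↦
      ((hP1 w h).symm.trans_le hw.2).not_gt hδ)
  refine ⟨ρ, hρ, fun w hρw hw ↦ lt_of_not_ge fun h ↦ hρw.not_gt ?_⟩
  exact mem_ball_zero_iff.1 (hsub ⟨mem_closedBall_zero_iff.2 hw, h⟩)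

lemma norm_le_one_of_norm_mul_le_one {P L : ℂ → ℂ} (hP : ContinuousOn P (closedBall 0 1))
    (hP1 : ∀ z, ‖z‖ = 1 → ‖P z‖ = 1) (hL : DifferentiableOn ℂ L (ball 0 1))
    (hPL : ∀ z ∈ ball (0 : ℂ) 1, ‖P z * L z‖ ≤ 1) {z : ℂ} (hz : z ∈ ball (0 : ℂ) 1) :
    ‖L z‖ ≤ 1 := by
  by_contra! hgt
  have hL_pos : 0 < ‖L z‖ := one_pos.trans hgt
  obtain ⟨δ, hδL, hδ⟩ := exists_between ((div_lt_one hL_pos).2 hgt)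
  have hδ0 : 0 < δ := (one_div_pos.2 hL_pos).trans hδL
  obtain ⟨ρ, hρ, hρP⟩ := exists_forall_lt_norm_of_norm_eq_one hP hP1 hδ
  obtain ⟨s, hs, hs1⟩ := exists_between (max_lt hρ (mem_ball_zero_iff.1 hz))
  obtain ⟨hρs, hzs⟩ := max_lt_iff.1 hs
  have hsphere : ∀ w ∈ frontier (ball (0 : ℂ) s), ‖L w‖ ≤ 1 / δ := fun w hw ↦ by
    have hws : ‖w‖ = s := mem_sphere_zero_iff_norm.1 (frontier_ball_subset_sphere hw)
    rw [le_div_iff₀' hδ0]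
    calc δ * ‖L w‖ ≤ ‖P w‖ * ‖L w‖ := by
          gcongr
          exact (hρP w (hws ▸ hρs.le) (hws ▸ hs1.le)).le
      _ ≤ 1 := norm_mul (P w) (L w) ▸ hPL w (mem_ball_zero_iff.2 (hws ▸ hs1))
  have hle := Complex.norm_le_of_forall_mem_frontier_norm_le isBounded_ball
    (hL.diffContOnCl_ball (closedBall_subset_ball hs1)) hsphere
    (subset_closure (mem_ball_zero_iff.2 hzs))
  rw [div_lt_iff₀' hL_pos] at hδL
  exact ((le_div_iff₀ hδ0).1 hle).not_gt hδL

/-- The factor `(|a| / a) (a - z) / (1 - ā z)` of a Blaschke product with a zero at `a ≠ 0`. -/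
noncomputable def blaschkeFactor (a z : ℂ) : ℂ :=
  (((‖a‖ : ℝ) : ℂ) / a) * ((a - z) / (1 - conj a * z))

lemma blaschkeFactor_eq_mul_diskMobius (a z : ℂ) :
    blaschkeFactor a z = -(((‖a‖ : ℝ) : ℂ) / a) * diskMobius a z := by
  rw [blaschkeFactor, diskMobius, neg_mul, ← mul_neg, ← neg_div, neg_sub]

lemma norm_blaschkeFactor {a : ℂ} (ha : a ≠ 0) (z : ℂ) :
    ‖blaschkeFactor a z‖ = ‖diskMobius a z‖ := by
  rw [blaschkeFactor_eq_mul_diskMobius, norm_mul, norm_neg, norm_div, Complex.norm_real,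
    norm_norm, div_self (norm_ne_zero_iff.2 ha), one_mul]

lemma norm_blaschkeFactor_eq_one {a z : ℂ} (ha : a ≠ 0) (ha1 : ‖a‖ < 1) (hz : ‖z‖ = 1) :
    ‖blaschkeFactor a z‖ = 1 := by
  have h := one_sub_norm_diskMobius_sq ha1 hz.le
  rw [hz, one_pow, sub_self, mul_zero, zero_div, sub_eq_zero] at h
  rw [norm_blaschkeFactor ha]
  exact (pow_eq_one_iff_of_nonneg (norm_nonneg _) two_ne_zero).1 h.symm

lemma analyticAt_blaschkeFactor {a z : ℂ} (ha1 : ‖a‖ < 1) (hz : ‖z‖ ≤ 1) :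
    AnalyticAt ℂ (blaschkeFactor a) z :=
  (analyticAt_const.mul (analyticAt_diskMobius ha1 hz)).congr
    (.of_forall fun w ↦ (blaschkeFactor_eq_mul_diskMobius a w).symm)

lemma analyticOrderAt_blaschkeFactor {a z : ℂ} (ha : a ≠ 0) (ha1 : ‖a‖ < 1) (hz : ‖z‖ ≤ 1) :
    analyticOrderAt (blaschkeFactor a) z = if a = z then 1 else 0 := by
  have hc : -(((‖a‖ : ℝ) : ℂ) / a) ≠ 0 := by simpa using ha
  have heq : blaschkeFactor a = (fun _ ↦ -(((‖a‖ : ℝ) : ℂ) / a)) * diskMobius a :=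
    funext (blaschkeFactor_eq_mul_diskMobius a)
  rw [heq, analyticOrderAt_mul analyticAt_const (analyticAt_diskMobius ha1 hz),
    analyticAt_const.analyticOrderAt_eq_zero.2 hc, zero_add]
  split_ifs with h
  · subst h
    exact (analyticAt_diskMobius ha1 hz).analyticOrderAt_eq_one_of_zero_deriv_ne_zero
      (diskMobius_self a) (deriv_diskMobius_ne_zero ha1 hz)
  · exact (analyticAt_diskMobius ha1 hz).analyticOrderAt_eq_zero.2
      (mt (diskMobius_eq_zero_iff ha1 hz).1 (Ne.symm h))

lemma one_sub_norm_le_norm_one_sub_conj_mul {a z : ℂ} (ha : ‖a‖ ≤ 1) :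
    1 - ‖z‖ ≤ ‖1 - conj a * z‖ := by
  have h := norm_sub_norm_le (1 : ℂ) (conj a * z)
  rw [norm_mul, norm_one, RCLike.norm_conj] at h
  nlinarith [norm_nonneg z]

lemma blaschkeFactor_sub_one {a z : ℂ} (ha : a ≠ 0) (hne : 1 - conj a * z ≠ 0) :
    blaschkeFactor a z - 1 =
      -((1 - ((‖a‖ : ℝ) : ℂ)) * (a + (‖a‖ : ℝ) * z) / (a * (1 - conj a * z))) := by
  have h := ofReal_norm_sq a
  push_cast at h
  rw [blaschkeFactor, div_mul_div_comm, ← neg_div, div_sub_one (mul_ne_zero ha hne)]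
  congr 1
  linear_combination -z * h

lemma norm_blaschkeFactor_sub_one_le {a z : ℂ} (ha : a ≠ 0) (ha1 : ‖a‖ < 1) (hz : ‖z‖ < 1) :
    ‖blaschkeFactor a z - 1‖ ≤ 2 / (1 - ‖z‖) * (1 - ‖a‖) := by
  have hz_pos : 0 < 1 - ‖z‖ := sub_pos.2 hz
  have ha_pos : 0 < 1 - ‖a‖ := sub_pos.2 ha1
  have hsum : ‖a + (‖a‖ : ℝ) * z‖ ≤ 2 * ‖a‖ := by
    refine (norm_add_le _ _).trans ?_
    rw [norm_mul, Complex.norm_real, norm_norm]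
    nlinarith [norm_nonneg a]
  have hsub : ‖1 - ((‖a‖ : ℝ) : ℂ)‖ = 1 - ‖a‖ := by
    rw [← Complex.ofReal_one, ← Complex.ofReal_sub, Complex.norm_real,
      Real.norm_of_nonneg ha_pos.le]
  rw [blaschkeFactor_sub_one ha (one_sub_conj_mul_ne_zero ha1 hz.le), norm_neg, norm_div, norm_mul,
    norm_mul, hsub]
  calc (1 - ‖a‖) * ‖a + (‖a‖ : ℝ) * z‖ / (‖a‖ * ‖1 - conj a * z‖)
      ≤ (1 - ‖a‖) * (2 * ‖a‖) / (‖a‖ * (1 - ‖z‖)) := by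
        gcongr
        exact one_sub_norm_le_norm_one_sub_conj_mul ha1.le
    _ = 2 / (1 - ‖z‖) * (1 - ‖a‖) := by
        have := norm_ne_zero_iff.2 ha
        field_simp

lemma multipliable_blaschkeFactor {ι : Type*} {a : ι → ℂ} (ha : ∀ j, a j ≠ 0 ∧ ‖a j‖ < 1)
    (hsum : Summable fun j ↦ 1 - ‖a j‖) {z : ℂ} (hz : ‖z‖ < 1) :
    Multipliable fun j ↦ blaschkeFactor (a j) z := by
  have hs : Summable fun j ↦ ‖blaschkeFactor (a j) z - 1‖ :=
    .of_nonneg_of_le (fun _ ↦ norm_nonneg _)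
      (fun j ↦ norm_blaschkeFactor_sub_one_le (ha j).1 (ha j).2 hz) (hsum.mul_left _)
  simpa using multipliable_one_add_of_summable hs

lemma norm_blaschkeFactor_sq_le_exp {a w : ℂ} (ha : a ≠ 0) (ha1 : ‖a‖ < 1) (hw : ‖w‖ < 1) :
    ‖blaschkeFactor a w‖ ^ 2 ≤ Real.exp (-((1 - ‖w‖ ^ 2) / 4 * (1 - ‖a‖))) := by
  have hw_pos := one_sub_norm_sq_pos hw
  have hden_pos : 0 < ‖1 - conj a * w‖ := norm_pos_iff.2 (one_sub_conj_mul_ne_zero ha1 hw.le)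
  have hden_le : ‖1 - conj a * w‖ ≤ 2 := by
    refine (norm_sub_le _ _).trans ?_
    rw [norm_mul, RCLike.norm_conj, norm_one]
    nlinarith [norm_nonneg a, norm_nonneg w]
  have hle : (1 - ‖w‖ ^ 2) / 4 * (1 - ‖a‖) ≤ 1 - ‖blaschkeFactor a w‖ ^ 2 := by
    rw [norm_blaschkeFactor ha, one_sub_norm_diskMobius_sq ha1 hw.le]
    calc (1 - ‖w‖ ^ 2) / 4 * (1 - ‖a‖) ≤ (1 - ‖w‖ ^ 2) / 4 * (1 - ‖a‖ ^ 2) := by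
          gcongr
          exact pow_le_of_le_one (norm_nonneg a) ha1.le two_ne_zero
      _ = (1 - ‖a‖ ^ 2) * (1 - ‖w‖ ^ 2) / 2 ^ 2 := by ring
      _ ≤ (1 - ‖a‖ ^ 2) * (1 - ‖w‖ ^ 2) / ‖1 - conj a * w‖ ^ 2 := by
          have := one_sub_norm_sq_pos ha1
          gcongr
  linarith [Real.add_one_le_exp (-((1 - ‖w‖ ^ 2) / 4 * (1 - ‖a‖)))]

/-- The partial product `z ^ m * ∏ j ∈ F, blaschkeFactor (a j) z` of a Blaschke product. -/
noncomputable def partialBlaschke {ι : Type*} (m : ℕ) (a : ι → ℂ) (F : Finset ι) (z : ℂ) : ℂ :=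
  z ^ m * ∏ j ∈ F, blaschkeFactor (a j) z

section PartialBlaschke

variable {ι : Type*} {m : ℕ} {a : ι → ℂ} (ha : ∀ j, a j ≠ 0 ∧ ‖a j‖ < 1)
include ha

lemma analyticAt_partialBlaschke (F : Finset ι) {z : ℂ} (hz : ‖z‖ ≤ 1) :
    AnalyticAt ℂ (partialBlaschke m a F) z :=
  (analyticAt_id.pow m).mul
    (Finset.analyticAt_fun_prod F fun j _ ↦ analyticAt_blaschkeFactor (ha j).2 hz)

lemma norm_blaschkeFactor_le_one (j : ι) {z : ℂ} (hz : ‖z‖ ≤ 1) : ‖blaschkeFactor (a j) z‖ ≤ 1 :=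
  (norm_blaschkeFactor (ha j).1 z).trans_le (norm_diskMobius_le_one (ha j).2 hz)

lemma norm_partialBlaschke_anti {F F' : Finset ι} (hF : F ⊆ F') {z : ℂ} (hz : ‖z‖ ≤ 1) :
    ‖partialBlaschke m a F' z‖ ≤ ‖partialBlaschke m a F z‖ := by
  simp only [partialBlaschke, norm_mul, norm_prod]
  exact mul_le_mul_of_nonneg_left (Finset.prod_anti_set_of_le_one (fun _ ↦ norm_nonneg _)
    (fun j ↦ norm_blaschkeFactor_le_one ha j hz) hF) (norm_nonneg _)

lemma norm_partialBlaschke_le_one (F : Finset ι) {z : ℂ} (hz : ‖z‖ ≤ 1) :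
    ‖partialBlaschke m a F z‖ ≤ 1 := by
  refine (norm_partialBlaschke_anti ha F.empty_subset hz).trans ?_
  simpa [partialBlaschke] using pow_le_one₀ (norm_nonneg z) hz

lemma norm_partialBlaschke_eq_one (F : Finset ι) {z : ℂ} (hz : ‖z‖ = 1) :
    ‖partialBlaschke m a F z‖ = 1 := by
  rw [partialBlaschke, norm_mul, norm_pow, norm_prod, hz, one_pow, one_mul]
  exact Finset.prod_eq_one fun j _ ↦ norm_blaschkeFactor_eq_one (ha j).1 (ha j).2 hz

lemma analyticOrderAt_partialBlaschke (F : Finset ι) {z : ℂ} (hz : ‖z‖ ≤ 1) :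
    analyticOrderAt (partialBlaschke m a F) z =
      (if z = 0 then m else 0) + (F.filter (a · = z)).card := by
  classical
  induction F using Finset.induction_on with
  | empty =>
    have hpow : partialBlaschke m a ∅ = id ^ m := funext fun z ↦ by simp [partialBlaschke]
    rw [hpow, analyticOrderAt_pow analyticAt_id]
    rcases eq_or_ne z 0 with rfl | hz0
    · simp
    · simp [hz0, analyticAt_id.analyticOrderAt_eq_zero.2 hz0]
  | insert j F hj ih =>
    have hmul : partialBlaschke m a (insert j F) = partialBlaschke m a F * blaschkeFactor (a j) :=
      funext fun z ↦ by
        simp only [partialBlaschke, Pi.mul_apply, Finset.prod_insert hj]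
        ring
    rw [hmul, analyticOrderAt_mul (analyticAt_partialBlaschke ha F hz)
      (analyticAt_blaschkeFactor (ha j).2 hz), ih,
      analyticOrderAt_blaschkeFactor (ha j).1 (ha j).2 hz, Finset.filter_insert, add_assoc]
    split_ifs with h
    all_goals simp [hj]

lemma sum_one_sub_norm_le (F : Finset ι) {w : ℂ} (hw : ‖w‖ < 1) {c : ℝ} (hc : 0 < c)
    (hle : c ≤ ‖partialBlaschke m a F w‖) :
    ∑ j ∈ F, (1 - ‖a j‖) ≤ -(2 * Real.log c) / ((1 - ‖w‖ ^ 2) / 4) := by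
  have hexp : c ^ 2 ≤ Real.exp (-((1 - ‖w‖ ^ 2) / 4 * ∑ j ∈ F, (1 - ‖a j‖))) := by
    calc c ^ 2 ≤ (∏ j ∈ F, ‖blaschkeFactor (a j) w‖) ^ 2 := by
          gcongr
          rw [partialBlaschke, norm_mul, norm_pow, norm_prod] at hle
          exact hle.trans (mul_le_of_le_one_left (Finset.prod_nonneg fun _ _ ↦ norm_nonneg _)
            (pow_le_one₀ (norm_nonneg _) hw.le))
      _ = ∏ j ∈ F, ‖blaschkeFactor (a j) w‖ ^ 2 := (Finset.prod_pow _ _ _).symm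
      _ ≤ ∏ j ∈ F, Real.exp (-((1 - ‖w‖ ^ 2) / 4 * (1 - ‖a j‖))) :=
          Finset.prod_le_prod (fun _ _ ↦ by positivity)
            fun j _ ↦ norm_blaschkeFactor_sq_le_exp (ha j).1 (ha j).2 hw
      _ = Real.exp (-((1 - ‖w‖ ^ 2) / 4 * ∑ j ∈ F, (1 - ‖a j‖))) := by
          rw [← Real.exp_sum, Finset.sum_neg_distrib, Finset.mul_sum]
  have hlog := Real.log_le_log (by positivity) hexp
  rw [Real.log_exp, Real.log_pow, Nat.cast_ofNat] at hlog
  rw [le_div_iff₀ (div_pos (one_sub_norm_sq_pos hw) four_pos)]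
  linarith

lemma norm_pow_mul_le_one_of_eq_mul_partialBlaschke {B G : ℂ → ℂ} {F : Finset ι}
    (hG : AnalyticOnNhd ℂ G (ball 0 1))
    (hBG : ∀ z ∈ ball (0 : ℂ) 1, B z = G z * partialBlaschke m a F z) {N : ℕ} {K : ℂ → ℂ}
    (hK : AnalyticOnNhd ℂ K (ball 0 1)) (hBK : ∀ z ∈ ball (0 : ℂ) 1, ‖B z ^ N * K z‖ ≤ 1)
    {z : ℂ} (hz : z ∈ ball (0 : ℂ) 1) : ‖G z ^ N * K z‖ ≤ 1 := by
  refine norm_le_one_of_norm_mul_le_one (P := fun z ↦ partialBlaschke m a F z ^ N)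
    (L := fun z ↦ G z ^ N * K z) (fun w hw ↦ ?_) (fun w hw ↦ ?_)
    ((hG.pow N).mul hK).differentiableOn (fun w hw ↦ ?_) hz
  · exact ((analyticAt_partialBlaschke ha F (mem_closedBall_zero_iff.1 hw)).continuousAt.pow
      N).continuousWithinAt
  · rw [norm_pow, norm_partialBlaschke_eq_one ha F hw, one_pow]
  · rw [← mul_assoc, ← mul_pow, mul_comm (partialBlaschke m a F w), ← hBG w hw]
    exact hBK w hw

lemma norm_le_norm_of_eq_mul_partialBlaschke {B G G' : ℂ → ℂ} {F F' : Finset ι} (hF : F ⊆ F')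
    (hG : AnalyticOnNhd ℂ G (ball 0 1)) (hG' : AnalyticOnNhd ℂ G' (ball 0 1))
    (hBG : ∀ z ∈ ball (0 : ℂ) 1, B z = G z * partialBlaschke m a F z)
    (hBG' : ∀ z ∈ ball (0 : ℂ) 1, B z = G' z * partialBlaschke m a F' z)
    {z : ℂ} (hz : z ∈ ball (0 : ℂ) 1) : ‖G z‖ ≤ ‖G' z‖ := by
  have hz1 : ‖z‖ ≤ 1 := (mem_ball_zero_iff.1 hz).le
  have hne_top : analyticOrderAt (partialBlaschke m a F) z ≠ ⊤ := by
    rw [analyticOrderAt_partialBlaschke ha F hz1]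
    split_ifs <;> simp
  refine le_of_eventually_ne_zero_imp_le (analyticAt_partialBlaschke ha F hz1) hne_top
    (hG z hz).continuousAt.norm (hG' z hz).continuousAt.norm ?_
  filter_upwards [isOpen_ball.mem_nhds hz] with w hw hne
  refine le_of_mul_le_mul_right ?_ (norm_pos_iff.2 hne)
  calc ‖G w‖ * ‖partialBlaschke m a F w‖ = ‖G' w‖ * ‖partialBlaschke m a F' w‖ := by
        rw [← norm_mul, ← norm_mul, ← hBG w hw, ← hBG' w hw]
    _ ≤ ‖G' w‖ * ‖partialBlaschke m a F w‖ := by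
        gcongr
        exact norm_partialBlaschke_anti ha hF (mem_ball_zero_iff.1 hw).le

end PartialBlaschke

/-- The zeros of `B` in the punctured unit disk, counted with multiplicity: a zero `z` of order `k`
appears as the indices `(z, 0), …, (z, k - 1)`. -/
def PuncturedDiskZero (B : ℂ → ℂ) : Type :=
  {q : ℂ × ℕ // q.1 ≠ 0 ∧ ‖q.1‖ < 1 ∧ q.2 < analyticOrderAt B q.1}

namespace PuncturedDiskZero

variable {B : ℂ → ℂ}

/-- The zero belonging to an index. -/
def point (j : PuncturedDiskZero B) : ℂ := j.1.1

lemma point_ne_zero_and_norm_lt_one (j : PuncturedDiskZero B) : j.point ≠ 0 ∧ ‖j.point‖ < 1 :=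
  ⟨j.2.1, j.2.2.1⟩

lemma card_filter_point_eq_le (F : Finset (PuncturedDiskZero B)) (z : ℂ) :
    (F.filter (point · = z)).card ≤ analyticOrderAt B z := by
  rcases eq_or_ne (analyticOrderAt B z) ⊤ with htop | htop
  · exact htop ▸ le_top
  rw [← Nat.cast_analyticOrderNatAt htop, Nat.cast_le,
    ← Finset.card_range (analyticOrderNatAt B z)]
  refine Finset.card_le_card_of_injOn (fun j ↦ j.1.2) (fun j hj ↦ ?_) fun i hi j hj hij ↦ ?_
  · obtain rfl := (Finset.mem_filter.1 hj).2
    rw [Finset.coe_range, Set.mem_Iio, ← Nat.cast_lt (α := ℕ∞), Nat.cast_analyticOrderNatAt htop]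
    exact j.2.2.2
  · exact Subtype.ext (Prod.ext
      ((Finset.mem_filter.1 hi).2.trans (Finset.mem_filter.1 hj).2.symm) hij)

lemma exists_le_card_filter_point_eq {z : ℂ} (hz0 : z ≠ 0) (hz : ‖z‖ < 1)
    (htop : analyticOrderAt B z ≠ ⊤) :
    ∃ F : Finset (PuncturedDiskZero B), analyticOrderAt B z ≤ (F.filter (point · = z)).card := by
  let index (i : Fin (analyticOrderNatAt B z)) : PuncturedDiskZero B :=
    ⟨(z, i), hz0, hz, by
      rw [← Nat.cast_analyticOrderNatAt htop]
      exact Nat.cast_lt.2 i.2⟩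
  have hindex : Function.Injective index := fun i j h ↦
    Fin.ext (congrArg (fun q : PuncturedDiskZero B ↦ q.1.2) h)
  refine ⟨Finset.univ.map ⟨index, hindex⟩, ?_⟩
  rw [Finset.filter_true_of_mem, Finset.card_map, Finset.card_univ, Fintype.card_fin,
    Nat.cast_analyticOrderNatAt htop]
  intro j hj
  obtain ⟨i, -, rfl⟩ := Finset.mem_map.1 hj
  rfl

lemma analyticOrderAt_partialBlaschke_point_le (hB : analyticOrderAt B 0 ≠ ⊤)
    (F : Finset (PuncturedDiskZero B)) {z : ℂ} (hz : ‖z‖ < 1) :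
    analyticOrderAt (partialBlaschke (analyticOrderNatAt B 0) point F) z ≤ analyticOrderAt B z := by
  rw [analyticOrderAt_partialBlaschke point_ne_zero_and_norm_lt_one F hz.le]
  rcases eq_or_ne z 0 with rfl | hz0
  · rw [if_pos rfl, Finset.filter_false_of_mem fun j _ ↦ j.2.1, Nat.cast_analyticOrderNatAt hB,
      Finset.card_empty, Nat.cast_zero, add_zero]
  · rw [if_neg hz0, Nat.cast_zero, zero_add]
    exact card_filter_point_eq_le F z

lemma exists_le_analyticOrderAt_partialBlaschke_point {z : ℂ} (hz : ‖z‖ < 1)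
    (htop : analyticOrderAt B z ≠ ⊤) :
    ∃ F : Finset (PuncturedDiskZero B), analyticOrderAt B z ≤
      analyticOrderAt (partialBlaschke (analyticOrderNatAt B 0) point F) z := by
  rcases eq_or_ne z 0 with rfl | hz0
  · refine ⟨∅, ?_⟩
    rw [analyticOrderAt_partialBlaschke point_ne_zero_and_norm_lt_one ∅ hz.le, if_pos rfl,
      Nat.cast_analyticOrderNatAt htop]
    exact le_self_add
  · obtain ⟨F, hF⟩ := exists_le_card_filter_point_eq hz0 hz htop
    refine ⟨F, ?_⟩
    rw [analyticOrderAt_partialBlaschke point_ne_zero_and_norm_lt_one F hz.le]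
    exact hF.trans le_add_self

end PuncturedDiskZero

open PuncturedDiskZero in
lemma exists_eq_mul_partialBlaschke_point {B : ℂ → ℂ} (hB : AnalyticOnNhd ℂ B (ball 0 1))
    (hB_ne_top : ∀ z ∈ ball (0 : ℂ) 1, analyticOrderAt B z ≠ ⊤)
    (F : Finset (PuncturedDiskZero B)) :
    ∃ G, AnalyticOnNhd ℂ G (ball 0 1) ∧
      ∀ z ∈ ball (0 : ℂ) 1, B z = G z * partialBlaschke (analyticOrderNatAt B 0) point F z := by
  have hle (z : ℂ) (hz : z ∈ ball (0 : ℂ) 1) :=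
    analyticOrderAt_partialBlaschke_point_le (hB_ne_top 0 (mem_ball_self one_pos)) F
      (mem_ball_zero_iff.1 hz)
  obtain ⟨G, hG, hBG⟩ := exists_analyticOnNhd_mul_eventuallyEq hB
    (fun z hz ↦ analyticAt_partialBlaschke point_ne_zero_and_norm_lt_one F
      (mem_ball_zero_iff.1 hz).le)
    (fun z hz ↦ ne_top_of_le_ne_top (hB_ne_top z hz) (hle z hz)) hle
  exact ⟨G, hG, fun z hz ↦ (hBG z hz).eq_of_nhds⟩

lemma ne_zero_of_eq_mul_of_analyticOrderAt_le {B G P : ℂ → ℂ} {z : ℂ} (hG : AnalyticAt ℂ G z)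
    (hP : AnalyticAt ℂ P z) (hBG : B =ᶠ[𝓝 z] G * P) (hB_ne_top : analyticOrderAt B z ≠ ⊤)
    (hle : analyticOrderAt B z ≤ analyticOrderAt P z) : G z ≠ 0 := by
  rw [analyticOrderAt_congr hBG, analyticOrderAt_mul hG hP] at hle hB_ne_top
  have hP_ne_top : analyticOrderAt P z ≠ ⊤ := ne_top_of_le_ne_top hB_ne_top le_add_self
  refine hG.analyticOrderAt_eq_zero.1 (nonpos_iff_eq_zero.1 ?_)
  exact (ENat.add_le_add_iff_right hP_ne_top).1 (hle.trans_eq (zero_add _).symm)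

/-- A zero-free function `h` that can play the role of the singular inner times outer factor of
`B`: any bound `‖B ^ N * K‖ ≤ 1` persists when `B` is replaced by `h`. -/
structure IsZeroFreeFactor (B h : ℂ → ℂ) : Prop where
  analyticOnNhd : AnalyticOnNhd ℂ h (ball 0 1)
  ne_zero : ∀ z ∈ ball (0 : ℂ) 1, h z ≠ 0
  norm_le : ∀ z ∈ ball (0 : ℂ) 1, ‖B z‖ ≤ ‖h z‖
  norm_pow_mul_le_one : ∀ (N : ℕ) (K : ℂ → ℂ), AnalyticOnNhd ℂ K (ball 0 1) →
    (∀ z ∈ ball (0 : ℂ) 1, ‖B z ^ N * K z‖ ≤ 1) → ∀ z ∈ ball (0 : ℂ) 1, ‖h z ^ N * K z‖ ≤ 1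

lemma IsZeroFreeFactor.norm_le_one {B h : ℂ → ℂ} (hh : IsZeroFreeFactor B h)
    (hB1 : ∀ z ∈ ball (0 : ℂ) 1, ‖B z‖ ≤ 1) {z : ℂ} (hz : z ∈ ball (0 : ℂ) 1) : ‖h z‖ ≤ 1 := by
  simpa using hh.norm_pow_mul_le_one 1 (fun _ ↦ 1) analyticOnNhd_const (by simpa using hB1) z hz

section RieszFactorization

open PuncturedDiskZero

variable {B : ℂ → ℂ}

lemma norm_le_one_of_eq_mul_partialBlaschke_point (hB1 : ∀ z ∈ ball (0 : ℂ) 1, ‖B z‖ ≤ 1)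
    {G : ℂ → ℂ} (hG : AnalyticOnNhd ℂ G (ball 0 1)) {m : ℕ} {F : Finset (PuncturedDiskZero B)}
    (hBG : ∀ z ∈ ball (0 : ℂ) 1, B z = G z * partialBlaschke m point F z) {z : ℂ}
    (hz : z ∈ ball (0 : ℂ) 1) : ‖G z‖ ≤ 1 := by
  simpa using norm_pow_mul_le_one_of_eq_mul_partialBlaschke point_ne_zero_and_norm_lt_one hG hBG
    (N := 1) (K := fun _ ↦ 1) analyticOnNhd_const (by simpa using hB1) hz

lemma summable_one_sub_norm_point (hB : AnalyticOnNhd ℂ B (ball 0 1))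
    (hB1 : ∀ z ∈ ball (0 : ℂ) 1, ‖B z‖ ≤ 1)
    (hB_ne_top : ∀ z ∈ ball (0 : ℂ) 1, analyticOrderAt B z ≠ ⊤) :
    Summable fun j : PuncturedDiskZero B ↦ 1 - ‖j.point‖ := by
  have h0 := mem_ball_self (x := (0 : ℂ)) one_pos
  obtain ⟨w, hBw, hw⟩ := (((hB 0 h0).eventually_eq_zero_or_eventually_ne_zero.resolve_left
    fun h ↦ hB_ne_top 0 h0 (analyticOrderAt_eq_top.2 h)).and
      (mem_nhdsWithin_of_mem_nhds (isOpen_ball.mem_nhds h0))).exists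
  refine summable_of_sum_le (c := -(2 * Real.log ‖B w‖) / ((1 - ‖w‖ ^ 2) / 4))
    (fun j ↦ sub_nonneg.2 j.point_ne_zero_and_norm_lt_one.2.le) fun F ↦ ?_
  obtain ⟨G, hG, hBG⟩ := exists_eq_mul_partialBlaschke_point hB hB_ne_top F
  refine sum_one_sub_norm_le (m := analyticOrderNatAt B 0) point_ne_zero_and_norm_lt_one F
    (mem_ball_zero_iff.1 hw) (norm_pos_iff.2 hBw) ?_
  rw [hBG w hw, norm_mul]
  exact mul_le_of_le_one_left (norm_nonneg _)
    (norm_le_one_of_eq_mul_partialBlaschke_point hB1 hG hBG hw)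

variable {G : Finset (PuncturedDiskZero B) → ℂ → ℂ} {u : Filter (Finset (PuncturedDiskZero B))}
  [u.NeBot] {h : ℂ → ℂ}

lemma isZeroFreeFactor_of_tendstoLocallyUniformlyOn
    (hB_ne_top : ∀ z ∈ ball (0 : ℂ) 1, analyticOrderAt B z ≠ ⊤)
    (hG : ∀ F, AnalyticOnNhd ℂ (G F) (ball 0 1))
    (hBG : ∀ F, ∀ z ∈ ball (0 : ℂ) 1,
      B z = G F z * partialBlaschke (analyticOrderNatAt B 0) point F z)
    (hu : u ≤ atTop) (hh : TendstoLocallyUniformlyOn G h u (ball 0 1)) : IsZeroFreeFactor B h where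
  analyticOnNhd := (hh.differentiableOn (.of_forall fun F ↦ (hG F).differentiableOn)
    isOpen_ball).analyticOnNhd isOpen_ball
  ne_zero z hz := by
    have hz1 := mem_ball_zero_iff.1 hz
    obtain ⟨F₀, hF₀⟩ :=
      exists_le_analyticOrderAt_partialBlaschke_point hz1 (hB_ne_top z hz)
    have hG₀ : G F₀ z ≠ 0 := ne_zero_of_eq_mul_of_analyticOrderAt_le (hG F₀ z hz)
      (analyticAt_partialBlaschke point_ne_zero_and_norm_lt_one F₀ hz1.le)
      (eventually_of_mem (isOpen_ball.mem_nhds hz) (hBG F₀)) (hB_ne_top z hz) hF₀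
    have hle : ‖G F₀ z‖ ≤ ‖h z‖ := by
      refine ge_of_tendsto (hh.tendsto_at hz).norm ?_
      filter_upwards [hu (eventually_ge_atTop F₀)] with F hF
      exact norm_le_norm_of_eq_mul_partialBlaschke point_ne_zero_and_norm_lt_one hF (hG F₀) (hG F)
        (hBG F₀) (hBG F) hz
    exact norm_pos_iff.1 ((norm_pos_iff.2 hG₀).trans_le hle)
  norm_le z hz := by
    refine ge_of_tendsto (hh.tendsto_at hz).norm (.of_forall fun F ↦ ?_)
    rw [hBG F z hz, norm_mul]
    exact mul_le_of_le_one_right (norm_nonneg _) (norm_partialBlaschke_le_one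
      point_ne_zero_and_norm_lt_one F (mem_ball_zero_iff.1 hz).le)
  norm_pow_mul_le_one N K hK hBK z hz :=
    le_of_tendsto (((hh.tendsto_at hz).pow N).mul tendsto_const_nhds).norm (.of_forall fun F ↦
      norm_pow_mul_le_one_of_eq_mul_partialBlaschke point_ne_zero_and_norm_lt_one (hG F) (hBG F)
        hK hBK hz)

lemma eq_pow_mul_tprod_mul_of_tendsto {m : ℕ} {z : ℂ} (hz : ‖z‖ < 1)
    (hsum : Summable fun j : PuncturedDiskZero B ↦ 1 - ‖j.point‖)
    (hBG : ∀ F, B z = G F z * partialBlaschke m point F z)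
    (hu : u ≤ atTop) (hh : Tendsto (G · z) u (𝓝 (h z))) :
    B z = z ^ m * (∏' j : PuncturedDiskZero B, blaschkeFactor j.point z) * h z := by
  have hprod := (multipliable_blaschkeFactor point_ne_zero_and_norm_lt_one hsum hz).hasProd
  refine tendsto_nhds_unique (tendsto_const_nhds.congr fun F ↦ ?_)
    ((tendsto_const_nhds.mul (hprod.mono_left hu)).mul hh)
  rw [hBG F, partialBlaschke, mul_comm]

/-- The Riesz factorization of `B`; the zero-free factor is a limit of the quotients of `B` by the
partial Blaschke products of its zeros. -/
lemma exists_isZeroFreeFactor (hB : AnalyticOnNhd ℂ B (ball 0 1))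
    (hB1 : ∀ z ∈ ball (0 : ℂ) 1, ‖B z‖ ≤ 1)
    (hB_ne_top : ∀ z ∈ ball (0 : ℂ) 1, analyticOrderAt B z ≠ ⊤) :
    ∃ h, IsZeroFreeFactor B h ∧ ∀ z ∈ ball (0 : ℂ) 1, B z =
      z ^ analyticOrderNatAt B 0 * (∏' j : PuncturedDiskZero B, blaschkeFactor j.point z) *
        h z := by
  choose G hG hBG using exists_eq_mul_partialBlaschke_point hB hB_ne_top
  obtain ⟨h, hh⟩ := exists_tendstoLocallyUniformlyOn (u := .of atTop) (F := G) (U := ball 0 1)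
    fun x hx ↦ by
      obtain ⟨R, hR, hsub⟩ := Metric.isOpen_iff.1 isOpen_ball x hx
      exact ⟨R, hR, 1, .of_forall fun F ↦ ⟨(hG F).differentiableOn.mono hsub, fun z hz ↦
        norm_le_one_of_eq_mul_partialBlaschke_point hB1 (hG F) (hBG F) (hsub hz)⟩⟩
  have hu := Ultrafilter.of_le (atTop : Filter (Finset (PuncturedDiskZero B)))
  exact ⟨h, isZeroFreeFactor_of_tendstoLocallyUniformlyOn hB_ne_top hG hBG hu hh, fun z hz ↦
    eq_pow_mul_tprod_mul_of_tendsto (mem_ball_zero_iff.1 hz)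
      (summable_one_sub_norm_point hB hB1 hB_ne_top) (hBG · z hz) hu (hh.tendsto_at hz)⟩

end RieszFactorization

/-! ### Comparison with the punctured disk -/

lemma cosh_half_le_sinh_div {s : ℝ} (hs : 0 < s) : Real.cosh (s / 2) ≤ Real.sinh s / s := by
  have hsinh : Real.sinh s = 2 * Real.sinh (s / 2) * Real.cosh (s / 2) := by
    rw [← Real.sinh_two_mul, mul_div_cancel₀ s two_ne_zero]
  have hle : s / 2 ≤ Real.sinh (s / 2) := Real.self_le_sinh_iff.2 (by positivity)
  rw [le_div_iff₀ hs, hsinh]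
  nlinarith [Real.cosh_pos (s / 2)]

lemma exp_le_cosh_half_pow {s : ℝ} (hs : 4 ≤ s) : Real.exp s ≤ Real.cosh (s / 2) ^ 8 := by
  have hexp : Real.exp (s / 8) ≤ Real.cosh (s / 2) := by
    have hmul : Real.exp (s / 2) = Real.exp (s / 8) * Real.exp (3 * s / 8) := by
      rw [← Real.exp_add]
      ring_nf
    rw [Real.cosh_eq, hmul]
    nlinarith [Real.add_one_le_exp (3 * s / 8), Real.exp_pos (-(s / 2)), Real.exp_pos (s / 8)]
  calc Real.exp s = Real.exp (s / 8) ^ 8 := by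
        rw [← Real.exp_nat_mul]
        ring_nf
    _ ≤ Real.cosh (s / 2) ^ 8 := by gcongr

lemma exists_exp_sub_le_sinh_div_pow {ε : ℝ} (hε : 0 < ε) :
    ∃ M : ℕ, ∀ s : ℝ, 0 < s → Real.exp (s - ε) ≤ (Real.sinh s / s) ^ (M + 1) := by
  obtain ⟨N, hN⟩ := pow_unbounded_of_one_lt (Real.exp 4)
    (Real.one_lt_cosh.2 (half_pos hε).ne')
  refine ⟨N + 7, fun s hs ↦
    le_trans ?_ (pow_le_pow_left₀ (Real.cosh_pos _).le (cosh_half_le_sinh_div hs) _)⟩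
  have hone := Real.one_le_cosh (s / 2)
  rcases le_total s ε with hsε | hεs
  · exact (Real.exp_le_one_iff.2 (sub_nonpos.2 hsε)).trans (one_le_pow₀ hone)
  rcases le_total s 4 with hs4 | h4s
  · have hcosh : Real.cosh (ε / 2) ≤ Real.cosh (s / 2) := by
      rw [Real.cosh_le_cosh, abs_of_pos (half_pos hε), abs_of_pos (half_pos hs)]
      gcongr
    calc Real.exp (s - ε) ≤ Real.exp 4 := Real.exp_le_exp.2 (by linarith)
      _ ≤ Real.cosh (ε / 2) ^ N := hN.le
      _ ≤ Real.cosh (s / 2) ^ N := by gcongr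
      _ ≤ Real.cosh (s / 2) ^ (N + 7 + 1) := pow_le_pow_right₀ hone (by lia)
  · calc Real.exp (s - ε) ≤ Real.exp s := Real.exp_le_exp.2 (by linarith)
      _ ≤ Real.cosh (s / 2) ^ 8 := exp_le_cosh_half_pow h4s
      _ ≤ Real.cosh (s / 2) ^ (N + 7 + 1) := pow_le_pow_right₀ hone (by lia)

lemma pow_mul_exp_neg_le_pow {ε : ℝ} {M : ℕ}
    (hM : ∀ s : ℝ, 0 < s → Real.exp (s - ε) ≤ (Real.sinh s / s) ^ (M + 1)) {x y : ℝ} (hx : 0 < x)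
    (hx1 : x < 1) (hxy : 1 - x ^ 2 ≤ 2 * y * -Real.log x) :
    x ^ M * Real.exp (-ε) ≤ y ^ (M + 1) := by
  obtain ⟨s, rfl⟩ : ∃ s, Real.exp (-s) = x := ⟨-Real.log x, by rw [neg_neg, Real.exp_log hx]⟩
  have hs : 0 < s := neg_neg_iff_pos.1 (Real.exp_lt_one_iff.1 hx1)
  rw [Real.log_exp, neg_neg] at hxy
  have hsinh : 2 * Real.exp (-s) * Real.sinh s = 1 - Real.exp (-s) ^ 2 := by
    have hone : Real.exp (-s) * Real.exp s = 1 := by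
      rw [← Real.exp_add, neg_add_cancel, Real.exp_zero]
    rw [Real.sinh_eq]
    linear_combination hone
  have hpos : 0 < Real.sinh s / s := div_pos (Real.sinh_pos_iff.2 hs) hs
  have hle : Real.exp (-s) * (Real.sinh s / s) ≤ y := by
    rw [← mul_div_assoc, div_le_iff₀ hs]
    linarith
  calc Real.exp (-s) ^ M * Real.exp (-ε) = Real.exp (-s) ^ (M + 1) * Real.exp (s - ε) := by
        rw [pow_succ, mul_assoc, ← Real.exp_add]
        ring_nf
    _ ≤ Real.exp (-s) ^ (M + 1) * (Real.sinh s / s) ^ (M + 1) := by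
        gcongr
        exact hM s hs
    _ = (Real.exp (-s) * (Real.sinh s / s)) ^ (M + 1) := (mul_pow _ _ _).symm
    _ ≤ y ^ (M + 1) := pow_le_pow_left₀ (mul_pos (Real.exp_pos _) hpos).le hle _

lemma continuousAt_inv_neg_log {x : ℝ} (hx : 0 ≤ x) (hx1 : x < 1) :
    ContinuousAt (fun x : ℝ ↦ (-Real.log x)⁻¹) x := by
  rcases hx.eq_or_lt with rfl | hx0
  · rw [continuousAt_iff_punctured_nhds]
    simp only [Real.log_zero, neg_zero, inv_zero]
    exact tendsto_inv_atTop_zero.comp (tendsto_neg_atBot_atTop.comp Real.tendsto_log_nhdsNE_zero)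
  · exact (Real.continuousAt_log hx0.ne').neg.inv₀ (neg_ne_zero.2 (Real.log_neg hx0 hx1).ne)

lemma exists_analyticAt_exp_eq {B : ℂ → ℂ} {z : ℂ} (hB : AnalyticAt ℂ B z) (hBz : B z ≠ 0) :
    ∃ L, AnalyticAt ℂ L z ∧ ∀ᶠ w in 𝓝 z, Complex.exp (L w) = B w := by
  refine ⟨fun w ↦ Complex.log (B w / B z) + Complex.log (B z),
    ((hB.fun_div analyticAt_const hBz).clog ?_).fun_add analyticAt_const, ?_⟩
  · rw [div_self hBz]
    exact Complex.one_mem_slitPlane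
  · filter_upwards [hB.continuousAt.eventually_ne hBz] with w hw
    rw [Complex.exp_add, Complex.exp_log (div_ne_zero hw hBz), Complex.exp_log hBz,
      div_mul_cancel₀ _ hBz]

lemma deriv_mul_eq_of_exp_eventuallyEq {B L : ℂ → ℂ} {z : ℂ} (hL : DifferentiableAt ℂ L z)
    (hLB : ∀ᶠ w in 𝓝 z, Complex.exp (L w) = B w) : deriv L z * B z = deriv B z := by
  rw [← EventuallyEq.deriv_eq hLB, hL.hasDerivAt.cexp.deriv, ← hLB.self_of_nhds, mul_comm]

lemma one_sub_norm_cayley_sq {w : ℂ} (hw : 1 - w ≠ 0) :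
    1 - ‖(1 + w) / (1 - w)‖ ^ 2 = -4 * w.re / ‖1 - w‖ ^ 2 := by
  have hne : ‖1 - w‖ ^ 2 ≠ 0 := pow_ne_zero 2 (norm_ne_zero_iff.2 hw)
  rw [norm_div, div_pow, eq_div_iff hne, sub_mul, div_mul_cancel₀ _ hne, one_mul,
    Complex.sq_norm, Complex.sq_norm, Complex.normSq_apply, Complex.normSq_apply]
  simp only [Complex.add_re, Complex.add_im, Complex.sub_re, Complex.sub_im, Complex.one_re,
    Complex.one_im]
  ring

lemma deriv_cayley_comp {L : ℂ → ℂ} {z : ℂ} (hL : DifferentiableAt ℂ L z) (hz : 1 - L z ≠ 0) :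
    deriv (fun w ↦ (1 + L w) / (1 - L w)) z = 2 * deriv L z / (1 - L z) ^ 2 := by
  rw [((hL.hasDerivAt.const_add 1).fun_div (hL.hasDerivAt.const_sub 1) hz).deriv]
  ring

lemma one_sub_ne_zero_of_re_neg {l : ℂ} (hl : l.re < 0) : 1 - l ≠ 0 := fun h ↦ by
  rw [← sub_eq_zero.1 h, Complex.one_re] at hl
  exact hl.not_gt one_pos

lemma norm_cayley_lt_one {l : ℂ} (hl : l.re < 0) : ‖(1 + l) / (1 - l)‖ < 1 := by
  have hne := one_sub_ne_zero_of_re_neg hl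
  have hpos : 0 < 1 - ‖(1 + l) / (1 - l)‖ ^ 2 := by
    rw [one_sub_norm_cayley_sq hne]
    exact div_pos (by linarith) (pow_pos (norm_pos_iff.2 hne) 2)
  exact lt_of_pow_lt_pow_left₀ 2 zero_le_one (by linarith)

lemma norm_mul_div_one_sub_norm_cayley_sq {b l t k : ℂ} (hexp : Complex.exp l = b)
    (hl : l.re < 0) (hk : k ≠ 0) :
    ‖t‖ / (2 * ‖k‖) * (-Real.log ‖b‖)⁻¹ =
      ‖b / k * (2 * t / (b * (1 - l) ^ 2))‖ / (1 - ‖(1 + l) / (1 - l)‖ ^ 2) := by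
  subst hexp
  have hne := one_sub_ne_zero_of_re_neg hl
  rw [one_sub_norm_cayley_sq hne]
  simp only [norm_div, norm_mul, norm_pow, Complex.norm_ofNat, Complex.norm_exp, Real.log_exp]
  have := norm_ne_zero_iff.2 hne
  have := norm_ne_zero_iff.2 hk
  have := hl.ne
  field_simp
  ring

lemma deriv_cayley_comp_of_exp_eventuallyEq {B L : ℂ → ℂ} {z t : ℂ} (hL : DifferentiableAt ℂ L z)
    (hLB : ∀ᶠ w in 𝓝 z, Complex.exp (L w) = B w) (hLz : (L z).re < 0) {q : ℂ}
    (hBt : deriv B z = t * q) :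
    deriv (fun w ↦ (1 + L w) / (1 - L w)) z = 2 * t / (B z * (1 - L z) ^ 2) * q := by
  have hBz : B z ≠ 0 := hLB.self_of_nhds ▸ Complex.exp_ne_zero _
  have hderiv : deriv L z = t * q / B z := by
    rw [← hBt, ← deriv_mul_eq_of_exp_eventuallyEq hL hLB, mul_div_cancel_right₀ _ hBz]
  rw [deriv_cayley_comp hL (one_sub_ne_zero_of_re_neg hLz), hderiv]
  field_simp

/-- The metric of the punctured disk, pulled back by `B` and multiplied by `B / h`; a local
logarithm of `B` followed by the Cayley transform of the left half-plane exhibits it as a pullback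
of the hyperbolic metric of the disk. -/
lemma isSubsolutionDensity_inv_neg_log {p B θ h : ℂ → ℂ} (hB : AnalyticOnNhd ℂ B (ball 0 1))
    (hB1 : ∀ z ∈ ball (0 : ℂ) 1, ‖B z‖ < 1) (hθ : AnalyticOnNhd ℂ θ (ball 0 1))
    (hBθ : ∀ z ∈ ball (0 : ℂ) 1, deriv B z = θ z * p z) (hh : AnalyticOnNhd ℂ h (ball 0 1))
    (hh0 : ∀ z ∈ ball (0 : ℂ) 1, h z ≠ 0) (hBh : ∀ z ∈ ball (0 : ℂ) 1, ‖B z‖ ≤ ‖h z‖) :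
    IsSubsolutionDensity p (fun z ↦ ‖θ z‖ / (2 * ‖h z‖) * (-Real.log ‖B z‖)⁻¹) := by
  refine ⟨?_, fun z hz hκ ↦ ?_⟩
  · refine (hθ.continuousOn.norm.div (continuousOn_const.mul hh.continuousOn.norm) fun z hz ↦
      mul_ne_zero two_ne_zero (norm_ne_zero_iff.2 (hh0 z hz))).mul fun z hz ↦ ?_
    exact (ContinuousAt.comp (f := fun z ↦ ‖B z‖)
      (continuousAt_inv_neg_log (norm_nonneg _) (hB1 z hz))
      (hB z hz).continuousAt.norm).continuousWithinAt
  · have hBz : B z ≠ 0 := fun h0 ↦ hκ (by simp [h0])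
    obtain ⟨L, hL, hexp⟩ := exists_analyticAt_exp_eq (hB z hz) hBz
    have hball : ∀ᶠ w in 𝓝 z, w ∈ ball (0 : ℂ) 1 := isOpen_ball.mem_nhds hz
    have hre : ∀ᶠ w in 𝓝 z, (L w).re < 0 := by
      filter_upwards [hexp, hball] with w hw hw1
      rw [← Real.exp_lt_one_iff, ← Complex.norm_exp, hw]
      exact hB1 w hw1
    have hne := one_sub_ne_zero_of_re_neg hre.self_of_nhds
    refine ⟨fun w ↦ B w / h w, fun w ↦ 2 * θ w / (B w * (1 - L w) ^ 2),
      fun w ↦ (1 + L w) / (1 - L w), (hB z hz).fun_div (hh z hz) (hh0 z hz),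
      (analyticAt_const.fun_mul (hθ z hz)).fun_div
        ((hB z hz).fun_mul ((analyticAt_const.fun_sub hL).fun_pow 2))
        (mul_ne_zero hBz (pow_ne_zero 2 hne)),
      (analyticAt_const.fun_add hL).fun_div (analyticAt_const.fun_sub hL) hne, ?_,
      norm_cayley_lt_one hre.self_of_nhds, ?_, ?_⟩
    · filter_upwards [hexp.eventually_nhds, hre, hL.eventually_analyticAt, hball]
        with w hexp_w hre_w hL_w hw
      exact deriv_cayley_comp_of_exp_eventuallyEq hL_w.differentiableAt hexp_w hre_w (hBθ w hw)
    · rw [norm_div]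
      exact div_le_one_of_le₀ (hBh z hz) (norm_nonneg _)
    · filter_upwards [hexp, hre, hball] with w hexp_w hre_w hw
      exact norm_mul_div_one_sub_norm_cayley_sq hexp_w hre_w (hh0 w hw)

lemma exists_deriv_eq_mul {f p : ℂ → ℂ} {U : Set ℂ} (hf : AnalyticOnNhd ℂ f U)
    (hp : AnalyticOnNhd ℂ p U) (hp_ne_top : ∀ z ∈ U, analyticOrderAt p z ≠ ⊤)
    (hle : ∀ z ∈ U, analyticOrderAt p z ≤ analyticOrderAt (deriv f) z) :
    ∃ θ, AnalyticOnNhd ℂ θ U ∧ ∀ z ∈ U, deriv f z = θ z * p z := by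
  obtain ⟨θ, hθ, hfθ⟩ := exists_analyticOnNhd_mul_eventuallyEq hf.deriv hp hp_ne_top hle
  exact ⟨θ, hθ, fun z hz ↦ (hfθ z hz).eq_of_nhds⟩

lemma analyticOrderAt_ne_top_of_deriv {f : ℂ → ℂ} {z : ℂ}
    (hf : analyticOrderAt (deriv f) z ≠ ⊤) : analyticOrderAt f z ≠ ⊤ := fun htop ↦ by
  refine hf (analyticOrderAt_eq_top.2 ?_)
  filter_upwards [(analyticOrderAt_eq_top.1 htop).eventually_nhds] with w hw
  rw [EventuallyEq.deriv_eq (f := fun _ ↦ 0) hw, deriv_const]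

namespace IsDominant

variable {p B h : ℂ → ℂ}

lemma norm_lt_one (hB : IsDominant p B) {z : ℂ} (hz : z ∈ ball (0 : ℂ) 1) : ‖B z‖ < 1 :=
  (hB.norm_le z hz).trans_lt (mem_ball_zero_iff.1 hz)

section

variable (hB : IsDominant p B) (hp : AnalyticOnNhd ℂ p (ball 0 1))
  (hp_ne_top : ∀ z ∈ ball (0 : ℂ) 1, analyticOrderAt p z ≠ ⊤)
include hB hp hp_ne_top

lemma one_sub_norm_sq_le (hh : IsZeroFreeFactor B h) {z : ℂ} (hz : z ∈ ball (0 : ℂ) 1)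
    (hBz : B z ≠ 0) (hBz' : deriv B z ≠ 0) :
    1 - ‖B z‖ ^ 2 ≤ 2 * ‖h z‖ * -Real.log ‖B z‖ := by
  obtain ⟨θ, hθ, hBθ⟩ := exists_deriv_eq_mul hB.analyticOnNhd hp hp_ne_top hB.order_le
  have hle := hB.density_le _ (isSubsolutionDensity_inv_neg_log hB.analyticOnNhd
    (fun _ ↦ hB.norm_lt_one) hθ hBθ hh.analyticOnNhd hh.ne_zero hh.norm_le) z hz
  have hlog : 0 < -Real.log ‖B z‖ :=
    neg_pos.2 (Real.log_neg (norm_pos_iff.2 hBz) (hB.norm_lt_one hz))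
  have hh_pos : 0 < ‖h z‖ := norm_pos_iff.2 (hh.ne_zero z hz)
  have hderiv : ‖deriv B z‖ = ‖θ z‖ * ‖p z‖ := by rw [hBθ z hz, norm_mul]
  refine le_of_mul_le_mul_left ?_ (norm_pos_iff.2 hBz')
  calc ‖deriv B z‖ * (1 - ‖B z‖ ^ 2)
      = ‖θ z‖ / (2 * ‖h z‖) * (-Real.log ‖B z‖)⁻¹ * ‖p z‖ * (1 - ‖B z‖ ^ 2) *
          (2 * ‖h z‖ * -Real.log ‖B z‖) := by
        rw [hderiv]
        generalize -Real.log ‖B z‖ = l at hlog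
        field_simp
    _ ≤ ‖deriv B z‖ * (2 * ‖h z‖ * -Real.log ‖B z‖) :=
        mul_le_mul_of_nonneg_right hle (by positivity)

lemma exists_norm_pow_mul_exp_neg_le (hB_ne_top : ∀ z ∈ ball (0 : ℂ) 1,
      analyticOrderAt (deriv B) z ≠ ⊤) (hh : IsZeroFreeFactor B h) {ε : ℝ} (hε : 0 < ε) :
    ∃ M : ℕ, ∀ z ∈ ball (0 : ℂ) 1, ‖B z‖ ^ M * Real.exp (-ε) ≤ ‖h z‖ ^ (M + 1) := by
  obtain ⟨M, hM⟩ := exists_exp_sub_le_sinh_div_pow hε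
  refine ⟨M, fun z hz ↦ ?_⟩
  have hBz := hB.analyticOnNhd z hz
  refine le_of_eventually_ne_zero_imp_le (d := B * deriv B) (hBz.mul hBz.deriv) ?_
    ((hBz.continuousAt.norm.pow M).mul continuousAt_const)
    ((hh.analyticOnNhd z hz).continuousAt.norm.pow (M + 1)) ?_
  · rw [analyticOrderAt_mul hBz hBz.deriv]
    exact WithTop.add_ne_top.2
      ⟨analyticOrderAt_ne_top_of_deriv (hB_ne_top z hz), hB_ne_top z hz⟩
  · filter_upwards [isOpen_ball.mem_nhds hz] with w hw hne
    obtain ⟨hBw, hBw'⟩ := mul_ne_zero_iff.1 hne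
    exact pow_mul_exp_neg_le_pow hM (norm_pos_iff.2 hBw) (hB.norm_lt_one hw)
      (hB.one_sub_norm_sq_le hp hp_ne_top hh hw hBw hBw')

lemma one_le_norm_of_isZeroFreeFactor (hB_ne_top : ∀ z ∈ ball (0 : ℂ) 1,
      analyticOrderAt (deriv B) z ≠ ⊤) (hh : IsZeroFreeFactor B h) {z : ℂ}
    (hz : z ∈ ball (0 : ℂ) 1) : 1 ≤ ‖h z‖ := by
  have hexp (ε : ℝ) (hε : 0 < ε) : Real.exp (-ε) ≤ ‖h z‖ := by
    obtain ⟨M, hM⟩ := hB.exists_norm_pow_mul_exp_neg_le hp hp_ne_top hB_ne_top hh hε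
    have hnorm (x w : ℂ) : ‖x ^ M * ((Real.exp (-ε) : ℂ) / h w ^ (M + 1))‖ =
        ‖x‖ ^ M * Real.exp (-ε) / ‖h w‖ ^ (M + 1) := by
      rw [norm_mul, norm_div, norm_pow, norm_pow, Complex.norm_real,
        Real.norm_of_nonneg (Real.exp_pos _).le, mul_div_assoc]
    have hh_pos {w : ℂ} (hw : w ∈ ball (0 : ℂ) 1) : 0 < ‖h w‖ := norm_pos_iff.2 (hh.ne_zero w hw)
    have hle := hh.norm_pow_mul_le_one M (fun w ↦ (Real.exp (-ε) : ℂ) / h w ^ (M + 1))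
      (fun w hw ↦ analyticAt_const.fun_div ((hh.analyticOnNhd w hw).fun_pow _)
        (pow_ne_zero _ (hh.ne_zero w hw)))
      (fun w hw ↦ by
        rw [hnorm]
        exact div_le_one_of_le₀ (hM w hw) (pow_pos (hh_pos hw) _).le) z hz
    rw [hnorm, div_le_one (pow_pos (hh_pos hz) _), pow_succ] at hle
    exact le_of_mul_le_mul_left hle (pow_pos (hh_pos hz) M)
  have hlim : Tendsto (fun ε : ℝ ↦ Real.exp (-ε)) (𝓝[>] 0) (𝓝 1) := by
    have hcont : Continuous fun ε : ℝ ↦ Real.exp (-ε) := by fun_prop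
    simpa using (hcont.tendsto 0).mono_left nhdsWithin_le_nhds
  exact le_of_tendsto hlim (eventually_mem_of_tendsto_nhdsWithin tendsto_id |>.mono hexp)

lemma exists_eqOn_const_of_isZeroFreeFactor (hB_ne_top : ∀ z ∈ ball (0 : ℂ) 1,
      analyticOrderAt (deriv B) z ≠ ⊤) (hh : IsZeroFreeFactor B h) :
    ∃ η : ℂ, ‖η‖ = 1 ∧ ∀ z ∈ ball (0 : ℂ) 1, h z = η := by
  have hnorm (z : ℂ) (hz : z ∈ ball (0 : ℂ) 1) : ‖h z‖ = 1 :=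
    (hh.norm_le_one (fun w hw ↦ (hB.norm_lt_one hw).le) hz).antisymm
      (hB.one_le_norm_of_isZeroFreeFactor hp hp_ne_top hB_ne_top hh hz)
  have h0 := mem_ball_self (x := (0 : ℂ)) one_pos
  exact ⟨h 0, hnorm 0 h0, Complex.eqOn_of_isPreconnected_of_isMaxOn_norm
    (convex_ball (0 : ℂ) 1).isPreconnected isOpen_ball hh.analyticOnNhd.differentiableOn h0
    fun z hz ↦ ((hnorm z hz).trans (hnorm 0 h0).symm).le⟩

lemma norm_deriv_mul_le {f : ℂ → ℂ} (hf : AnalyticOnNhd ℂ f (ball 0 1))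
    (hf1 : ∀ z ∈ ball (0 : ℂ) 1, ‖f z‖ < 1)
    (hle : ∀ z ∈ ball (0 : ℂ) 1, analyticOrderAt p z ≤ analyticOrderAt (deriv f) z) {z : ℂ}
    (hz : z ∈ ball (0 : ℂ) 1) :
    ‖deriv f z‖ * (1 - ‖B z‖ ^ 2) ≤ ‖deriv B z‖ * (1 - ‖f z‖ ^ 2) := by
  obtain ⟨θ, hθ, hfθ⟩ := exists_deriv_eq_mul hf hp hp_ne_top hle
  have hpos (w : ℂ) (hw : w ∈ ball (0 : ℂ) 1) := one_sub_norm_sq_pos (hf1 w hw)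
  have hκ : IsSubsolutionDensity p (fun w ↦ ‖θ w‖ / (1 - ‖f w‖ ^ 2)) := by
    refine ⟨hθ.continuousOn.norm.div (continuousOn_const.sub (hf.continuousOn.norm.pow 2))
      fun w hw ↦ (hpos w hw).ne', fun w hw _ ↦ ⟨fun _ ↦ 1, θ, f, analyticAt_const, hθ w hw, hf w hw,
        eventually_of_mem (isOpen_ball.mem_nhds hw) hfθ, hf1 w hw, norm_one.le, ?_⟩⟩
    simp only [one_mul, eventually_true]
  calc ‖deriv f z‖ * (1 - ‖B z‖ ^ 2)
      = ‖θ z‖ / (1 - ‖f z‖ ^ 2) * ‖p z‖ * (1 - ‖B z‖ ^ 2) * (1 - ‖f z‖ ^ 2) := by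
        rw [hfθ z hz, norm_mul]
        field_simp [(hpos z hz).ne']
    _ ≤ ‖deriv B z‖ * (1 - ‖f z‖ ^ 2) :=
        mul_le_mul_of_nonneg_right (hB.density_le _ hκ z hz) (hpos z hz).le

end

end IsDominant

lemma norm_lt_of_exists_ne {f : ℂ → ℂ} {U : Set ℂ} (hUo : IsOpen U) (hU : IsPreconnected U)
    (hf : DifferentiableOn ℂ f U) {C : ℝ} (hC : ∀ z ∈ U, ‖f z‖ ≤ C)
    (hne : ∃ z ∈ U, ∃ w ∈ U, f z ≠ f w) {z : ℂ} (hz : z ∈ U) : ‖f z‖ < C := by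
  refine (hC z hz).lt_of_ne fun h ↦ ?_
  have hconst := Complex.eqOn_of_isPreconnected_of_isMaxOn_norm hU hUo hf hz
    fun w hw ↦ (hC w hw).trans_eq h.symm
  obtain ⟨x, hx, y, hy, hxy⟩ := hne
  exact hxy ((hconst hx).trans (hconst hy).symm)

lemma analyticOrderAt_deriv_ne_top_of_exists_ne {f : ℂ → ℂ} {U : Set ℂ} (hUo : IsOpen U)
    (hU : IsPreconnected U) (hf : AnalyticOnNhd ℂ f U) (hne : ∃ z ∈ U, ∃ w ∈ U, f z ≠ f w) {z : ℂ}
    (hz : z ∈ U) : analyticOrderAt (deriv f) z ≠ ⊤ := fun htop ↦ by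
  obtain ⟨x, hx, y, hy, hxy⟩ := hne
  exact hxy (hUo.is_const_of_deriv_eq_zero hU hf.differentiableOn
    (hf.deriv.eqOn_zero_of_preconnected_of_eventuallyEq_zero hU hz
      (analyticOrderAt_eq_top.1 htop)) hx hy)

lemma vOrder_eq_analyticOrderAt {f : ℂ → ℂ} {z : ℂ} (hf : AnalyticAt ℂ f z) :
    vOrder f z = analyticOrderAt f z := by
  refine le_antisymm ?_ (le_sInf ?_)
  · rcases eq_or_ne (analyticOrderAt f z) ⊤ with htop | htop
    · exact htop ▸ le_top
    · have horder := Nat.cast_analyticOrderNatAt htop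
      exact sInf_le ⟨analyticOrderNatAt f z,
        ((analyticOrderAt_eq_nat_iff_iteratedDeriv_eq_zero hf).1 horder.symm).2, horder⟩
  · rintro _ ⟨n, hn, rfl⟩
    by_contra! hlt
    exact hn ((natCast_le_analyticOrderAt_iff_iteratedDeriv_eq_zero hf).1
      (Order.add_one_le_of_lt hlt) n n.lt_succ_self)

namespace IsDominant

variable {B : ℂ → ℂ}

lemma isBlaschkeProduct {p : ℂ → ℂ} (hB : IsDominant p B) (hp : AnalyticOnNhd ℂ p (ball 0 1))
    (hp_ne_top : ∀ z ∈ ball (0 : ℂ) 1, analyticOrderAt p z ≠ ⊤)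
    (hB_ne_top : ∀ z ∈ ball (0 : ℂ) 1, analyticOrderAt (deriv B) z ≠ ⊤) :
    IsBlaschkeProduct B := by
  have hB_le (z : ℂ) (hz : z ∈ ball (0 : ℂ) 1) : ‖B z‖ ≤ 1 := (hB.norm_lt_one hz).le
  have hB_ne_top' (z : ℂ) (hz : z ∈ ball (0 : ℂ) 1) : analyticOrderAt B z ≠ ⊤ :=
    analyticOrderAt_ne_top_of_deriv (hB_ne_top z hz)
  obtain ⟨h, hh, hBh⟩ := exists_isZeroFreeFactor hB.analyticOnNhd hB_le hB_ne_top'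
  obtain ⟨η, hη, hhη⟩ := hB.exists_eqOn_const_of_isZeroFreeFactor hp hp_ne_top hB_ne_top hh
  refine ⟨fun z hz ↦ (hB.analyticOnNhd z hz).differentiableAt, η, analyticOrderNatAt B 0,
    PuncturedDiskZero B, PuncturedDiskZero.point, hη,
    PuncturedDiskZero.point_ne_zero_and_norm_lt_one,
    summable_one_sub_norm_point hB.analyticOnNhd hB_le hB_ne_top', fun z hz ↦ ?_⟩
  rw [hBh z hz, hhη z hz, mul_comm, mul_assoc]
  rfl

lemma analyticOrderAt_deriv_eq {g : ℂ → ℂ} (hB : IsDominant (deriv g) B)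
    (hg : AnalyticOnNhd ℂ g (ball 0 1)) (hg1 : ∀ z ∈ ball (0 : ℂ) 1, ‖g z‖ < 1)
    (hg_ne_top : ∀ z ∈ ball (0 : ℂ) 1, analyticOrderAt (deriv g) z ≠ ⊤) {z : ℂ}
    (hz : z ∈ ball (0 : ℂ) 1) :
    analyticOrderAt (deriv B) z = analyticOrderAt (deriv g) z := by
  obtain ⟨θ, hθ, hBθ⟩ := exists_deriv_eq_mul hB.analyticOnNhd hg.deriv hg_ne_top hB.order_le
  have hle : 1 - ‖B z‖ ^ 2 ≤ ‖θ z‖ := by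
    refine le_of_eventually_ne_zero_imp_le (hg.deriv z hz) (hg_ne_top z hz)
      (continuousAt_const.sub ((hB.analyticOnNhd z hz).continuousAt.norm.pow 2))
      (hθ z hz).continuousAt.norm ?_
    filter_upwards [isOpen_ball.mem_nhds hz] with w hw hgw
    refine le_of_mul_le_mul_left ?_ (norm_pos_iff.2 hgw)
    calc ‖deriv g w‖ * (1 - ‖B w‖ ^ 2) ≤ ‖deriv B w‖ * (1 - ‖g w‖ ^ 2) :=
          hB.norm_deriv_mul_le hg.deriv hg_ne_top hg hg1 (fun _ _ ↦ le_rfl) hw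
      _ ≤ ‖deriv B w‖ :=
          mul_le_of_le_one_right (norm_nonneg _) (sub_le_self _ (sq_nonneg _))
      _ = ‖deriv g w‖ * ‖θ w‖ := by rw [hBθ w hw, norm_mul, mul_comm]
  have hθz : θ z ≠ 0 :=
    norm_pos_iff.1 ((one_sub_norm_sq_pos (hB.norm_lt_one hz)).trans_le hle)
  have hBθz : deriv B =ᶠ[𝓝 z] θ * deriv g := eventually_of_mem (isOpen_ball.mem_nhds hz) hBθ
  rw [analyticOrderAt_congr hBθz, analyticOrderAt_mul (hθ z hz) (hg.deriv z hz),
    (hθ z hz).analyticOrderAt_eq_zero.2 hθz, zero_add]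

end IsDominant

/-- **Kraus' theorem: existence of maximal Blaschke products.** For every nonconstant
holomorphic map `g` of the open unit disk into the closed unit disk there is a
Blaschke product `B` whose derivative has in the disk exactly the same zeros as `g'`,
with the same multiplicities, and which dominates, in the sense of the Nehari–Schwarz
inequality, every nonconstant `f ∈ 𝓑` whose critical set contains that of `B`. -/
theorem kraus_existence_maximal (g : ℂ → ℂ)
    (hg_diff : ∀ z ∈ Metric.ball (0 : ℂ) 1, DifferentiableAt ℂ g z)
    (hg_le : ∀ z ∈ Metric.ball (0 : ℂ) 1, ‖g z‖ ≤ 1)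
    (hg_nc : ∃ z ∈ Metric.ball (0 : ℂ) 1, ∃ w ∈ Metric.ball (0 : ℂ) 1, g z ≠ g w) :
    ∃ B : ℂ → ℂ, IsBlaschkeProduct B ∧
      (∀ z ∈ Metric.ball (0 : ℂ) 1, vOrder (deriv B) z = vOrder (deriv g) z) ∧
      ∀ f : ℂ → ℂ,
        (∀ z ∈ Metric.ball (0 : ℂ) 1, DifferentiableAt ℂ f z) →
        (∀ z ∈ Metric.ball (0 : ℂ) 1, ‖f z‖ ≤ 1) →
        (∃ z ∈ Metric.ball (0 : ℂ) 1, ∃ w ∈ Metric.ball (0 : ℂ) 1, f z ≠ f w) →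
        (∀ z ∈ Metric.ball (0 : ℂ) 1, vOrder (deriv B) z ≤ vOrder (deriv f) z) →
        ∀ z ∈ Metric.ball (0 : ℂ) 1,
          ‖deriv f z‖ * (1 - ‖B z‖ ^ 2) ≤ ‖deriv B z‖ * (1 - ‖f z‖ ^ 2) := by
  have hball : IsPreconnected (ball (0 : ℂ) 1) := (convex_ball 0 1).isPreconnected
  have analytic {f : ℂ → ℂ} (hf : ∀ z ∈ ball (0 : ℂ) 1, DifferentiableAt ℂ f z) :
      AnalyticOnNhd ℂ f (ball 0 1) :=
    DifferentiableOn.analyticOnNhd (fun z hz ↦ (hf z hz).differentiableWithinAt) isOpen_ball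
  have hg := analytic hg_diff
  have hg_lt (z : ℂ) (hz : z ∈ ball 0 1) : ‖g z‖ < 1 :=
    norm_lt_of_exists_ne isOpen_ball hball hg.differentiableOn hg_le hg_nc hz
  have hg_ne_top (z : ℂ) (hz : z ∈ ball 0 1) : analyticOrderAt (deriv g) z ≠ ⊤ :=
    analyticOrderAt_deriv_ne_top_of_exists_ne isOpen_ball hball hg hg_nc hz
  obtain ⟨B, hB⟩ := exists_isDominant hg.deriv hg_ne_top
  have hB_order (z : ℂ) (hz : z ∈ ball 0 1) :
      analyticOrderAt (deriv B) z = analyticOrderAt (deriv g) z :=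
    hB.analyticOrderAt_deriv_eq hg hg_lt hg_ne_top hz
  have hB_vOrder (z : ℂ) (hz : z ∈ ball 0 1) : vOrder (deriv B) z = analyticOrderAt (deriv g) z :=
    (vOrder_eq_analyticOrderAt (hB.analyticOnNhd.deriv z hz)).trans (hB_order z hz)
  refine ⟨B, hB.isBlaschkeProduct hg.deriv hg_ne_top fun z hz ↦ hB_order z hz ▸ hg_ne_top z hz,
    fun z hz ↦ ?_, fun f hf hf_le hf_nc hBf z hz ↦ ?_⟩
  · rw [hB_vOrder z hz, vOrder_eq_analyticOrderAt (hg.deriv z hz)]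
  · refine hB.norm_deriv_mul_le hg.deriv hg_ne_top (analytic hf) (fun w hw ↦ norm_lt_of_exists_ne
      isOpen_ball hball (analytic hf).differentiableOn hf_le hf_nc hw) (fun w hw ↦ ?_) hz
    rw [← hB_vOrder w hw, ← vOrder_eq_analyticOrderAt ((analytic hf).deriv w hw)]
    exact hBf w hw
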